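/- arXiv:1012.2793 — 3 statements merged into one kernel-verified Lean document; each statement's English description precedes it below -/
import Mathlib

section
/- There exist real constants δ > 0 and c > 0 such that for every prime p and every subset A of SL₂(𝔽_p) that generates SL₂(𝔽_p) as a group, the triple product set A·A·A = {abc : a, b, c ∈ A} satisfies |A·A·A| ≥ c · min(|SL₂(𝔽_p)|, |A|^{1+δ}). -/
open scoped Pointwise

namespace Helf
open scoped MatrixGroups

section Basics
variable {F : Type*} [Field F]

/-- trace of an element of `SL₂`. -/
def tr (g : SL(2, F)) : F := g 0 0 + g 1 1

lemma det1 (g : SL(2, F)) : g 0 0 * g 1 1 - g 0 1 * g 1 0 = 1 := by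
  have := g.det_coe
  rwa [Matrix.det_fin_two] at this

lemma m00 (g h : SL(2, F)) : (g * h) 0 0 = g 0 0 * h 0 0 + g 0 1 * h 1 0 := by
  simp [Matrix.SpecialLinearGroup.coe_mul, Matrix.mul_apply, Fin.sum_univ_two]
lemma m01 (g h : SL(2, F)) : (g * h) 0 1 = g 0 0 * h 0 1 + g 0 1 * h 1 1 := by
  simp [Matrix.SpecialLinearGroup.coe_mul, Matrix.mul_apply, Fin.sum_univ_two]
lemma m10 (g h : SL(2, F)) : (g * h) 1 0 = g 1 0 * h 0 0 + g 1 1 * h 1 0 := by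
  simp [Matrix.SpecialLinearGroup.coe_mul, Matrix.mul_apply, Fin.sum_univ_two]
lemma m11 (g h : SL(2, F)) : (g * h) 1 1 = g 1 0 * h 0 1 + g 1 1 * h 1 1 := by
  simp [Matrix.SpecialLinearGroup.coe_mul, Matrix.mul_apply, Fin.sum_univ_two]
lemma i00 (g : SL(2, F)) : g⁻¹ 0 0 = g 1 1 := by
  simp [Matrix.SpecialLinearGroup.coe_inv, Matrix.adjugate_fin_two]
lemma i01 (g : SL(2, F)) : g⁻¹ 0 1 = - g 0 1 := by
  simp [Matrix.SpecialLinearGroup.coe_inv, Matrix.adjugate_fin_two]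
lemma i10 (g : SL(2, F)) : g⁻¹ 1 0 = - g 1 0 := by
  simp [Matrix.SpecialLinearGroup.coe_inv, Matrix.adjugate_fin_two]
lemma i11 (g : SL(2, F)) : g⁻¹ 1 1 = g 0 0 := by
  simp [Matrix.SpecialLinearGroup.coe_inv, Matrix.adjugate_fin_two]
lemma o00 : (1 : SL(2, F)) 0 0 = 1 := by simp
lemma o01 : (1 : SL(2, F)) 0 1 = 0 := by simp
lemma o10 : (1 : SL(2, F)) 1 0 = 0 := by simp
lemma o11 : (1 : SL(2, F)) 1 1 = 1 := by simp

lemma ext4 {g h : SL(2, F)} (h1 : g 0 0 = h 0 0) (h2 : g 0 1 = h 0 1) (h3 : g 1 0 = h 1 0)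
    (h4 : g 1 1 = h 1 1) : g = h := by
  ext i j
  fin_cases i <;> fin_cases j <;> simpa

lemma tr_conj (g h : SL(2, F)) : tr (g * h * g⁻¹) = tr h := by
  simp only [tr, m00, m01, m10, m11, i00, i01, i10, i11]
  linear_combination (h 0 0 + h 1 1) * det1 g

/-- minus the determinant of `ab - ba`. -/
def disc (a b : SL(2, F)) : F :=
  (a 0 1 * b 1 0 - b 0 1 * a 1 0) ^ 2 +
    (a 0 0 * b 0 1 + a 0 1 * b 1 1 - b 0 0 * a 0 1 - b 0 1 * a 1 1) *
    (a 1 0 * b 0 0 + a 1 1 * b 1 0 - b 1 0 * a 0 0 - b 1 1 * a 1 0)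

lemma fiber_aux {a b x y : SL(2, F)} (hab : disc a b ≠ 0) (hxy : y ≠ x)
    (h1 : tr y = tr x) (h2 : tr (a * y) = tr (a * x)) (h3 : tr (b * y) = tr (b * x)) :
    ∀ n1 n2 n3 : F, n1 = (a 0 1 * b 1 0 - b 0 1 * a 1 0) →
    n2 = (a 0 0 * b 0 1 + a 0 1 * b 1 1 - b 0 0 * a 0 1 - b 0 1 * a 1 1) →
    n3 = (a 1 0 * b 0 0 + a 1 1 * b 1 0 - b 1 0 * a 0 0 - b 1 1 * a 1 0) →
    (y 0 0 - x 0 0) * disc a b = n1 * ((x 1 1 - x 0 0) * n1 - x 0 1 * n3 - x 1 0 * n2) ∧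
    (y 0 1 - x 0 1) * disc a b = n2 * ((x 1 1 - x 0 0) * n1 - x 0 1 * n3 - x 1 0 * n2) ∧
    (y 1 0 - x 1 0) * disc a b = n3 * ((x 1 1 - x 0 0) * n1 - x 0 1 * n3 - x 1 0 * n2) := by
  intro n1 n2 n3 e1 e2 e3
  have hD : disc a b = n1 ^ 2 + n2 * n3 := by rw [e1, e2, e3]; rfl
  simp only [tr, m00, m11] at h1 h2 h3
  set D := disc a b with hDD
  obtain ⟨v1, hv1⟩ : ∃ v, v = y 0 0 - x 0 0 := ⟨_, rfl⟩
  obtain ⟨v2, hv2⟩ : ∃ v, v = y 0 1 - x 0 1 := ⟨_, rfl⟩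
  obtain ⟨v3, hv3⟩ : ∃ v, v = y 1 0 - x 1 0 := ⟨_, rfl⟩
  have hv4 : y 1 1 = x 1 1 - v1 := by rw [hv1]; linear_combination h1
  have y1 : y 0 0 = x 0 0 + v1 := by rw [hv1]; ring
  have y2 : y 0 1 = x 0 1 + v2 := by rw [hv2]; ring
  have y3 : y 1 0 = x 1 0 + v3 := by rw [hv3]; ring
  rw [y1, y2, y3, hv4] at h2 h3
  have ha : (a 0 0 - a 1 1) * v1 + a 1 0 * v2 + a 0 1 * v3 = 0 := by linear_combination h2
  have hb : (b 0 0 - b 1 1) * v1 + b 1 0 * v2 + b 0 1 * v3 = 0 := by linear_combination h3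
  have c1 : v1 * n2 = v2 * n1 := by
    rw [e1, e2]; linear_combination b 0 1 * ha - a 0 1 * hb
  have c2 : v1 * n3 = v3 * n1 := by
    rw [e1, e3]; linear_combination - b 1 0 * ha + a 1 0 * hb
  have c3 : v2 * n3 = v3 * n2 := by
    rw [e2, e3]
    linear_combination (b 0 0 - b 1 1) * ha - (a 0 0 - a 1 1) * hb
  obtain ⟨s, hs⟩ : ∃ s, s = v1 * n1 + v2 * n3 := ⟨_, rfl⟩
  have d1 : v1 * D = n1 * s := by rw [hD, hs]; linear_combination n3 * c1
  have d2 : v2 * D = n2 * s := by rw [hD, hs]; linear_combination - n1 * c1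
  have d3 : v3 * D = n3 * s := by rw [hD, hs]; linear_combination - n1 * c2 - n3 * c3
  have hx := det1 x
  have hy := det1 y
  rw [y1, y2, y3, hv4] at hy
  have q : (x 1 1 - x 0 0) * v1 - x 0 1 * v3 - x 1 0 * v2 - v1 ^ 2 - v2 * v3 = 0 := by
    linear_combination hy - hx
  have q2 : s * (((x 1 1 - x 0 0) * n1 - x 0 1 * n3 - x 1 0 * n2) - s) * D = 0 := by
    linear_combination D ^ 2 * q - D * (x 1 1 - x 0 0) * d1 + D * x 0 1 * d3 + D * x 1 0 * d2
      + (v1 * D + n1 * s) * d1 + v3 * D * d2 + n2 * s * d3 - s ^ 2 * hD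
  rw [← hv1, ← hv2, ← hv3]
  rcases mul_eq_zero.1 q2 with q2 | q2
  · rcases mul_eq_zero.1 q2 with q2 | q2
    · exfalso
      apply hxy
      rw [q2, mul_zero] at d1 d2 d3
      have z1 := (mul_eq_zero.1 d1).resolve_right hab
      have z2 := (mul_eq_zero.1 d2).resolve_right hab
      have z3 := (mul_eq_zero.1 d3).resolve_right hab
      apply ext4
      · rw [y1, z1, add_zero]
      · rw [y2, z2, add_zero]
      · rw [y3, z3, add_zero]
      · rw [hv4, z1, sub_zero]
    · rw [sub_eq_zero.1 q2]
      exact ⟨d1, d2, d3⟩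
  · exact absurd q2 hab

lemma fiber_two [DecidableEq F] (a b : SL(2, F)) (hab : disc a b ≠ 0) (X : Finset SL(2, F))
    (t u v : F) : (X.filter fun x => tr x = t ∧ tr (a * x) = u ∧ tr (b * x) = v).card ≤ 2 := by
  by_contra hc
  push Not at hc
  obtain ⟨x, hx, y, hy, z, hz, hxy, hxz, hyz⟩ := Finset.two_lt_card.1 hc
  simp only [Finset.mem_filter] at hx hy hz
  obtain ⟨a1, a2, a3⟩ := fiber_aux hab hxy.symm (hy.2.1.trans hx.2.1.symm)
    (hy.2.2.1.trans hx.2.2.1.symm) (hy.2.2.2.trans hx.2.2.2.symm) _ _ _ rfl rfl rfl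
  obtain ⟨b1, b2, b3⟩ := fiber_aux hab hxz.symm (hz.2.1.trans hx.2.1.symm)
    (hz.2.2.1.trans hx.2.2.1.symm) (hz.2.2.2.trans hx.2.2.2.symm) _ _ _ rfl rfl rfl
  have e1 := mul_right_cancel₀ hab (a1.trans b1.symm)
  have e2 := mul_right_cancel₀ hab (a2.trans b2.symm)
  have e3 := mul_right_cancel₀ hab (a3.trans b3.symm)
  apply hyz
  have ht : tr y = tr z := hy.2.1.trans hz.2.1.symm
  apply ext4
  · linear_combination e1
  · linear_combination e2
  · linear_combination e3
  · simp only [tr] at ht; linear_combination ht - e1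

lemma trace_fiber [DecidableEq F] (a b : SL(2, F)) (hab : disc a b ≠ 0) (X Y : Finset SL(2, F))
    (ha : ∀ x ∈ X, a * x ∈ Y) (hb : ∀ x ∈ X, b * x ∈ Y) (t : F) :
    (X.filter fun x => tr x = t).card ≤ 2 * (Y.image tr).card ^ 2 := by
  have := Finset.card_le_mul_card_image_of_maps_to (s := X.filter fun x => tr x = t)
    (t := (Y.image tr) ×ˢ (Y.image tr)) (f := fun x => (tr (a * x), tr (b * x)))
    (by
      intro x hx
      simp only [Finset.mem_filter] at hx
      exact Finset.mem_product.2 ⟨Finset.mem_image_of_mem _ (ha x hx.1),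
        Finset.mem_image_of_mem _ (hb x hx.1)⟩) 2
    (by
      rintro ⟨u, v⟩ _
      refine le_trans (Finset.card_le_card ?_) (fiber_two a b hab X t u v)
      intro x hx
      simp only [Finset.mem_filter, Prod.mk.injEq] at hx ⊢
      tauto)
  rw [Finset.card_product] at this
  rw [sq]; exact this

lemma trace_total [DecidableEq F] (a b : SL(2, F)) (hab : disc a b ≠ 0) (X Y : Finset SL(2, F))
    (h1 : X ⊆ Y)
    (ha : ∀ x ∈ X, a * x ∈ Y) (hb : ∀ x ∈ X, b * x ∈ Y) :
    X.card ≤ 2 * (Y.image tr).card ^ 3 := by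
  have := Finset.card_le_mul_card_image_of_maps_to (s := X)
    (t := (Y.image tr)) (f := tr)
    (fun x hx => Finset.mem_image_of_mem _ (h1 hx)) _
    (fun t _ => trace_fiber a b hab X Y ha hb t)
  calc _ ≤ _ := this
    _ = _ := by ring

end Basics

section Diag
variable {K : Type*} [Field K]

lemma roots4 [DecidableEq K] (s : Finset K) (A B C : K) (hA : A ≠ 0)
    (h : ∀ x ∈ s, A * x ^ 4 + B * x ^ 2 + C = 0) : s.card ≤ 4 := by
  open Polynomial in
  let P : K[X] := Polynomial.C A * X ^ 4 + Polynomial.C B * X ^ 2 + Polynomial.C C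
  have hd : P.natDegree = 4 := by
    simp only [P]; compute_degree!
  have h0 : P ≠ 0 := by
    intro h; rw [h] at hd; simp at hd
  rw [← hd]
  refine le_trans ?_ (Polynomial.card_roots' P)
  refine le_trans (Finset.card_le_card (t := P.roots.toFinset) ?_) (Multiset.toFinset_card_le _)
  intro x hx
  rw [Multiset.mem_toFinset, Polynomial.mem_roots h0]
  simp only [Polynomial.IsRoot, P]
  simpa using h x hx

lemma roots2 [DecidableEq K] (s : Finset K) (A B C : K) (hA : A ≠ 0)
    (h : ∀ x ∈ s, A * x ^ 2 + B * x + C = 0) : s.card ≤ 2 := by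
  open Polynomial in
  let P : K[X] := Polynomial.C A * X ^ 2 + Polynomial.C B * X + Polynomial.C C
  have hd : P.natDegree = 2 := by
    simp only [P]; compute_degree!
  have h0 : P ≠ 0 := by
    intro h; rw [h] at hd; simp at hd
  rw [← hd]
  refine le_trans ?_ (Polynomial.card_roots' P)
  refine le_trans (Finset.card_le_card (t := P.roots.toFinset) ?_) (Multiset.toFinset_card_le _)
  intro x hx
  rw [Multiset.mem_toFinset, Polynomial.mem_roots h0]
  simp only [Polynomial.IsRoot, P]
  simpa using h x hx

/-- diagonal elements -/
def IsDg (g : SL(2, K)) : Prop := g 0 1 = 0 ∧ g 1 0 = 0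

lemma IsDg.mul_eq {g : SL(2, K)} (h : IsDg g) : g 0 0 * g 1 1 = 1 := by
  have := det1 g
  rw [h.1] at this; linear_combination this

lemma IsDg.ne0 {g : SL(2, K)} (h : IsDg g) : g 0 0 ≠ 0 := left_ne_zero_of_mul_eq_one h.mul_eq
lemma IsDg.ne1 {g : SL(2, K)} (h : IsDg g) : g 1 1 ≠ 0 := right_ne_zero_of_mul_eq_one h.mul_eq

lemma IsDg.eq_of {g h : SL(2, K)} (hg : IsDg g) (hh : IsDg h) (e : g 0 0 = h 0 0) : g = h := by
  apply ext4 e (hg.1.trans hh.1.symm) (hg.2.trans hh.2.symm)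
  have := hg.mul_eq
  rw [e] at this
  exact mul_left_cancel₀ hh.ne0 (this.trans hh.mul_eq.symm)

lemma torus_fiber [DecidableEq K] (B : Finset SL(2, K)) (hB : ∀ x ∈ B, IsDg x) (a b g : SL(2, K))
    (h1 : a 0 0 ≠ 0) (h2 : a 1 0 ≠ 0) (h3 : b 0 0 ≠ 0) (h4 : b 0 1 ≠ 0) :
    ((B ×ˢ (B.filter fun y => (a * y * b) 0 0 ≠ 0 ∧ (a * y * b) 0 1 ≠ 0) ×ˢ B).filter
      fun w => w.1 * (a * w.2.1 * b) * w.2.2 = g).card ≤ 8 := by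
  set s := ((B ×ˢ (B.filter fun y => (a * y * b) 0 0 ≠ 0 ∧ (a * y * b) 0 1 ≠ 0) ×ˢ B).filter
      fun w => w.1 * (a * w.2.1 * b) * w.2.2 = g) with hs
  have key : ∀ w ∈ s, IsDg w.1 ∧ IsDg w.2.1 ∧ IsDg w.2.2 ∧ (a * w.2.1 * b) 0 0 ≠ 0 ∧
      (a * w.2.1 * b) 0 1 ≠ 0 ∧ w.1 0 0 * (a * w.2.1 * b) 0 0 * w.2.2 0 0 = g 0 0 ∧
      w.1 0 0 * (a * w.2.1 * b) 0 1 * w.2.2 1 1 = g 0 1 ∧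
      w.1 1 1 * (a * w.2.1 * b) 1 1 * w.2.2 1 1 = g 1 1 := by
    rintro ⟨x, y, z⟩ hw
    simp only [hs, Finset.mem_filter, Finset.mem_product] at hw
    obtain ⟨⟨hx, ⟨hy, hy1, hy2⟩, hz⟩, hg⟩ := hw
    have dx := hB x hx
    have dz := hB z hz
    refine ⟨dx, hB y hy, dz, hy1, hy2, ?_, ?_, ?_⟩
    · simp only
      rw [← hg, m00 (x * (a * y * b)), m00 x, m01 x, dx.1, dz.2]; ring
    · simp only
      rw [← hg, m01 (x * (a * y * b)), m00 x, m01 x, dx.1, dz.1]; ring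
    · simp only
      rw [← hg, m11 (x * (a * y * b)), m11 x, m10 x, dx.2, dz.1]; ring
  have step := Finset.card_le_mul_card_image (s := s) (f := fun w => w.2.1 0 0) 2 (by
    intro η _
    set s' := s.filter fun w => w.2.1 0 0 = η with hs'
    rcases s'.eq_empty_or_nonempty with he | ⟨w0, hw0⟩
    · rw [he]; simp
    have m0 := Finset.mem_filter.1 hw0
    obtain ⟨k1, k2, k3, k4, k5, k6, k7, k8⟩ := key _ m0.1
    have same : ∀ w ∈ s', w.2.1 = w0.2.1 := by
      intro w hw
      have m := Finset.mem_filter.1 hw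
      exact (key _ m.1).2.1.eq_of k2 (m.2.trans m0.2.symm)
    have hinj : Set.InjOn (fun w : SL(2, K) × SL(2, K) × SL(2, K) => w.1 0 0) s' := by
      intro w hw w' hw' h
      have e1 := same w hw
      have e2 := same w' hw'
      have m := Finset.mem_filter.1 hw
      have m' := Finset.mem_filter.1 hw'
      obtain ⟨l1, l2, l3, l4, l5, l6, l7, l8⟩ := key _ m.1
      obtain ⟨n1, n2, n3, n4, n5, n6, n7, n8⟩ := key _ m'.1
      have f1 : w.1 = w'.1 := l1.eq_of n1 h
      have f3 : w.2.2 = w'.2.2 := by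
        apply l3.eq_of n3
        have := l6.trans n6.symm
        rw [f1, e1, e2] at this
        exact mul_left_cancel₀ (mul_ne_zero n1.ne0 k4) this
      exact Prod.ext f1 (Prod.ext (e1.trans e2.symm) f3)
    rw [← Finset.card_image_of_injOn hinj]
    apply roots2 _ ((a * w0.2.1 * b) 0 0 * (a * w0.2.1 * b) 0 1) 0 (- (g 0 0 * g 0 1))
      (mul_ne_zero k4 k5)
    intro ξ hξ
    obtain ⟨w, hw, rfl⟩ := Finset.mem_image.1 hξ
    have m := Finset.mem_filter.1 hw
    obtain ⟨l1, l2, l3, l4, l5, l6, l7, l8⟩ := key _ m.1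
    rw [same w hw] at l6 l7
    have := l3.mul_eq
    rw [← l6, ← l7]
    linear_combination (-(w.1 0 0) ^ 2 * (a * w0.2.1 * b) 0 0 * (a * w0.2.1 * b) 0 1) * this)
  have c4 : (s.image (fun w => w.2.1 0 0)).card ≤ 4 := by
    apply roots4 _ (a 0 0 * a 1 0 * b 0 0 * b 0 1)
      (a 0 0 * b 0 0 * a 1 1 * b 1 1 + a 0 1 * a 1 0 * b 0 1 * b 1 0 - g 0 0 * g 1 1)
      (a 0 1 * a 1 1 * b 1 0 * b 1 1) (by simp [h1, h2, h3, h4])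
    intro ξ hξ
    obtain ⟨w, hw, rfl⟩ := Finset.mem_image.1 hξ
    obtain ⟨l1, l2, l3, l4, l5, l6, l7, l8⟩ := key _ hw
    have e1 := l1.mul_eq
    have e2 := l2.mul_eq
    have e3 := l3.mul_eq
    have e4 : g 0 0 * g 1 1 = (a * w.2.1 * b) 0 0 * (a * w.2.1 * b) 1 1 := by
      rw [← l6, ← l8]
      linear_combination ((a * w.2.1 * b) 0 0 * (a * w.2.1 * b) 1 1) *
        (w.2.2 0 0 * w.2.2 1 1 * e1 + e3)
    rw [e4]
    simp only [m00, m01, m10, m11, l2.1, l2.2]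
    generalize w.2.1 0 0 = y at *
    generalize w.2.1 1 1 = y' at *
    have e5 : y' = y⁻¹ := eq_inv_of_mul_eq_one_right e2
    have hy : y ≠ 0 := left_ne_zero_of_mul_eq_one e2
    subst e5
    field_simp
    ring
  calc s.card ≤ _ := step
    _ ≤ 2 * 4 := by gcongr
    _ = 8 := by norm_num

lemma torus_bound [DecidableEq K] (B Y : Finset SL(2, K)) (hB : ∀ x ∈ B, IsDg x) (a b : SL(2, K))
    (h1 : a 0 0 ≠ 0) (h2 : a 1 0 ≠ 0) (h3 : b 0 0 ≠ 0) (h4 : b 0 1 ≠ 0)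
    (hY : ∀ x ∈ B, ∀ y ∈ B, ∀ z ∈ B, x * (a * y * b) * z ∈ Y) :
    B.card * ((B.card - 4) * B.card) ≤ 8 * Y.card := by
  have main := Finset.card_le_mul_card_image_of_maps_to
    (s := (B ×ˢ (B.filter fun y => (a * y * b) 0 0 ≠ 0 ∧ (a * y * b) 0 1 ≠ 0) ×ˢ B)) (t := Y)
    (f := fun w => w.1 * (a * w.2.1 * b) * w.2.2) (by
      rintro ⟨x, y, z⟩ hw
      simp only [Finset.mem_filter, Finset.mem_product] at hw
      exact hY x hw.1 y hw.2.1.1 z hw.2.2) 8 (by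
      intro g _
      have := torus_fiber B hB a b g h1 h2 h3 h4
      convert this)
  rw [Finset.card_product, Finset.card_product] at main
  refine le_trans ?_ main
  gcongr
  have hinj : Set.InjOn (fun y : SL(2, K) => y 0 0) B :=
    fun x hx y hy h => (hB x hx).eq_of (hB y hy) h
  have b1 : (B.filter fun y => (a * y * b) 0 0 = 0).card ≤ 2 := by
    rw [← Finset.card_image_of_injOn (hinj.mono (Finset.coe_subset.2 (Finset.filter_subset _ _)))]
    apply roots2 _ (a 0 0 * b 0 0) 0 (a 0 1 * b 1 0) (mul_ne_zero h1 h3)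
    intro ξ hξ
    obtain ⟨w, hw, rfl⟩ := Finset.mem_image.1 hξ
    obtain ⟨hw, h⟩ := Finset.mem_filter.1 hw
    have d := hB w hw
    simp only [m00, m01, d.1, d.2] at h
    linear_combination w 0 0 * h - a 0 1 * b 1 0 * d.mul_eq
  have b2 : (B.filter fun y => (a * y * b) 0 1 = 0).card ≤ 2 := by
    rw [← Finset.card_image_of_injOn (hinj.mono (Finset.coe_subset.2 (Finset.filter_subset _ _)))]
    apply roots2 _ (a 0 0 * b 0 1) 0 (a 0 1 * b 1 1) (mul_ne_zero h1 h4)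
    intro ξ hξ
    obtain ⟨w, hw, rfl⟩ := Finset.mem_image.1 hξ
    obtain ⟨hw, h⟩ := Finset.mem_filter.1 hw
    have d := hB w hw
    simp only [m00, m01, d.1, d.2] at h
    linear_combination w 0 0 * h - a 0 1 * b 1 1 * d.mul_eq
  have hsub : B ⊆ (B.filter fun y => (a * y * b) 0 0 ≠ 0 ∧ (a * y * b) 0 1 ≠ 0) ∪
      ((B.filter fun y => (a * y * b) 0 0 = 0) ∪ (B.filter fun y => (a * y * b) 0 1 = 0)) := by
    intro y hy
    simp only [Finset.mem_union, Finset.mem_filter]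
    tauto
  have := (Finset.card_le_card hsub).trans (Finset.card_union_le _ _)
  have := Finset.card_union_le (B.filter fun y => (a * y * b) 0 0 = 0)
    (B.filter fun y => (a * y * b) 0 1 = 0)
  omega

end Diag
end Helf

namespace Helf
open scoped MatrixGroups
set_option linter.unusedSimpArgs false

section Esc
variable {F : Type*} [Field F] {K : Type*} [Field K] [Algebra F K]

lemma disc_eq (a b : SL(2, F)) : disc a b = tr (a * b * a⁻¹ * b⁻¹) - 2 := by
  simp only [tr, disc, m00, m01, m10, m11, i00, i01, i10, i11]
  linear_combination (-2 * (b 0 0 * b 1 1 - b 0 1 * b 1 0)) * det1 a - 2 * det1 b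

/-- conjugation by `P` over the bigger field -/
noncomputable def phi (P : SL(2, K)) : SL(2, F) →* SL(2, K) :=
  (MulAut.conj P⁻¹).toMonoidHom.comp (Matrix.SpecialLinearGroup.map (algebraMap F K))

/-- base change -/
noncomputable abbrev bc : SL(2, F) →* SL(2, K) := Matrix.SpecialLinearGroup.map (algebraMap F K)

lemma phi_apply (P : SL(2, K)) (g : SL(2, F)) : phi P g = P⁻¹ * bc g * P := by
  simp [phi, bc]

lemma bc_apply (g : SL(2, F)) (i j : Fin 2) : (bc g : SL(2, K)) i j = algebraMap F K (g i j) := by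
  simp [bc]

lemma bc_inj : Function.Injective (bc : SL(2, F) → SL(2, K)) := by
  intro g h e
  have : ∀ i j, g i j = h i j := by
    intro i j
    apply (algebraMap F K).injective
    rw [← bc_apply, ← bc_apply, e]
  exact Matrix.SpecialLinearGroup.ext _ _ this

lemma phi_inj (P : SL(2, K)) : Function.Injective (phi P : SL(2, F) → SL(2, K)) := by
  intro g h e
  rw [phi_apply, phi_apply] at e
  exact bc_inj (mul_left_cancel (mul_right_cancel e))

lemma tr_phi (P : SL(2, K)) (g : SL(2, F)) : tr (phi P g) = algebraMap F K (tr g) := by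
  have := tr_conj P⁻¹ (bc g)
  rw [inv_inv] at this
  rw [phi_apply, this]
  simp only [tr, bc_apply, map_add]

lemma disc_phi (P : SL(2, K)) (a b : SL(2, F)) :
    disc (phi P a) (phi P b) = algebraMap F K (disc a b) := by
  rw [disc_eq, disc_eq, ← map_inv, ← map_inv, ← map_mul, ← map_mul, ← map_mul, tr_phi, map_sub, map_ofNat]

/-- upper unipotent -/
def uu (x : F) : SL(2, F) := ⟨!![1, x; 0, 1], by simp [Matrix.det_fin_two_of]⟩
/-- lower unipotent -/
def ll (x : F) : SL(2, F) := ⟨!![1, 0; x, 1], by simp [Matrix.det_fin_two_of]⟩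

lemma uu_add (x y : F) : uu x * uu y = uu (x + y) := by
  apply ext4 <;> simp [m00, m01, m10, m11] <;> simp [uu, add_comm]

lemma ll_add (x y : F) : ll x * ll y = ll (x + y) := by
  apply ext4 <;> simp [m00, m01, m10, m11] <;> simp [ll]

lemma disc_ul : disc (uu (1 : F)) (ll 1) = 1 := by
  simp [disc, uu, ll]

lemma esc1 (P : SL(2, K)) (S : Set SL(2, F)) (hS : Subgroup.closure S = ⊤) :
    ∃ g ∈ S, phi P g 1 0 ≠ 0 := by
  by_contra hc
  push Not at hc
  have all : ∀ g : SL(2, F), phi P g 1 0 = 0 := by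
    intro g
    have hg : g ∈ Subgroup.closure S := by rw [hS]; trivial
    induction hg using Subgroup.closure_induction with
    | mem x hx => exact hc x hx
    | one => rw [map_one, o10]
    | mul x y _ _ hx hy => rw [map_mul, m10, hx, hy]; ring
    | inv x _ hx => rw [map_inv, i10, hx, neg_zero]
  have h1 := disc_phi P (uu (1 : F)) (ll 1)
  rw [disc_ul] at h1
  simp [disc, all] at h1

lemma esc2 (P : SL(2, K)) (S : Set SL(2, F)) (hS : Subgroup.closure S = ⊤) (h1 : (1 : SL(2, F)) ∈ S)
    (h2 : (2 : F) ≠ 0) :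
    ∃ g ∈ S * S, phi P g 0 0 ≠ 0 ∧ phi P g 1 0 ≠ 0 := by
  by_contra hc
  push Not at hc
  obtain ⟨s0, hs0, hs⟩ := esc1 P S hS
  have hs00 : phi P s0 0 0 = 0 := by
    by_contra h
    exact hs (hc s0 ⟨s0, hs0, 1, h1, by simp⟩ h)
  have mon : ∀ s ∈ S, IsDg (phi P s) ∨ (phi P s 0 0 = 0 ∧ phi P s 1 1 = 0) := by
    intro s hsS
    have a1 := hc s ⟨s, hsS, 1, h1, by simp⟩
    have a2 := hc (s * s0) ⟨s, hsS, s0, hs0, rfl⟩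
    rw [map_mul, m00, m10, hs00] at a2
    simp only [mul_zero, zero_add, mul_eq_zero, not_or, hs, or_false, not_false_eq_true,
      and_true, ne_eq] at a2
    have d := det1 (phi P s)
    by_cases h00 : phi P s 0 0 = 0
    · right
      refine ⟨h00, a2 ?_⟩
      intro h01
      rw [h00, h01] at d; simp at d
    · left
      have h10 := a1 h00
      refine ⟨?_, h10⟩
      by_contra h01
      rw [h10, a2 h01] at d; simp at d
  have all : ∀ g : SL(2, F), IsDg (phi P g) ∨ (phi P g 0 0 = 0 ∧ phi P g 1 1 = 0) := by
    intro g
    have hg : g ∈ Subgroup.closure S := by rw [hS]; trivial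
    induction hg using Subgroup.closure_induction with
    | mem x hx => exact mon x hx
    | one => left; rw [map_one]; exact ⟨o01, o10⟩
    | mul x y _ _ hx hy =>
      rw [map_mul]
      simp only [IsDg, m00, m01, m10, m11] at *
      rcases hx with ⟨a, b⟩ | ⟨a, b⟩ <;> rcases hy with ⟨c, d⟩ | ⟨c, d⟩ <;> simp [a, b, c, d]
    | inv x _ hx =>
      rw [map_inv]
      rcases hx with ⟨a, b⟩ | ⟨a, b⟩
      · left; exact ⟨by rw [i01, a, neg_zero], by rw [i10, b, neg_zero]⟩
      · right; exact ⟨by rw [i00, b], by rw [i11, a]⟩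
  have sq : ∀ g : SL(2, F), IsDg (phi P (g * g)) := by
    intro g
    rw [map_mul]
    simp only [IsDg, m01, m10]
    rcases all g with ⟨a, b⟩ | ⟨a, b⟩ <;> simp [a, b]
  have hu := sq (uu (1 / 2))
  have hl := sq (ll (1 / 2))
  rw [uu_add] at hu
  rw [ll_add] at hl
  have e : (1 / 2 + 1 / 2 : F) = 1 := by field_simp; norm_num
  rw [e] at hu hl
  have h1 := disc_phi P (uu (1 : F)) (ll 1)
  rw [disc_ul] at h1
  simp [disc, hu.1, hu.2, hl.1, hl.2] at h1

/-- the Weyl element -/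
def ww : SL(2, K) := ⟨!![0, -1; 1, 0], by simp [Matrix.det_fin_two_of]⟩

lemma phi_ww (P : SL(2, K)) (g : SL(2, F)) : phi (P * ww) g 0 0 = phi P g 1 1 ∧
    phi (P * ww) g 1 0 = - phi P g 0 1 := by
  have : phi (P * ww) g = ww⁻¹ * phi P g * ww := by
    rw [phi_apply, phi_apply]; group
  rw [this]
  constructor
  · simp only [m00, m01, m10, m11, i00, i01, i10, i11]
    simp [ww]
  · simp only [m00, m01, m10, m11, i00, i01, i10, i11]
    simp [ww]

lemma esc1' (P : SL(2, K)) (S : Set SL(2, F)) (hS : Subgroup.closure S = ⊤) :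
    ∃ g ∈ S, phi P g 0 1 ≠ 0 := by
  obtain ⟨g, hg, h⟩ := esc1 (P * ww) S hS
  refine ⟨g, hg, ?_⟩
  rw [(phi_ww P g).2] at h
  simpa using h

lemma esc2' (P : SL(2, K)) (S : Set SL(2, F)) (hS : Subgroup.closure S = ⊤) (h1 : (1 : SL(2, F)) ∈ S)
    (hsymm : ∀ g ∈ S, g⁻¹ ∈ S) (h2 : (2 : F) ≠ 0) :
    ∃ g ∈ S * S, phi P g 0 0 ≠ 0 ∧ phi P g 0 1 ≠ 0 := by
  obtain ⟨g, ⟨x, hx, y, hy, rfl⟩, h3, h4⟩ := esc2 (P * ww) S hS h1 h2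
  refine ⟨(x * y)⁻¹, ⟨y⁻¹, hsymm y hy, x⁻¹, hsymm x hx, by simp⟩, ?_, ?_⟩
  · rw [map_inv, i00, ← (phi_ww P _).1]; exact h3
  · rw [map_inv, i01, ← (phi_ww P _).2]; exact h4

/-- explicit matrices -/
def mk4 (a b c d : K) (h : a * d - b * c = 1) : SL(2, K) :=
  ⟨!![a, b; c, d], by rwa [Matrix.det_fin_two_of]⟩

lemma k00 (a b c d : K) (h : a * d - b * c = 1) : mk4 a b c d h 0 0 = a := by simp [mk4]
lemma k01 (a b c d : K) (h : a * d - b * c = 1) : mk4 a b c d h 0 1 = b := by simp [mk4]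
lemma k10 (a b c d : K) (h : a * d - b * c = 1) : mk4 a b c d h 1 0 = c := by simp [mk4]
lemma k11 (a b c d : K) (h : a * d - b * c = 1) : mk4 a b c d h 1 1 = d := by simp [mk4]

lemma triangularize [IsAlgClosed K] (h : SL(2, K)) : ∃ P : SL(2, K), (P⁻¹ * h * P) 1 0 = 0 := by
  by_cases hc : h 1 0 = 0
  · exact ⟨1, by simpa using hc⟩
  obtain ⟨l, hl⟩ : ∃ l : K, l ^ 2 - tr h * l + 1 = 0 := by
    open Polynomial in
    obtain ⟨l, hl⟩ := IsAlgClosed.exists_root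
      (Polynomial.C 1 * X ^ 2 + Polynomial.C (- tr h) * X + Polynomial.C 1 : K[X])
      (by rw [Polynomial.degree_quadratic one_ne_zero]; norm_num)
    refine ⟨l, ?_⟩
    simp [Polynomial.IsRoot] at hl
    linear_combination hl
  refine ⟨mk4 (l - h 1 1) (-(h 1 0)⁻¹) (h 1 0) 0 (by field_simp; ring), ?_⟩
  simp only [m00, m01, m10, m11, i00, i01, i10, i11, k00, k01, k10, k11]
  simp only [tr] at hl
  have := det1 h
  linear_combination h 1 0 * hl + h 1 0 * this

lemma triangularize' [IsAlgClosed K] (h : SL(2, F)) : ∃ P : SL(2, K), phi P h 1 0 = 0 := by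
  obtain ⟨P, hP⟩ := triangularize (bc h : SL(2, K))
  exact ⟨P, by rw [phi_apply]; exact hP⟩

lemma diagonalize (P : SL(2, K)) (h : SL(2, F)) (h1 : phi P h 1 0 = 0)
    (h2 : phi P h 0 0 ≠ phi P h 1 1) : ∃ Q : SL(2, K), IsDg (phi Q h) ∧
    phi Q h 0 0 = phi P h 0 0 ∧ phi Q h 1 1 = phi P h 1 1 := by
  set l := phi P h 0 0
  set m := phi P h 1 1
  have hlm : m - l ≠ 0 := sub_ne_zero.2 h2.symm
  refine ⟨P * uu (phi P h 0 1 / (m - l)), ?_⟩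
  have : phi (P * uu (phi P h 0 1 / (m - l))) h =
      (uu (phi P h 0 1 / (m - l)))⁻¹ * phi P h * uu (phi P h 0 1 / (m - l)) := by
    rw [phi_apply (P * _), phi_apply P h]; group
  simp only [IsDg]
  rw [this]
  simp only [m00, m01, m10, m11, i00, i01, i10, i11, h1]
  simp [uu]
  change l * (phi P h 0 1 / (m - l)) + (phi P h 0 1 + -(phi P h 0 1 / (m - l) * m)) = 0 ∧ l = l ∧ m = m
  refine ⟨?_, rfl, rfl⟩
  field_simp
  ring

/-- regular (semisimple) elements -/
def Reg (h : SL(2, F)) : Prop := tr h ≠ 2 ∧ tr h ≠ -2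

lemma Reg.ne {P : SL(2, K)} {h : SL(2, F)} (hr : Reg h) (h1 : phi P h 1 0 = 0) :
    phi P h 0 0 ≠ phi P h 1 1 := by
  intro e
  have d := det1 (phi P h)
  have t := tr_phi P h
  rw [h1, mul_zero, sub_zero, ← e] at d
  simp only [tr, ← e] at t
  have : (phi P h 0 0 - 1) * (phi P h 0 0 + 1) = 0 := by linear_combination d
  rcases mul_eq_zero.1 this with h | h
  · apply hr.1
    apply (algebraMap F K).injective
    simp only [tr, map_ofNat]
    rw [← t]; linear_combination 2 * h
  · apply hr.2
    apply (algebraMap F K).injective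
    simp only [tr, map_ofNat, map_neg]
    rw [← t]; linear_combination 2 * h

lemma Reg.exists_diag [IsAlgClosed K] {h : SL(2, F)} (hr : Reg h) :
    ∃ P : SL(2, K), IsDg (phi P h) := by
  obtain ⟨P, hP⟩ := triangularize' (K := K) h
  obtain ⟨Q, hQ, _⟩ := diagonalize P h hP (hr.ne hP)
  exact ⟨Q, hQ⟩

lemma Reg.comm_iff {P : SL(2, K)} {h : SL(2, F)} (hr : Reg h) (hd : IsDg (phi P h)) (y : SL(2, F)) :
    y * h = h * y ↔ IsDg (phi P y) := by
  have hne := hr.ne hd.2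
  constructor
  · intro e
    have e' : phi P y * phi P h = phi P h * phi P y := by rw [← map_mul, e, map_mul]
    have e1 : (phi P y * phi P h) 0 1 = (phi P h * phi P y) 0 1 := by rw [e']
    have e2 : (phi P y * phi P h) 1 0 = (phi P h * phi P y) 1 0 := by rw [e']
    rw [m01, m01, hd.1] at e1
    rw [m10, m10, hd.2] at e2
    have hs := sub_ne_zero.2 hne
    constructor
    · refine (mul_eq_zero.1 (?_ : phi P y 0 1 * (phi P h 0 0 - phi P h 1 1) = 0)).resolve_right hs
      linear_combination -e1
    · refine (mul_eq_zero.1 (?_ : phi P y 1 0 * (phi P h 0 0 - phi P h 1 1) = 0)).resolve_right hs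
      linear_combination e2
  · intro hy
    apply phi_inj P
    rw [map_mul, map_mul]
    apply ext4 <;> simp only [m00, m01, m10, m11, hy.1, hy.2, hd.1, hd.2] <;> ring

lemma esc3 [IsAlgClosed K] (S : Set SL(2, F)) (hS : Subgroup.closure S = ⊤) (h1 : (1 : SL(2, F)) ∈ S) :
    ∃ a ∈ S, ∃ b ∈ S * S, disc a b ≠ 0 := by
  have lift : ∀ (P : SL(2, K)) (a b : SL(2, F)), disc (phi P a) (phi P b) ≠ 0 → disc a b ≠ 0 := by
    intro P a b h e
    rw [disc_phi, e, map_zero] at h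
    exact h rfl
  obtain ⟨a, ha, ha10⟩ := esc1 (1 : SL(2, K)) S hS
  refine ⟨a, ha, ?_⟩
  obtain ⟨P, hP⟩ := triangularize' (K := K) a
  by_cases hlm : phi P a 0 0 = phi P a 1 1
  · have hb : phi P a 0 1 ≠ 0 := by
      intro hb
      apply ha10
      have : phi 1 a = P * phi P a * P⁻¹ := by
        rw [phi_apply, phi_apply]; group
      rw [this]
      simp only [m00, m01, m10, m11, i00, i01, i10, i11, hb, hP, hlm]
      ring
    obtain ⟨b, hbS, hb'⟩ := esc1 P S hS
    refine ⟨b, ⟨b, hbS, 1, h1, by simp⟩, lift P a b ?_⟩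
    have : disc (phi P a) (phi P b) = (phi P a 0 1 * phi P b 1 0) ^ 2 := by
      simp only [disc, hP, hlm]; ring
    rw [this]
    exact pow_ne_zero _ (mul_ne_zero hb hb')
  · obtain ⟨Q, hQ, e1, e2⟩ := diagonalize P a hP hlm
    have hlm' : phi Q a 0 0 - phi Q a 1 1 ≠ 0 := by rw [e1, e2]; exact sub_ne_zero.2 hlm
    have key : ∃ b ∈ S * S, phi Q b 0 1 ≠ 0 ∧ phi Q b 1 0 ≠ 0 := by
      obtain ⟨s, hs, s1⟩ := esc1 Q S hS
      obtain ⟨t, ht, t1⟩ := esc1' Q S hS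
      by_cases s2 : phi Q s 0 1 = 0
      · by_cases t2 : phi Q t 1 0 = 0
        · refine ⟨s * t, ⟨s, hs, t, ht, rfl⟩, ?_, ?_⟩
          · have d := det1 (phi Q s)
            rw [map_mul, m01, s2, zero_mul, add_zero]
            refine mul_ne_zero ?_ t1
            intro h; rw [h, s2] at d; simp at d
          · have d := det1 (phi Q t)
            rw [map_mul, m10, t2, mul_zero, add_zero]
            refine mul_ne_zero s1 ?_
            intro h; rw [h, t2] at d; simp at d
        · exact ⟨t, ⟨t, ht, 1, h1, by simp⟩, t1, t2⟩
      · exact ⟨s, ⟨s, hs, 1, h1, by simp⟩, s2, s1⟩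
    obtain ⟨b, hb, b1, b2⟩ := key
    refine ⟨b, hb, lift Q a b ?_⟩
    have : disc (phi Q a) (phi Q b) =
        - ((phi Q a 0 0 - phi Q a 1 1) ^ 2 * (phi Q b 0 1 * phi Q b 1 0)) := by
      simp only [disc, hQ.1, hQ.2]; ring
    rw [this]
    exact neg_ne_zero.2 (mul_ne_zero (pow_ne_zero _ hlm') (mul_ne_zero b1 b2))

end Esc
end Helf

namespace Helf
open scoped MatrixGroups
set_option linter.unusedSimpArgs false
set_option linter.unusedDecidableInType false
set_option linter.unusedFintypeInType false

lemma num_cent (c n : ℕ) (hpos : 1 ≤ n) (main : c * ((c - 4) * c) ≤ 8 * n) : c ^ 3 ≤ 512 * n := by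
  rcases lt_or_ge c 8 with hc | hc
  · have : c ^ 3 ≤ 8 ^ 3 := Nat.pow_le_pow_left hc.le 3
    omega
  · have : c ≤ 2 * (c - 4) := by omega
    calc c ^ 3 = c * (c * c) := by ring
      _ ≤ c * (2 * (c - 4) * c) := by gcongr
      _ = 2 * (c * ((c - 4) * c)) := by ring
      _ ≤ 2 * (8 * n) := by gcongr
      _ ≤ 512 * n := by omega

lemma num_up (τ s B V m : ℕ) (L : ℝ) (hL : 1 ≤ L) (hτ : 4 ≤ τ) (hs : 0 < s)
    (hp : (τ - 2) * V ≤ m) (ho : s ≤ B * V) (hc : B ^ 3 ≤ 512 * m)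
    (hm : (m : ℝ) ≤ L ^ 10 * s) : (τ : ℝ) ^ 3 ≤ 4096 * L ^ 40 * s := by
  have e1 : τ * s ≤ 2 * (B * m) := by
    calc τ * s ≤ (2 * (τ - 2)) * (B * V) := by gcongr; omega
      _ = 2 * (B * ((τ - 2) * V)) := by ring
      _ ≤ _ := by gcongr
  have e2 : (τ * s) ^ 3 ≤ 4096 * m ^ 4 := by
    calc (τ * s) ^ 3 ≤ (2 * (B * m)) ^ 3 := by gcongr
      _ = 8 * B ^ 3 * m ^ 3 := by ring
      _ ≤ 8 * (512 * m) * m ^ 3 := by gcongr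
      _ = _ := by ring
  have e3 : ((τ : ℝ) * s) ^ 3 ≤ 4096 * (m : ℝ) ^ 4 := by exact_mod_cast e2
  have e4 : ((τ : ℝ) * s) ^ 3 ≤ 4096 * (L ^ 10 * s) ^ 4 := e3.trans (by gcongr)
  have e5 : (τ : ℝ) ^ 3 * (s : ℝ) ^ 3 ≤ (4096 * L ^ 40 * s) * (s : ℝ) ^ 3 := by
    calc _ = ((τ : ℝ) * s) ^ 3 := by ring
      _ ≤ _ := e4
      _ = _ := by ring
  exact le_of_mul_le_mul_right e5 (by positivity)

lemma num_low (τ s B V : ℕ) (L : ℝ) (hL : 1 ≤ L) (hs : 0 < s)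
    (ho : s ≤ B * V) (hf : V ≤ 2 * τ ^ 2) (hup : (τ : ℝ) ^ 3 ≤ 4096 * L ^ 40 * s) :
    (s : ℝ) ≤ 2 ^ 27 * L ^ 80 * (B : ℝ) ^ 3 := by
  have e1 : s ≤ B * (2 * τ ^ 2) := ho.trans (Nat.mul_le_mul_left _ hf)
  have e2 : (s : ℝ) ≤ B * (2 * (τ : ℝ) ^ 2) := by exact_mod_cast e1
  have e3 : (s : ℝ) * (s : ℝ) ^ 2 ≤ (2 ^ 27 * L ^ 80 * (B : ℝ) ^ 3) * (s : ℝ) ^ 2 := by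
    calc (s : ℝ) * (s : ℝ) ^ 2 = (s : ℝ) ^ 3 := by ring
      _ ≤ (B * (2 * (τ : ℝ) ^ 2)) ^ 3 := by gcongr
      _ = 8 * (B : ℝ) ^ 3 * ((τ : ℝ) ^ 3) ^ 2 := by ring
      _ ≤ 8 * (B : ℝ) ^ 3 * (4096 * L ^ 40 * s) ^ 2 := by gcongr
      _ = _ := by ring
  exact le_of_mul_le_mul_right e3 (by positivity)

lemma num_b8 (β s : ℕ) (L : ℝ) (hL : 1 ≤ L) (hb1 : (s : ℝ) ≤ 2 ^ 27 * L ^ 80 * (β : ℝ) ^ 3)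
    (hsmall : 2 ^ 40 * L ^ 80 < (s : ℝ)) : 8 ≤ β := by
  by_contra hc
  have hL80 : (1 : ℝ) ≤ L ^ 80 := one_le_pow₀ hL
  have hc' : (β : ℝ) ≤ 8 := by exact_mod_cast (by omega : β ≤ 8)
  have : (β : ℝ) ^ 3 ≤ 8 ^ 3 := by gcongr
  have : (2 : ℝ) ^ 27 * L ^ 80 * (β : ℝ) ^ 3 ≤ 2 ^ 27 * L ^ 80 * 8 ^ 3 := by gcongr
  nlinarith

lemma num_fin (n β q m s : ℕ) (L : ℝ) (hL : 1 ≤ L) (hβ8 : 8 ≤ β) (hs : 0 < s) (hn : 0 < n)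
    (q2 : 2 ≤ q)
    (hb1 : (s : ℝ) ≤ 2 ^ 27 * L ^ 80 * (β : ℝ) ^ 3)
    (hcount : n * (β - 4) ≤ m * (2 * q * 2)) (c : (q - 1) * q ^ 2 ≤ n)
    (hm : (m : ℝ) ≤ L ^ 2 * s) : (n : ℝ) ≤ 2 ^ 19 * L ^ 43 * s := by
  have hnq : q ^ 3 ≤ 2 * n := by
    calc q ^ 3 = q * q ^ 2 := by ring
      _ ≤ (2 * (q - 1)) * q ^ 2 := by gcongr; omega
      _ = 2 * ((q - 1) * q ^ 2) := by ring
      _ ≤ _ := by gcongr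
  have hnq' : (q : ℝ) ^ 3 ≤ 2 * n := by exact_mod_cast hnq
  have e1 : n * β ≤ 8 * q * m := by
    calc n * β ≤ n * (2 * (β - 4)) := by gcongr; omega
      _ = 2 * (n * (β - 4)) := by ring
      _ ≤ 2 * (m * (2 * q * 2)) := by gcongr
      _ = _ := by ring
  have e2 : (n : ℝ) * β ≤ 8 * q * m := by exact_mod_cast e1
  have e3 : (n : ℝ) * β ≤ 8 * q * (L ^ 2 * s) := e2.trans (by gcongr)
  have e4 : (n : ℝ) ^ 2 * (n * s) ≤ (2 ^ 19 * L ^ 43 * s) ^ 2 * (n * s) := by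
    calc (n : ℝ) ^ 2 * (n * s) = (n : ℝ) ^ 3 * s := by ring
      _ ≤ (n : ℝ) ^ 3 * (2 ^ 27 * L ^ 80 * (β : ℝ) ^ 3) := by gcongr
      _ = 2 ^ 27 * L ^ 80 * (n * β) ^ 3 := by ring
      _ ≤ 2 ^ 27 * L ^ 80 * (8 * q * (L ^ 2 * s)) ^ 3 := by gcongr
      _ = 2 ^ 36 * L ^ 86 * (q : ℝ) ^ 3 * (s : ℝ) ^ 3 := by ring
      _ ≤ 2 ^ 36 * L ^ 86 * (2 * n) * (s : ℝ) ^ 3 := by gcongr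
      _ = 2 ^ 37 * (L ^ 86 * n * (s : ℝ) ^ 3) := by ring
      _ ≤ 2 ^ 38 * (L ^ 86 * n * (s : ℝ) ^ 3) := by gcongr <;> norm_num
      _ = _ := by ring
  have e5 := le_of_mul_le_mul_right e4 (by positivity)
  exact le_of_sq_le_sq e5 (by positivity)

section Count
variable {F : Type*} [Field F] [DecidableEq F]

lemma pmul {S : Finset SL(2, F)} {m n : ℕ} {x y : SL(2, F)} (hx : x ∈ S ^ m) (hy : y ∈ S ^ n) :
    x * y ∈ S ^ (m + n) := by
  rw [pow_add]; exact Finset.mul_mem_mul hx hy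

lemma pinv {S : Finset SL(2, F)} (hS : S⁻¹ = S) {m : ℕ} {x : SL(2, F)} (hx : x ∈ S ^ m) :
    x⁻¹ ∈ S ^ m := by
  have : (S ^ m)⁻¹ = S ^ m := by rw [← inv_pow, hS]
  rw [← this]; exact Finset.inv_mem_inv hx

/-- the part of the centralizer of `h` inside `S²` -/
def cent (S : Finset SL(2, F)) (h : SL(2, F)) : Finset SL(2, F) :=
  (S ^ 2).filter fun y => y * h = h * y

lemma mem_cent {S : Finset SL(2, F)} {h y : SL(2, F)} :
    y ∈ cent S h ↔ y ∈ S ^ 2 ∧ y * h = h * y := Finset.mem_filter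

lemma cent_torus (S : Finset SL(2, F)) (h1 : 1 ∈ S) (hS : S⁻¹ = S)
    (hgen : Subgroup.closure (S : Set SL(2, F)) = ⊤) (h2 : (2 : F) ≠ 0) (h : SL(2, F)) (hr : Reg h) :
    (cent S h).card ^ 3 ≤ 512 * (S ^ 10).card := by
  classical
  obtain ⟨P, hP⟩ := hr.exists_diag (K := AlgebraicClosure F)
  have hsymm : ∀ g ∈ (S : Set SL(2, F)), g⁻¹ ∈ (S : Set SL(2, F)) := by
    intro g hg
    have := pinv hS (m := 1) (by simpa using hg)
    simpa using this
  obtain ⟨a, ha, ha1, ha2⟩ := esc2 P (S : Set SL(2, F)) hgen h1 h2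
  obtain ⟨b, hb, hb1, hb2⟩ := esc2' P (S : Set SL(2, F)) hgen h1 hsymm h2
  have ha' : a ∈ S ^ 2 := by rw [sq]; rw [← Finset.coe_mul] at ha; exact ha
  have hb' : b ∈ S ^ 2 := by rw [sq]; rw [← Finset.coe_mul] at hb; exact hb
  have main := torus_bound ((cent S h).image (phi P)) ((S ^ 10).image (phi P)) (by
      intro x hx
      obtain ⟨y, hy, rfl⟩ := Finset.mem_image.1 hx
      exact (hr.comm_iff hP y).1 (mem_cent.1 hy).2) _ _ ha1 ha2 hb1 hb2 (by
      intro x hx y hy z hz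
      obtain ⟨x', hx', rfl⟩ := Finset.mem_image.1 hx
      obtain ⟨y', hy', rfl⟩ := Finset.mem_image.1 hy
      obtain ⟨z', hz', rfl⟩ := Finset.mem_image.1 hz
      rw [← map_mul, ← map_mul, ← map_mul, ← map_mul]
      apply Finset.mem_image_of_mem
      exact pmul (pmul (mem_cent.1 hx').1 (pmul (pmul ha' (mem_cent.1 hy').1) hb'))
        (mem_cent.1 hz').1)
  rw [Finset.card_image_of_injective _ (phi_inj P), Finset.card_image_of_injective _ (phi_inj P)]
    at main
  have hpos : 1 ≤ (S ^ 10).card := Finset.card_pos.2 ⟨1, Finset.one_mem_pow h1⟩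
  exact num_cent _ _ hpos main

lemma pmul' {S : Finset SL(2, F)} (h1 : 1 ∈ S) {m n k : ℕ} {x y : SL(2, F)} (hx : x ∈ S ^ m)
    (hy : y ∈ S ^ n) (hk : m + n ≤ k) : x * y ∈ S ^ k :=
  Finset.pow_subset_pow_right h1 hk (pmul hx hy)

lemma orbit (S : Finset SL(2, F)) (hS : S⁻¹ = S) (m : ℕ) (h : SL(2, F)) (hh : h ∈ S ^ m) :
    S.card ≤ (cent S h).card * ((S ^ (m + 2)).filter fun x => tr x = tr h).card := by
  apply Finset.card_le_mul_card_image_of_maps_to (f := fun s => s * h * s⁻¹)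
  · intro s hs
    rw [Finset.mem_filter]
    refine ⟨?_, tr_conj _ _⟩
    have hs1 : s ∈ S ^ 1 := by simpa using hs
    have := pmul (pmul hs1 hh) (pinv hS hs1)
    convert this using 2
    ring
  · intro b _
    rcases (S.filter fun s => s * h * s⁻¹ = b).eq_empty_or_nonempty with he | ⟨s0, hs0⟩
    · rw [he]; simp
    rw [Finset.mem_filter] at hs0
    apply Finset.card_le_card_of_injOn (fun s => s0⁻¹ * s)
    · intro s hs
      rw [Finset.mem_coe, Finset.mem_filter] at hs
      simp only [cent, Finset.coe_filter, Set.mem_ofPred_eq]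
      constructor
      · exact pmul (m := 1) (n := 1) (pinv hS (by simpa using hs0.1)) (by simpa using hs.1)
      · have e : s * h * s⁻¹ = s0 * h * s0⁻¹ := hs.2.trans hs0.2.symm
        calc s0⁻¹ * s * h = s0⁻¹ * (s * h * s⁻¹) * s := by group
          _ = s0⁻¹ * (s0 * h * s0⁻¹) * s := by rw [e]
          _ = h * (s0⁻¹ * s) := by group
    · intro x _ y _ h
      exact mul_left_cancel h

lemma pigeon (S : Finset SL(2, F)) (h1 : 1 ∈ S) (m : ℕ) (hτ : 2 < ((S ^ m).image tr).card) :
    ∃ h ∈ S ^ m, Reg h ∧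
      (((S ^ m).image tr).card - 2) * ((S ^ (m + 2)).filter fun x => tr x = tr h).card ≤
        (S ^ (m + 2)).card := by
  obtain ⟨T, hT⟩ : ∃ T, T = ((S ^ m).image tr) \ {2, -2} := ⟨_, rfl⟩
  have hTc : ((S ^ m).image tr).card - 2 ≤ T.card := by
    have h := Finset.le_card_sdiff {2, -2} ((S ^ m).image tr)
    have h' : ({2, -2} : Finset F).card ≤ 2 := Finset.card_le_two
    rw [← hT] at h
    omega
  have hTn : T.Nonempty := by
    rw [← Finset.card_pos]; omega
  obtain ⟨t, ht, hmin⟩ := Finset.exists_min_image T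
    (fun t => ((S ^ (m + 2)).filter fun x => tr x = t).card) hTn
  rw [hT, Finset.mem_sdiff] at ht
  obtain ⟨h, hh, rfl⟩ := Finset.mem_image.1 ht.1
  have h2 := ht.2
  simp only [Finset.mem_insert, Finset.mem_singleton, not_or] at h2
  refine ⟨h, hh, h2, ?_⟩
  calc _ ≤ T.card * ((S ^ (m + 2)).filter fun x => tr x = tr h).card := by gcongr
    _ = ∑ t ∈ T, ((S ^ (m + 2)).filter fun x => tr x = tr h).card := by simp
    _ ≤ ∑ t ∈ T, ((S ^ (m + 2)).filter fun x => tr x = t).card :=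
        Finset.sum_le_sum fun t ht => hmin t ht
    _ ≤ ∑ t ∈ (S ^ (m + 2)).image tr, ((S ^ (m + 2)).filter fun x => tr x = t).card := by
        apply Finset.sum_le_sum_of_subset
        intro t ht
        rw [hT, Finset.mem_sdiff] at ht
        exact Finset.image_subset_image (Finset.pow_subset_pow_right h1 (by omega)) ht.1
    _ = (S ^ (m + 2)).card := (Finset.card_eq_sum_card_image _ _).symm

lemma comm_tr (X : Finset SL(2, F)) (h : SL(2, F)) (hr : Reg h) (t : F) :
    (X.filter fun y => y * h = h * y ∧ tr y = t).card ≤ 2 := by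
  classical
  obtain ⟨P, hP⟩ := hr.exists_diag (K := AlgebraicClosure F)
  have key : ∀ y ∈ (X.filter fun y => y * h = h * y ∧ tr y = t),
      IsDg (phi P y) ∧ tr (phi P y) = algebraMap F _ t := by
    intro y hy
    rw [Finset.mem_filter] at hy
    exact ⟨(hr.comm_iff hP y).1 hy.2.1, by rw [tr_phi, hy.2.2]⟩
  have hinj : Set.InjOn (fun y => phi P y 0 0)
      ((X.filter fun y => y * h = h * y ∧ tr y = t : Finset SL(2, F)) : Set SL(2, F)) := by
    intro y hy z hz e
    exact phi_inj P ((key y (Finset.mem_coe.1 hy)).1.eq_of (key z (Finset.mem_coe.1 hz)).1 e)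
  rw [← Finset.card_image_of_injOn hinj]
  apply roots2 _ 1 (- algebraMap F _ t) 1 one_ne_zero
  intro ξ hξ
  obtain ⟨y, hy, rfl⟩ := Finset.mem_image.1 hξ
  obtain ⟨k1, k2⟩ := key y hy
  rw [← k2]
  simp only [tr]
  linear_combination -k1.mul_eq

lemma comm_same {x y : SL(2, F)} (hx : Reg x) (hy : Reg y) (hxy : y * x = x * y) (z : SL(2, F)) :
    z * y = y * z ↔ z * x = x * z := by
  obtain ⟨P, hP⟩ := hx.exists_diag (K := AlgebraicClosure F)
  rw [hx.comm_iff hP, hy.comm_iff ((hx.comm_iff hP y).1 hxy)]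

lemma comm_conj (s x y : SL(2, F)) :
    y * (s * x * s⁻¹) = (s * x * s⁻¹) * y ↔ (s⁻¹ * y * s) * x = x * (s⁻¹ * y * s) := by
  constructor
  · intro h
    calc (s⁻¹ * y * s) * x = s⁻¹ * (y * (s * x * s⁻¹)) * s := by group
      _ = s⁻¹ * ((s * x * s⁻¹) * y) * s := by rw [h]
      _ = _ := by group
  · intro h
    calc y * (s * x * s⁻¹) = s * ((s⁻¹ * y * s) * x) * s⁻¹ := by group
      _ = s * (x * (s⁻¹ * y * s)) * s⁻¹ := by rw [h]
      _ = _ := by group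

lemma reg_count (X : Finset SL(2, F)) (h : SL(2, F)) (hr : Reg h) (β : ℕ)
    (hβ : β ≤ (X.filter fun y => y * h = h * y).card) :
    β - 4 ≤ (X.filter fun y => (tr y ≠ 2 ∧ tr y ≠ -2) ∧ y * h = h * y).card := by
  have c1 := comm_tr X h hr 2
  have c2 := comm_tr X h hr (-2)
  have hsub : (X.filter fun y => y * h = h * y) ⊆
      (X.filter fun y => (tr y ≠ 2 ∧ tr y ≠ -2) ∧ y * h = h * y) ∪
      ((X.filter fun y => y * h = h * y ∧ tr y = 2) ∪
       (X.filter fun y => y * h = h * y ∧ tr y = -2)) := by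
    intro y hy
    simp only [Finset.mem_union, Finset.mem_filter] at hy ⊢
    tauto
  have := (Finset.card_le_card hsub).trans (Finset.card_union_le _ _)
  have := Finset.card_union_le (X.filter fun y => y * h = h * y ∧ tr y = 2)
    (X.filter fun y => y * h = h * y ∧ tr y = -2)
  omega

lemma pivot_all (S : Finset SL(2, F)) (h1 : 1 ∈ S) (hS : S⁻¹ = S)
    (hgen : Subgroup.closure (S : Set SL(2, F)) = ⊤)
    (hβ : ∀ h ∈ S ^ 4, Reg h → 5 ≤ (cent S h).card) (h0 : SL(2, F)) (hh : h0 ∈ S ^ 4)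
    (hr : Reg h0) (g : SL(2, F)) :
    ∃ x ∈ S ^ 4, Reg x ∧ ∀ y, y * x = x * y ↔ y * (g * h0 * g⁻¹) = (g * h0 * g⁻¹) * y := by
  have step : ∀ s ∈ S, ∀ g : SL(2, F), 
      (∃ x ∈ S ^ 4, Reg x ∧ ∀ y, y * x = x * y ↔ y * (g * h0 * g⁻¹) = (g * h0 * g⁻¹) * y) →
      (∃ x ∈ S ^ 4, Reg x ∧ ∀ y, y * x = x * y ↔
        y * ((s * g) * h0 * (s * g)⁻¹) = ((s * g) * h0 * (s * g)⁻¹) * y) := by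
    rintro s hs g ⟨x, hx, hxr, hxy⟩
    have c := reg_count (S ^ 2) x hxr 5 (hβ x hx hxr)
    obtain ⟨y, hy⟩ := Finset.card_pos.1 (lt_of_lt_of_le (by norm_num) c)
    rw [Finset.mem_filter] at hy
    have hyr : Reg y := hy.2.1
    have hs1 : s ∈ S ^ 1 := by simpa using hs
    refine ⟨s * y * s⁻¹, pmul (pmul hs1 hy.1) (pinv hS hs1), ?_, ?_⟩
    · simp only [Reg, tr_conj]; exact hyr
    · intro z
      rw [comm_conj, comm_same hxr hyr hy.2.2, hxy, ← comm_conj]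
      have : s * (g * h0 * g⁻¹) * s⁻¹ = s * g * h0 * (s * g)⁻¹ := by group
      rw [this]
  have hg : g ∈ Subgroup.closure (S : Set SL(2, F)) := by rw [hgen]; trivial
  induction hg using Subgroup.closure_induction_left with
  | one => exact ⟨h0, hh, hr, by simp⟩
  | mul_left x hx y _ ih => exact step x hx y ih
  | inv_mul_cancel x hx y _ ih =>
    refine step x⁻¹ ?_ y ih
    have := pinv hS (m := 1) (by simpa using hx)
    simpa using this

lemma pivot_count [Fintype F] (S : Finset SL(2, F)) (h1 : 1 ∈ S) (hS : S⁻¹ = S)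
    (hgen : Subgroup.closure (S : Set SL(2, F)) = ⊤) (β : ℕ) (h5 : 5 ≤ β)
    (hβ : ∀ h ∈ S ^ 4, Reg h → β ≤ (cent S h).card) (h0 : SL(2, F)) (hh : h0 ∈ S ^ 4)
    (hr : Reg h0) :
    Fintype.card SL(2, F) * (β - 4) ≤ (S ^ 2).card * (2 * Fintype.card F * 2) := by
  have hC : ((Finset.univ : Finset SL(2, F)).filter fun y => y * h0 = h0 * y).card ≤
      2 * Fintype.card F := by
    have := Finset.card_le_mul_card_image_of_maps_to
      (s := (Finset.univ : Finset SL(2, F)).filter fun y => y * h0 = h0 * y)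
      (t := (Finset.univ : Finset F)) (f := tr) (by simp) 2 (by
        intro t _
        rw [Finset.filter_filter]
        exact comm_tr _ h0 hr t)
    simpa using this
  have main := Finset.card_mul_le_card_mul (s := (Finset.univ : Finset SL(2, F)))
    (t := (S ^ 2).filter fun x => tr x ≠ 2 ∧ tr x ≠ -2)
    (fun g x => x * (g * h0 * g⁻¹) = (g * h0 * g⁻¹) * x)
    (m := β - 4) (n := 2 * Fintype.card F * 2) (by
      intro g _
      obtain ⟨x, hx, hxr, hxy⟩ := pivot_all S h1 hS hgen
        (fun h hh hr => h5.trans (hβ h hh hr)) h0 hh hr g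
      have hgr : Reg (g * h0 * g⁻¹) := by simp only [Reg, tr_conj]; exact hr
      have := reg_count (S ^ 2) (g * h0 * g⁻¹) hgr β (by
        have := hβ x hx hxr
        simp only [cent, hxy] at this
        exact this)
      rw [Finset.bipartiteAbove, Finset.filter_filter]
      exact this) (by
      intro x hx
      rw [Finset.mem_filter] at hx
      have hxr : Reg x := hx.2
      rw [Finset.bipartiteBelow]
      have c := Finset.card_le_mul_card_image_of_maps_to
        (s := (Finset.univ : Finset SL(2, F)).filter
          fun g => x * (g * h0 * g⁻¹) = (g * h0 * g⁻¹) * x)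
        (t := (Finset.univ : Finset SL(2, F)).filter fun y => y * x = x * y ∧ tr y = tr h0)
        (f := fun g => g * h0 * g⁻¹) (by
          intro g hg
          rw [Finset.mem_filter] at hg ⊢
          exact ⟨Finset.mem_univ _, hg.2.symm, tr_conj _ _⟩) (2 * Fintype.card F) (by
          intro y _
          refine le_trans ?_ hC
          rcases (Finset.filter (fun g => g * h0 * g⁻¹ = y) ((Finset.univ : Finset SL(2, F)).filter
            fun g => x * (g * h0 * g⁻¹) = (g * h0 * g⁻¹) * x)).eq_empty_or_nonempty with he | ⟨s0, hs0⟩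
          · rw [he]; simp
          rw [Finset.mem_filter] at hs0
          apply Finset.card_le_card_of_injOn (fun s => s0⁻¹ * s)
          · intro s hs
            rw [Finset.mem_coe, Finset.mem_filter] at hs
            simp only [Finset.coe_filter, Set.mem_ofPred_eq, Finset.mem_univ, true_and]
            have e : s * h0 * s⁻¹ = s0 * h0 * s0⁻¹ := hs.2.trans hs0.2.symm
            calc s0⁻¹ * s * h0 = s0⁻¹ * (s * h0 * s⁻¹) * s := by group
              _ = s0⁻¹ * (s0 * h0 * s0⁻¹) * s := by rw [e]
              _ = h0 * (s0⁻¹ * s) := by group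
          · intro x _ y _ h
            exact mul_left_cancel h)
      refine c.trans ?_
      gcongr
      exact comm_tr _ x hxr _)
  rw [Finset.card_univ] at main
  refine main.trans ?_
  gcongr
  exact Finset.filter_subset _ _

lemma card_lower [Fintype F] : (Fintype.card F - 1) * Fintype.card F ^ 2 ≤ Fintype.card SL(2, F) := by
  have : Fintype.card (Fˣ × F × F) ≤ Fintype.card SL(2, F) := by
    apply Fintype.card_le_of_injective (fun w : Fˣ × F × F =>
      mk4 (w.1 : F) w.2.1 w.2.2 ((w.1⁻¹ : Fˣ) * (1 + w.2.1 * w.2.2)) (by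
        rw [← mul_assoc, Units.mul_inv]; ring))
    rintro ⟨a, b, c⟩ ⟨a', b', c'⟩ h
    have e1 := congrArg (fun g : SL(2, F) => g 0 0) h
    have e2 := congrArg (fun g : SL(2, F) => g 0 1) h
    have e3 := congrArg (fun g : SL(2, F) => g 1 0) h
    simp only [k00, k01, k10] at e1 e2 e3
    rw [Prod.mk.injEq, Prod.mk.injEq]
    exact ⟨Units.ext e1, e2, e3⟩
  rw [Fintype.card_prod, Fintype.card_prod, Fintype.card_units] at this
  rwa [sq]

theorem main_dichotomy [Fintype F] (S : Finset SL(2, F)) (h1 : 1 ∈ S) (hS : S⁻¹ = S)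
    (hgen : Subgroup.closure (S : Set SL(2, F)) = ⊤) (h2 : (2 : F) ≠ 0) (L : ℝ) (hL : 1 ≤ L)
    (hL2 : ((S ^ 2).card : ℝ) ≤ L ^ 2 * S.card) (hL10 : ((S ^ 10).card : ℝ) ≤ L ^ 10 * S.card) :
    (S.card : ℝ) ≤ 2 ^ 40 * L ^ 80 ∨ (Fintype.card SL(2, F) : ℝ) ≤ 2 ^ 19 * L ^ 43 * S.card := by
  by_cases hsmall : (S.card : ℝ) ≤ 2 ^ 40 * L ^ 80
  · exact Or.inl hsmall
  right
  push Not at hsmall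
  have hs0 : 0 < S.card := Finset.card_pos.2 ⟨1, h1⟩
  obtain ⟨s, hs⟩ : ∃ s, s = S.card := ⟨_, rfl⟩
  rw [← hs] at hs0 hL2 hL10 hsmall ⊢
  have hs54 : 54 < s := by
    have hL80 : (1 : ℝ) ≤ L ^ 80 := one_le_pow₀ hL
    have : (54 : ℝ) < s := by nlinarith
    exact_mod_cast this
  obtain ⟨a, ha, b, hb, hab⟩ := esc3 (K := AlgebraicClosure F) (S : Set SL(2, F)) hgen h1
  have ha' : a ∈ S ^ 1 := by simpa using ha
  have hb' : b ∈ S ^ 2 := by rw [sq]; rw [← Finset.coe_mul] at hb; exact hb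
  have t0 : S.card ≤ 2 * ((S ^ 3).image tr).card ^ 3 := by
    apply trace_total a b hab S (S ^ 3)
    · simpa using Finset.pow_subset_pow_right h1 (show 1 ≤ 3 by norm_num)
    · intro x hx
      exact Finset.pow_subset_pow_right h1 (show 2 ≤ 3 by norm_num)
        (pmul ha' (show x ∈ S ^ 1 by simpa using hx))
    · intro x hx
      exact pmul hb' (show x ∈ S ^ 1 by simpa using hx)
  rw [← hs] at t0
  have t38 : ((S ^ 3).image tr).card ≤ ((S ^ 8).image tr).card :=
    Finset.card_le_card (Finset.image_subset_image (Finset.pow_subset_pow_right h1 (by norm_num)))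
  have t3 : 4 ≤ ((S ^ 3).image tr).card := by
    revert t0
    generalize ((S ^ 3).image tr).card = t
    intro t0
    by_contra hc
    have : t ^ 3 ≤ 3 ^ 3 := Nat.pow_le_pow_left (by omega) 3
    omega
  have hτ4 : 4 ≤ ((S ^ 8).image tr).card := t3.trans t38
  -- upper bound for the number of traces
  have hτup : (((S ^ 8).image tr).card : ℝ) ^ 3 ≤ 4096 * L ^ 40 * s := by
    obtain ⟨h, hh, hr, hp⟩ := pigeon S h1 8 (lt_of_lt_of_le (by norm_num) hτ4)
    have ho := orbit S hS 8 h hh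
    have hc := cent_torus S h1 hS hgen h2 h hr
    rw [← hs] at ho
    exact num_up _ s _ _ _ L hL hτ4 hs0 hp ho hc hL10
  -- lower bound for tori
  have hlow : ∀ h ∈ S ^ 4, Reg h → (s : ℝ) ≤ 2 ^ 27 * L ^ 80 * ((cent S h).card : ℝ) ^ 3 := by
    intro h hh hr
    have ho := orbit S hS 4 h hh
    have hf := trace_fiber a b hab (S ^ (4 + 2)) (S ^ 8)
      (fun x hx => pmul' h1 ha' hx (by norm_num)) (fun x hx => pmul' h1 hb' hx (by norm_num)) (tr h)
    rw [← hs] at ho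
    exact num_low _ s _ _ L hL hs0 ho hf hτup
  obtain ⟨h0, hh0, hr0, -⟩ := pigeon S h1 3 (lt_of_lt_of_le (by norm_num) t3)
  have hh0' : h0 ∈ S ^ 4 := Finset.pow_subset_pow_right h1 (by norm_num) hh0
  classical
  obtain ⟨hm, hhm, hmin⟩ := Finset.exists_min_image ((S ^ 4).filter fun h => Reg h)
    (fun h => (cent S h).card) ⟨h0, Finset.mem_filter.2 ⟨hh0', hr0⟩⟩
  rw [Finset.mem_filter] at hhm
  have hb1 := hlow hm hhm.1 hhm.2
  have hβ8 : 8 ≤ (cent S hm).card := num_b8 _ s L hL hb1 hsmall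
  have hcount := pivot_count S h1 hS hgen (cent S hm).card (le_trans (by norm_num) hβ8)
    (fun h hh hr => hmin h (Finset.mem_filter.2 ⟨hh, hr⟩)) h0 hh0' hr0
  exact num_fin _ _ _ _ s L hL hβ8 hs0 Fintype.card_pos Fintype.one_lt_card hb1 hcount
    card_lower hL2

end Count
end Helf

namespace Helf
open scoped MatrixGroups

section Spec
variable {V : Type*} [NormedAddCommGroup V] [InnerProductSpace ℂ V] [FiniteDimensional ℂ V]

lemma spec_bound (T0 : V →ₗ[ℂ] V) (D : ℕ)
    (hD : ∀ μ : ℝ, 0 < μ → ∀ E : Submodule ℂ V,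
      (∀ f, f ∈ E ↔ ∀ h, inner ℂ (T0 f) (T0 h) = (μ : ℂ) * inner ℂ f h) → E ≠ ⊥ →
      D ≤ Module.finrank ℂ E)
    {ι : Type*} [Fintype ι] (b : OrthonormalBasis ι ℂ V) (f : V) :
    (D : ℝ) * ‖T0 f‖ ^ 2 ≤ (∑ i, ‖T0 (b i)‖ ^ 2) * ‖f‖ ^ 2 := by
  set T : V →ₗ[ℂ] V := T0.adjoint ∘ₗ T0 with hTd
  have hTi : ∀ f h, inner ℂ (T f) h = inner ℂ (T0 f) (T0 h) := by
    intro f h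
    rw [hTd, LinearMap.comp_apply, LinearMap.adjoint_inner_left]
  have hTi' : ∀ f h, inner ℂ f (T h) = inner ℂ (T0 f) (T0 h) := by
    intro f h
    rw [hTd, LinearMap.comp_apply, LinearMap.adjoint_inner_right]
  have hT : T.IsSymmetric := by
    intro x y
    rw [hTi, hTi']
  obtain ⟨n, hn⟩ : ∃ n, Module.finrank ℂ V = n := ⟨_, rfl⟩
  set e := hT.eigenvectorBasis hn with he
  set l := hT.eigenvalues hn with hl
  have hle : ∀ i, T (e i) = (l i : ℂ) • e i := hT.apply_eigenvectorBasis hn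
  have hln : ∀ i, l i = ‖T0 (e i)‖ ^ 2 := by
    intro i
    have h1 : inner ℂ (e i) (T (e i)) = ((‖T0 (e i)‖ ^ 2 : ℝ) : ℂ) := by
      rw [hTi', inner_self_eq_norm_sq_to_K]; norm_cast
    rw [hle, inner_smul_right, inner_self_eq_norm_sq_to_K, e.norm_eq_one] at h1
    simp only [RCLike.ofReal_one, one_pow, mul_one] at h1
    exact_mod_cast h1
  have hsum : ∑ i, l i = ∑ i, ‖T0 (b i)‖ ^ 2 := by
    have h1 := LinearMap.trace_eq_sum_inner T b
    rw [LinearMap.trace_eq_sum_inner T e] at h1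
    simp only [hTi', inner_self_eq_norm_sq_to_K] at h1
    simp only [hln]
    exact_mod_cast h1
  have hf : ‖f‖ ^ 2 = ∑ i, ‖inner ℂ (e i) f‖ ^ 2 := (e.sum_sq_norm_inner_right f).symm
  have hTf : ‖T0 f‖ ^ 2 = ∑ i, l i * ‖inner ℂ (e i) f‖ ^ 2 := by
    have h1 : inner ℂ f (T f) = ((‖T0 f‖ ^ 2 : ℝ) : ℂ) := by
      rw [hTi', inner_self_eq_norm_sq_to_K]; norm_cast
    rw [← e.sum_inner_mul_inner f (T f)] at h1
    have h2 : ∀ i, inner ℂ f (e i) * inner ℂ (e i) (T f) =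
        ((l i * ‖inner ℂ (e i) f‖ ^ 2 : ℝ) : ℂ) := by
      intro i
      rw [← hT (e i) f, hle, inner_smul_left, ← inner_conj_symm f (e i)]
      have := RCLike.conj_mul (inner ℂ (e i) f)
      rw [Complex.conj_ofReal, mul_left_comm, this]
      push_cast; rfl
    simp only [h2] at h1
    exact_mod_cast h1.symm
  rcases isEmpty_or_nonempty (Fin n) with hE | hE
  · rw [hTf, hf]; simp
  obtain ⟨i0, -, hmax⟩ := Finset.exists_max_image (Finset.univ : Finset (Fin n)) l
    Finset.univ_nonempty
  have hTle : ‖T0 f‖ ^ 2 ≤ l i0 * ‖f‖ ^ 2 := by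
    rw [hTf, hf, Finset.mul_sum]
    exact Finset.sum_le_sum fun i hi => by
      have := hmax i hi
      gcongr
  have hl0 : ∀ i, 0 ≤ l i := fun i => by rw [hln]; positivity
  have hDl : (D : ℝ) * l i0 ≤ ∑ i, l i := by
    rcases (hl0 i0).eq_or_lt with h0 | h0
    · rw [← h0, mul_zero]; exact Finset.sum_nonneg fun i _ => hl0 i
    have hd := hD (l i0) h0 (Module.End.eigenspace T (l i0 : ℂ)) (by
      intro g
      rw [Module.End.mem_eigenspace_iff]
      constructor
      · intro hg h
        rw [← hTi, hg, inner_smul_left, Complex.conj_ofReal]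
      · intro hg
        apply ext_inner_right ℂ
        intro h
        rw [hTi, hg, inner_smul_left, Complex.conj_ofReal]) (hT.hasEigenvalue_eigenvalues hn i0)
    have hc := hT.card_filter_eigenvalues_eq hn (l i0 : ℂ)
    rw [← hc] at hd
    calc (D : ℝ) * l i0 ≤ ((Finset.univ.filter fun i => ((l i : ℝ) : ℂ) = l i0).card : ℝ) * l i0 := by
          gcongr; exact hd
      _ = ∑ i ∈ (Finset.univ.filter fun i => ((l i : ℝ) : ℂ) = l i0), l i0 := by simp
      _ = ∑ i ∈ (Finset.univ.filter fun i => ((l i : ℝ) : ℂ) = l i0), l i := by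
          apply Finset.sum_congr rfl
          intro i hi
          have := (Finset.mem_filter.1 hi).2
          exact_mod_cast this.symm
      _ ≤ ∑ i, l i := Finset.sum_le_sum_of_subset_of_nonneg (Finset.filter_subset _ _)
          fun i _ _ => hl0 i
  calc (D : ℝ) * ‖T0 f‖ ^ 2 ≤ D * (l i0 * ‖f‖ ^ 2) := by gcongr
    _ = D * l i0 * ‖f‖ ^ 2 := by ring
    _ ≤ _ := by rw [← hsum]; gcongr

end Spec
end Helf

namespace Helf
open scoped MatrixGroups

section Rep
variable {p : ℕ} [Fact p.Prime] {W : Type*} [AddCommGroup W] [Module ℂ W]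

lemma normal_gen {F : Type*} [Field F] (N : Subgroup SL(2, F)) [hN : N.Normal]
    (h : ∀ s : F, uu s ∈ N) : N = ⊤ := by
  rw [eq_top_iff]
  intro A _
  refine Matrix.SL2.transvection_induction (fun A => A ∈ N) ?_ (fun _ _ => N.mul_mem) A
  intro i j hij c
  fin_cases i <;> fin_cases j
  · exact absurd rfl hij
  · convert h c
    apply ext4 <;> simp [uu, Matrix.transvection, Matrix.SpecialLinearGroup.transvection]
  · convert hN.conj_mem _ (h (-c)) ww
    apply ext4 <;> simp only [m00, m01, m10, m11, i00, i01, i10, i11] <;>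
      simp [uu, ww, Matrix.transvection, Matrix.SpecialLinearGroup.transvection]
  · exact absurd rfl hij

lemma uu_conj {F : Type*} [Field F] (b s : F) (hb : b ≠ 0) :
    uu s * mk4 b⁻¹ 0 0 b (by simp [hb]) = mk4 b⁻¹ 0 0 b (by simp [hb]) * uu (b ^ 2 * s) := by
  apply ext4 <;> simp only [m00, m01, m10, m11, k00, k01, k10, k11] <;> simp [uu] 
  field_simp

lemma sq_count : ∃ C : Finset (ZMod p), p - 1 ≤ 2 * C.card ∧ ∀ c ∈ C, ∃ b ≠ 0, c = b ^ 2 := by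
  classical
  refine ⟨(Finset.univ.filter fun b : ZMod p => b ≠ 0).image (· ^ 2), ?_, ?_⟩
  · have h1 : (Finset.univ.filter fun b : ZMod p => b ≠ 0).card = p - 1 := by
      rw [Finset.filter_ne', Finset.card_erase_of_mem (Finset.mem_univ _), Finset.card_univ,
        ZMod.card]
    rw [← h1]
    apply Finset.card_le_mul_card_image
    intro c _
    rcases (Finset.filter (fun b => b ^ 2 = c) (Finset.univ.filter fun b : ZMod p => b ≠ 0)).eq_empty_or_nonempty with he | ⟨x, hx⟩
    · rw [he]; simp
    · calc _ ≤ ({x, -x} : Finset (ZMod p)).card := by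
            apply Finset.card_le_card
            intro y hy
            rw [Finset.mem_filter] at hx hy
            have := sq_eq_sq_iff_eq_or_eq_neg.1 (hy.2.trans hx.2.symm)
            simpa using this
        _ ≤ 2 := Finset.card_le_two
  · intro c hc
    obtain ⟨b, hb, rfl⟩ := Finset.mem_image.1 hc
    exact ⟨b, (Finset.mem_filter.1 hb).2, rfl⟩

lemma char_inj (ψ : AddChar (ZMod p) ℂ) (hψ : ψ ≠ 0) : Function.Injective ψ := by
  intro a b hab
  by_contra hne
  apply hψ
  have h1 : ψ (a - b) = 1 := by
    rw [AddChar.map_sub_eq_div, hab, div_self (by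
      intro h0
      have := ψ.map_zero_eq_one
      rw [← sub_self b, AddChar.map_sub_eq_div, h0] at this
      simp at this)]
  have hd : a - b ≠ 0 := sub_ne_zero.2 hne
  ext x
  have hx : x = (x * (a - b)⁻¹).val • (a - b) := by
    rw [nsmul_eq_mul, ZMod.natCast_zmod_val, mul_assoc, inv_mul_cancel₀ hd, mul_one]
  rw [hx, AddChar.map_nsmul_eq_pow, h1, one_pow]
  simp

lemma rep_dim [FiniteDimensional ℂ W] (ρ : Representation ℂ SL(2, ZMod p) W) (E : Submodule ℂ W)
    (hE : ∀ g, ∀ f ∈ E, ρ g f ∈ E) (hf : ∃ f ∈ E, ∃ g, ρ g f ≠ f) :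
    p - 1 ≤ 2 * Module.finrank ℂ E := by
  -- some unipotent acts nontrivially
  have hu : ∃ f ∈ E, ∃ s : ZMod p, ρ (uu s) f ≠ f := by
    by_contra hc
    push Not at hc
    obtain ⟨f, hfE, g, hg⟩ := hf
    let N : Subgroup SL(2, ZMod p) :=
      { carrier := {x | ∀ f ∈ E, ρ x f = f}
        one_mem' := by intro f _; simp
        mul_mem' := by
          intro a b ha hb f hf
          rw [map_mul, Module.End.mul_apply, hb f hf, ha f hf]
        inv_mem' := by
          intro a ha f hf
          have : ρ a⁻¹ (ρ a f) = f := by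
            rw [← Module.End.mul_apply, ← map_mul]; simp
          rwa [ha f hf] at this }
    have hN : N.Normal := ⟨by
      intro n hn g f hf
      rw [map_mul, map_mul, Module.End.mul_apply, Module.End.mul_apply, hn _ (hE _ _ hf),
        ← Module.End.mul_apply, ← map_mul]
      simp⟩
    have := normal_gen N (fun s f hf => hc f hf s)
    have hgN : g ∈ N := by rw [this]; trivial
    exact hg (hgN f hfE)
  obtain ⟨f, hfE, s, hs⟩ := hu
  -- Fourier components
  let v : AddChar (ZMod p) ℂ → W := fun ψ => ∑ t : ZMod p, ψ (-t) • ρ (uu t) f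
  have hvE : ∀ ψ, v ψ ∈ E := fun ψ => Submodule.sum_mem _ fun t _ => E.smul_mem _ (hE _ _ hfE)
  have hv : ∀ ψ t, ρ (uu t) (v ψ) = ψ t • v ψ := by
    intro ψ t
    simp only [v, map_sum, map_smul, Finset.smul_sum, smul_smul]
    refine Fintype.sum_equiv (Equiv.addLeft t) _ _ ?_
    intro x
    rw [← Module.End.mul_apply, ← map_mul, uu_add, Equiv.coe_addLeft, ← AddChar.map_add_eq_mul]
    congr 2
    ring
  have hsum : ∑ ψ, v ψ = (p : ℂ) • f := by
    simp only [v]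
    rw [Finset.sum_comm]
    simp only [← Finset.sum_smul, AddChar.sum_apply_eq_ite]
    rw [Finset.sum_eq_single 0]
    · have : uu (0 : ZMod p) = 1 := by apply ext4 <;> simp [uu]
      simp [this]
    · intro b _ hb
      simp [hb]
    · simp
  have hex : ∃ ψ, ψ ≠ 0 ∧ v ψ ≠ 0 := by
    by_contra hc
    push Not at hc
    rw [Finset.sum_eq_single 0 (fun b _ hb => hc b hb) (by simp)] at hsum
    have hp : (p : ℂ) ≠ 0 := by exact_mod_cast (Fact.out : p.Prime).ne_zero
    have h2 := hv 0 s
    rw [hsum, map_smul] at h2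
    simp only [AddChar.zero_apply, one_smul] at h2
    exact hs (smul_right_injective W hp h2)
  obtain ⟨ψ, hψ, hv0⟩ := hex
  obtain ⟨C, hC, hCs⟩ := sq_count (p := p)
  have hinj := char_inj ψ hψ
  have hw : ∀ c : C, ∃ w : E, ρ (uu 1) w = ψ c • (w : W) ∧ w ≠ 0 := by
    rintro ⟨c, hc⟩
    obtain ⟨b, hb, rfl⟩ := hCs c hc
    refine ⟨⟨ρ (mk4 b⁻¹ 0 0 b (by simp [hb])) (v ψ), hE _ _ (hvE ψ)⟩, ?_, ?_⟩
    · simp only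
      rw [← Module.End.mul_apply, ← map_mul, uu_conj b 1 hb, map_mul, Module.End.mul_apply, hv,
        map_smul, mul_one]
    · intro h0
      have h0' : ρ (mk4 b⁻¹ 0 0 b (by simp [hb])) (v ψ) = 0 := congrArg Subtype.val h0
      have := congrArg (ρ (mk4 b⁻¹ 0 0 b (by simp [hb]))⁻¹) h0'
      rw [← Module.End.mul_apply, ← map_mul] at this
      simp at this
      exact hv0 this
  choose w hw1 hw2 using hw
  let U : Module.End ℂ E := (ρ (uu 1)).restrict (hE (uu 1))
  have hli := Module.End.eigenvectors_linearIndependent' U (fun c : C => ψ c)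
    (hinj.comp Subtype.val_injective) w (by
      intro c
      rw [Module.End.hasEigenvector_iff, Module.End.mem_eigenspace_iff]
      refine ⟨Subtype.ext ?_, hw2 c⟩
      simpa [U] using hw1 c)
  have := hli.fintype_card_le_finrank
  rw [Fintype.card_coe] at this
  omega

end Rep
end Helf

namespace Helf
open scoped MatrixGroups

section Gow
variable {G : Type*} [Group G] [Fintype G] [DecidableEq G]

/-- right translation -/
noncomputable def rt (g : G) : EuclideanSpace ℂ G ≃ₗᵢ[ℂ] EuclideanSpace ℂ G :=
  LinearIsometryEquiv.piLpCongrLeft 2 ℂ ℂ (Equiv.mulRight g⁻¹)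

/-- left translation -/
noncomputable def lt (g : G) : EuclideanSpace ℂ G ≃ₗᵢ[ℂ] EuclideanSpace ℂ G :=
  LinearIsometryEquiv.piLpCongrLeft 2 ℂ ℂ (Equiv.mulLeft g)

lemma rt_apply (g : G) (f : EuclideanSpace ℂ G) (x : G) : rt g f x = f (x * g) := by
  simp [rt, LinearIsometryEquiv.piLpCongrLeft_apply, Equiv.piCongrLeft']

lemma lt_apply (g : G) (f : EuclideanSpace ℂ G) (x : G) : lt g f x = f (g⁻¹ * x) := by
  simp [lt, LinearIsometryEquiv.piLpCongrLeft_apply, Equiv.piCongrLeft']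

noncomputable def rr : Representation ℂ G (EuclideanSpace ℂ G) where
  toFun g := (rt g).toLinearEquiv.toLinearMap
  map_one' := by
    ext f x
    simp [rt_apply]
  map_mul' g h := by
    ext f x
    simp [rt_apply, mul_assoc]

lemma rr_apply (g : G) (f : EuclideanSpace ℂ G) : rr g f = rt g f := rfl

/-- convolution by `c` -/
noncomputable def cv (c : G → ℂ) : EuclideanSpace ℂ G →ₗ[ℂ] EuclideanSpace ℂ G :=
  ∑ g, c g • (lt g).toLinearEquiv.toLinearMap

lemma cv_apply (c : G → ℂ) (f : EuclideanSpace ℂ G) (x : G) :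
    cv c f x = ∑ g, c g * f (g⁻¹ * x) := by
  simp [cv, LinearMap.sum_apply, lt_apply]

lemma cv_rt (c : G → ℂ) (g : G) (f : EuclideanSpace ℂ G) : cv c (rt g f) = rt g (cv c f) := by
  ext x
  simp only [cv_apply, rt_apply, mul_assoc]

lemma cv_const (c : G → ℂ) (hc : ∑ g, c g = 0) (f : EuclideanSpace ℂ G) (hf : ∀ g, rt g f = f) :
    cv c f = 0 := by
  have : ∀ x, f x = f 1 := by
    intro x
    have := congrArg (fun h : EuclideanSpace ℂ G => h 1) (hf x)
    simpa [rt_apply] using this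
  ext x
  rw [cv_apply]
  simp only [this (_ * x), ← Finset.sum_mul, hc]
  simp

lemma gow_gen (D : ℕ)
    (hD : ∀ E : Submodule ℂ (EuclideanSpace ℂ G), (∀ g, ∀ f ∈ E, rr g f ∈ E) →
      (∃ f ∈ E, ∃ g, rr g f ≠ f) → D ≤ Module.finrank ℂ E)
    (c : G → ℂ) (hc : ∑ g, c g = 0) (f : EuclideanSpace ℂ G) :
    (D : ℝ) * ‖cv c f‖ ^ 2 ≤ (Fintype.card G * ∑ g, ‖c g‖ ^ 2) * ‖f‖ ^ 2 := by
  have main := spec_bound (cv c) D (by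
    intro μ hμ E hE hne
    apply hD
    · intro g f hf
      rw [hE] at hf ⊢
      intro h
      have e : h = rt g ((rt g).symm h) := by simp
      rw [rr_apply, cv_rt, e, cv_rt, LinearIsometryEquiv.inner_map_map,
        LinearIsometryEquiv.inner_map_map, hf]
    · obtain ⟨f, hf, hf0⟩ := Submodule.exists_mem_ne_zero_of_ne_bot hne
      refine ⟨f, hf, ?_⟩
      by_contra hcon
      push Not at hcon
      have h0 := cv_const c hc f hcon
      have h1 := (hE f).1 hf f
      rw [h0, inner_zero_left, eq_comm, mul_eq_zero, inner_self_eq_zero] at h1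
      rcases h1 with h1 | h1
      · exact hμ.ne' (by exact_mod_cast h1)
      · exact hf0 h1) (EuclideanSpace.basisFun G ℂ) f
  have hb : ∀ i, ‖cv c (EuclideanSpace.basisFun G ℂ i)‖ ^ 2 = ∑ g, ‖c g‖ ^ 2 := by
    intro i
    rw [EuclideanSpace.norm_sq_eq]
    refine Fintype.sum_equiv (Equiv.mulRight i⁻¹) _ _ ?_
    intro x
    rw [cv_apply]
    rw [Finset.sum_eq_single (x * i⁻¹)]
    · simp
    · intro b _ hb
      have : b⁻¹ * x ≠ i := by
        rintro rfl
        apply hb; group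
      simp [this]
    · simp
  simp only [hb] at main
  simpa using main

lemma gowers (D : ℕ)
    (hD : ∀ E : Submodule ℂ (EuclideanSpace ℂ G), (∀ g, ∀ f ∈ E, rr g f ∈ E) →
      (∃ f ∈ E, ∃ g, rr g f ≠ f) → D ≤ Module.finrank ℂ E) (A B : Finset G) :
    (D : ℝ) * (((Fintype.card G : ℝ) - (A * B).card) * (A.card * B.card / Fintype.card G) ^ 2) ≤
      Fintype.card G * A.card * B.card := by
  set n : ℝ := (Fintype.card G : ℝ) with hn
  have hn0 : 0 < n := by rw [hn]; exact_mod_cast Fintype.card_pos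
  let c : G → ℂ := fun g => (((if g ∈ A then 1 else 0) - A.card / n : ℝ) : ℂ)
  let f : EuclideanSpace ℂ G := WithLp.toLp 2 fun g => if g ∈ B then 1 else 0
  have hfx : ∀ x, f x = if x ∈ B then 1 else 0 := fun x => rfl
  have hc : ∑ g, c g = 0 := by
    simp only [c]
    rw [← Complex.ofReal_sum]
    norm_cast
    rw [Finset.sum_sub_distrib]
    simp only [Finset.sum_ite_mem, Finset.univ_inter, Finset.sum_const, Finset.card_univ,
      nsmul_eq_mul, mul_one]
    rw [← hn]
    field_simp
    simp
  have hc2 : ∑ g, ‖c g‖ ^ 2 ≤ A.card := by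
    have h1 : ∀ g, ‖c g‖ ^ 2 = (if g ∈ A then 1 else 0) - (2 * (A.card / n)) * (if g ∈ A then 1 else 0)
        + (A.card / n) ^ 2 := by
      intro g
      simp only [c]
      rw [Complex.norm_real, Real.norm_eq_abs, sq_abs]
      split_ifs <;> ring
    simp only [h1]
    rw [Finset.sum_add_distrib, Finset.sum_sub_distrib, ← Finset.mul_sum]
    simp only [Finset.sum_ite_mem, Finset.univ_inter, Finset.sum_const, Finset.card_univ,
      nsmul_eq_mul, mul_one]
    rw [← hn]
    have : (A.card : ℝ) - 2 * (A.card / n) * A.card + n * (A.card / n) ^ 2 =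
        A.card - (A.card : ℝ) ^ 2 / n := by
      field_simp; ring
    rw [this]
    have : 0 ≤ (A.card : ℝ) ^ 2 / n := by positivity
    linarith
  have hf2 : ‖f‖ ^ 2 = B.card := by
    rw [EuclideanSpace.norm_sq_eq]
    have : ∀ x, ‖f x‖ ^ 2 = if x ∈ B then 1 else 0 := by
      intro x; rw [hfx]; split_ifs <;> simp
    simp [this]
  have main := gow_gen D hD c hc f
  have hsum : ∀ x, ∑ g, f (g⁻¹ * x) = B.card := by
    intro x
    have h := Fintype.sum_equiv ((Equiv.inv G).trans (Equiv.mulRight x)) (fun g => f (g⁻¹ * x)) f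
      (fun g => by simp)
    rw [h]
    simp [hfx]
  have hoff : ∀ x ∉ A * B, ‖cv c f x‖ ^ 2 = (A.card * B.card / n) ^ 2 := by
    intro x hx
    have h1 : cv c f x = -(((A.card * B.card / n : ℝ)) : ℂ) := by
      rw [cv_apply]
      have h2 : ∀ g, c g * f (g⁻¹ * x) = -((A.card / n : ℝ) : ℂ) * f (g⁻¹ * x) := by
        intro g
        rw [hfx]
        by_cases hA : g ∈ A
        · have : g⁻¹ * x ∉ B := by
            intro hB
            apply hx
            have := Finset.mul_mem_mul hA hB
            simpa using this
          simp [this]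
        · simp [c, hA]
      simp only [h2, ← Finset.mul_sum, hsum]
      push_cast
      ring
    rw [h1, norm_neg, Complex.norm_real, Real.norm_eq_abs, sq_abs]
  have hge : (n - (A * B).card) * (A.card * B.card / n) ^ 2 ≤ ‖cv c f‖ ^ 2 := by
    rw [EuclideanSpace.norm_sq_eq]
    calc (n - (A * B).card) * (A.card * B.card / n) ^ 2
        = ∑ x ∈ (A * B)ᶜ, (A.card * B.card / n) ^ 2 := by
          rw [Finset.sum_const, nsmul_eq_mul, Finset.card_compl, Nat.cast_sub (Finset.card_le_univ _)]
      _ = ∑ x ∈ (A * B)ᶜ, ‖cv c f x‖ ^ 2 := by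
          apply Finset.sum_congr rfl
          intro x hx
          rw [hoff x (Finset.mem_compl.1 hx)]
      _ ≤ _ := Finset.sum_le_sum_of_subset_of_nonneg (Finset.subset_univ _)
          fun _ _ _ => by positivity
  calc _ ≤ (D : ℝ) * ‖cv c f‖ ^ 2 := by gcongr
    _ ≤ _ := main
    _ ≤ _ := by rw [hf2]; gcongr

end Gow

lemma gow_num (n a x D p : ℝ) (hn : 0 < n) (ha : 0 < a) (hp : 1 < p) (hD : p - 1 ≤ 2 * D)
    (h : D * ((n - x) * (a * a / n) ^ 2) ≤ n * a * a)
    (hbig : 4 * n ^ 2 ≤ (p - 1) * a ^ 2) : n / 2 ≤ x := by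
  by_contra hc
  push Not at hc
  have h1 : n / 2 < n - x := by linarith
  have hD0 : 0 < D := by linarith
  have h2 : D * (n / 2 * (a * a / n) ^ 2) < D * ((n - x) * (a * a / n) ^ 2) := by gcongr
  have h3 : D * (n / 2 * (a * a / n) ^ 2) = D * a ^ 2 / (2 * n) * a ^ 2 := by field_simp
  have h4 : n ≤ D * a ^ 2 / (2 * n) := by
    rw [le_div_iff₀ (by positivity)]
    nlinarith [sq_nonneg a]
  have h5 : n * a ^ 2 ≤ D * a ^ 2 / (2 * n) * a ^ 2 := by gcongr
  nlinarith

theorem quasi {p : ℕ} [Fact p.Prime] (A : Finset SL(2, ZMod p)) (hA : A.Nonempty)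
    (hbig : 4 * (Fintype.card SL(2, ZMod p) : ℝ) ^ 2 ≤ ((p : ℝ) - 1) * (A.card : ℝ) ^ 2) :
    (Fintype.card SL(2, ZMod p) : ℝ) / 2 ≤ (A * A).card := by
  have hp := (Fact.out : p.Prime).two_le
  have h := gowers (p / 2) (by
    intro E h1 h2
    have := rep_dim rr E h1 h2
    omega) A A
  refine gow_num _ (A.card) _ _ p ?_ ?_ ?_ ?_ h hbig
  · exact_mod_cast Fintype.card_pos
  · exact_mod_cast hA.card_pos
  · exact_mod_cast hp
  · have : p ≤ 2 * (p / 2) + 1 := by omega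
    have : (p : ℝ) ≤ 2 * ((p / 2 : ℕ) : ℝ) + 1 := by exact_mod_cast this
    linarith

end Helf

namespace Helf
open scoped MatrixGroups

section Sym
variable {G : Type*} [Group G] [DecidableEq G]

lemma sym_tripling (A : Finset G) (K : ℝ) (hA : ((A ^ 3).card : ℝ) ≤ K * A.card) :
    (((A ∪ A⁻¹) ^ 3).card : ℝ) ≤ 8 * K ^ 3 * A.card := by
  have H : ∀ e : Fin 3 → ℤ, (∀ i, |e i| = 1) →
      ((A ^ e 0 * A ^ e 1 * A ^ e 2).card : ℝ) ≤ K ^ 3 * A.card := by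
    intro e he
    have := Finset.small_alternating_pow_of_small_tripling (m := 3) le_rfl hA e he
    simpa [List.finRange_succ, mul_assoc] using this
  have h1 := H ![1, 1, 1] (by intro i; fin_cases i <;> simp)
  have h2 := H ![1, 1, -1] (by intro i; fin_cases i <;> simp)
  have h3 := H ![1, -1, 1] (by intro i; fin_cases i <;> simp)
  have h4 := H ![1, -1, -1] (by intro i; fin_cases i <;> simp)
  have h5 := H ![-1, 1, 1] (by intro i; fin_cases i <;> simp)
  have h6 := H ![-1, 1, -1] (by intro i; fin_cases i <;> simp)
  have h7 := H ![-1, -1, 1] (by intro i; fin_cases i <;> simp)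
  have h8 := H ![-1, -1, -1] (by intro i; fin_cases i <;> simp)
  simp at h1 h2 h3 h4 h5 h6 h7 h8
  have e : (A ∪ A⁻¹) ^ 3 = ((A * A * A ∪ A * A * A⁻¹) ∪ (A * A⁻¹ * A ∪ A * A⁻¹ * A⁻¹)) ∪
     ((A⁻¹ * A * A ∪ A⁻¹ * A * A⁻¹) ∪ (A⁻¹ * A⁻¹ * A ∪ A⁻¹ * A⁻¹ * A⁻¹)) := by
    rw [pow_succ, sq]
    simp only [Finset.union_mul, Finset.mul_union]
    ext x; simp only [Finset.mem_union]; tauto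
  rw [e]
  have hu : ∀ X Y : Finset G, ((X ∪ Y).card : ℝ) ≤ X.card + Y.card := by
    intro X Y; exact_mod_cast Finset.card_union_le X Y
  have u1 := hu (A * A * A) (A * A * A⁻¹)
  have u2 := hu (A * A⁻¹ * A) (A * A⁻¹ * A⁻¹)
  have u3 := hu (A⁻¹ * A * A) (A⁻¹ * A * A⁻¹)
  have u4 := hu (A⁻¹ * A⁻¹ * A) (A⁻¹ * A⁻¹ * A⁻¹)
  have u5 := hu (A * A * A ∪ A * A * A⁻¹) (A * A⁻¹ * A ∪ A * A⁻¹ * A⁻¹)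
  have u6 := hu (A⁻¹ * A * A ∪ A⁻¹ * A * A⁻¹) (A⁻¹ * A⁻¹ * A ∪ A⁻¹ * A⁻¹ * A⁻¹)
  have u7 := hu ((A * A * A ∪ A * A * A⁻¹) ∪ (A * A⁻¹ * A ∪ A * A⁻¹ * A⁻¹))
     ((A⁻¹ * A * A ∪ A⁻¹ * A * A⁻¹) ∪ (A⁻¹ * A⁻¹ * A ∪ A⁻¹ * A⁻¹ * A⁻¹))
  linarith

lemma one_tripling (S : Finset G) (hS : S.Nonempty) :
    (((1 ∪ S) ^ 3).card : ℝ) ≤ 4 * (S ^ 3).card := by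
  have e : (1 ∪ S) ^ 3 = (1 ∪ S) ∪ (S ^ 2 ∪ S ^ 3) := by
    rw [pow_succ, sq, pow_succ S 2, sq]
    simp only [Finset.union_mul, Finset.mul_union, one_mul, mul_one]
    ext x; simp only [Finset.mem_union]; tauto
  have a0 : (1 : Finset G).card ≤ (S ^ 3).card := by
    simpa using hS.card_pow_mono (show 0 ≤ 3 by norm_num)
  have a1 : S.card ≤ (S ^ 3).card := by
    simpa using hS.card_pow_mono (show 1 ≤ 3 by norm_num)
  have a2 : (S ^ 2).card ≤ (S ^ 3).card := hS.card_pow_mono (show 2 ≤ 3 by norm_num)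
  have u1 := Finset.card_union_le 1 S
  have u2 := Finset.card_union_le (S ^ 2) (S ^ 3)
  have u3 := Finset.card_union_le (1 ∪ S) (S ^ 2 ∪ S ^ 3)
  have : ((1 ∪ S) ^ 3).card ≤ 4 * (S ^ 3).card := by
    rw [e]; linarith
  exact_mod_cast this

end Sym

lemma num_small (t K N : ℝ) (ht : 1 ≤ t) (hK : 1 ≤ K) (h : N ≤ t ^ 40 * (t ^ 5 * K ^ 3) ^ 80) :
    N ≤ (t ^ 2 * K) ^ 1032 := by
  calc N ≤ t ^ 40 * (t ^ 5 * K ^ 3) ^ 80 := h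
    _ = t ^ 440 * K ^ 240 := by ring
    _ ≤ t ^ 2064 * K ^ 1032 := by
      have h1 : t ^ 440 ≤ t ^ 2064 := pow_le_pow_right₀ ht (by norm_num)
      have h2 : K ^ 240 ≤ K ^ 1032 := pow_le_pow_right₀ hK (by norm_num)
      gcongr
    _ = _ := by ring

lemma num_large (t K N n p : ℝ) (ht : 2 ≤ t) (hK : 1 ≤ K) (hN : 0 < N) (hp : 2 ≤ p)
    (h : n ≤ t ^ 19 * (t ^ 5 * K ^ 3) ^ 43 * (t ^ 2 * N)) (hn0 : 0 ≤ n) (hNn : N ≤ p ^ 4)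
    (hb : (p - 1) * N ^ 2 < 4 * n ^ 2) : N ≤ (t ^ 2 * K) ^ 1032 := by
  have h1 : n ≤ t ^ 236 * K ^ 129 * N := h.trans_eq (by ring)
  have h2 : (p - 1) * N ^ 2 < (t ^ 474 * K ^ 258) * N ^ 2 := by
    calc (p - 1) * N ^ 2 < 4 * n ^ 2 := hb
      _ ≤ t ^ 2 * (t ^ 236 * K ^ 129 * N) ^ 2 := by
        have : 4 ≤ t ^ 2 := by nlinarith
        gcongr
      _ = _ := by ring
  have h3 : p - 1 < t ^ 474 * K ^ 258 := lt_of_mul_lt_mul_right h2 (by positivity)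
  have h4 : p ≤ t ^ 475 * K ^ 258 := by
    have : p ≤ 2 * (p - 1) := by linarith
    calc p ≤ 2 * (p - 1) := this
      _ ≤ t * (t ^ 474 * K ^ 258) := by gcongr; linarith
      _ = _ := by ring
  calc N ≤ p ^ 4 := hNn
    _ ≤ (t ^ 475 * K ^ 258) ^ 4 := by gcongr
    _ = t ^ 1900 * K ^ 1032 := by ring
    _ ≤ t ^ 2064 * K ^ 1032 := by
      have h1 : t ^ 1900 ≤ t ^ 2064 := pow_le_pow_right₀ (by linarith) (by norm_num)
      gcongr
    _ = _ := by ring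

lemma card_upper (p : ℕ) [Fact p.Prime] : Fintype.card SL(2, ZMod p) ≤ p ^ 4 := by
  have h := Fintype.card_le_of_injective
    (fun g : SL(2, ZMod p) => (g 0 0, g 0 1, g 1 0, g 1 1)) (by
      intro g h e
      simp only [Prod.mk.injEq] at e
      exact ext4 e.1 e.2.1 e.2.2.1 e.2.2.2)
  simp only [Fintype.card_prod, ZMod.card] at h
  calc _ ≤ _ := h
    _ = _ := by ring

theorem growth (p : ℕ) [Fact p.Prime] (A : Finset SL(2, ZMod p))
    (hgen : Subgroup.closure (A : Set SL(2, ZMod p)) = ⊤) (hA : A.Nonempty) (K : ℝ)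
    (hKe : ((A ^ 3).card : ℝ) = K * A.card) (hK : 1 ≤ K) :
    (A.card : ℝ) ≤ ((2 : ℝ) ^ 2 * K) ^ 1032 ∨
      (Fintype.card SL(2, ZMod p) : ℝ) / 2 ≤ (A ^ 3).card := by
  have hN : (0 : ℝ) < A.card := by exact_mod_cast hA.card_pos
  have hNp : (A.card : ℝ) ≤ (p : ℝ) ^ 4 := by
    exact_mod_cast (Finset.card_le_univ A).trans (card_upper p)
  have hp2 := (Fact.out : p.Prime).two_le
  by_cases h2 : (2 : ZMod p) = 0
  · left
    have : p ∣ 2 := (ZMod.natCast_eq_zero_iff 2 p).1 (by exact_mod_cast h2)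
    have hp : p = 2 := le_antisymm (Nat.le_of_dvd (by norm_num) this) hp2
    have h16 : (A.card : ℝ) ≤ (2 ^ 2) ^ 2 := by
      have hp' : (p : ℝ) = 2 := by exact_mod_cast hp
      calc (A.card : ℝ) ≤ (p : ℝ) ^ 4 := hNp
        _ = (2 ^ 2) ^ 2 := by rw [hp']; norm_num
    have h4 : (2 : ℝ) ^ 2 ≤ 2 ^ 2 * K := by nlinarith
    calc (A.card : ℝ) ≤ (2 ^ 2) ^ 2 := h16
      _ ≤ (2 ^ 2 * K) ^ 2 := by gcongr
      _ ≤ (2 ^ 2 * K) ^ 1032 := pow_le_pow_right₀ (by linarith) (by norm_num)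
  by_cases hq : 4 * (Fintype.card SL(2, ZMod p) : ℝ) ^ 2 ≤ ((p : ℝ) - 1) * (A.card : ℝ) ^ 2
  · right
    refine (quasi A hA hq).trans ?_
    rw [← sq]
    exact_mod_cast hA.card_pow_mono (show 2 ≤ 3 by norm_num)
  push Not at hq
  left
  obtain ⟨S, hS⟩ : ∃ S, S = 1 ∪ (A ∪ A⁻¹) := ⟨_, rfl⟩
  have h1S : 1 ∈ S := by rw [hS]; simp
  have hAS : A ⊆ S := by
    rw [hS]; intro x hx; simp [hx]
  have hSi : S⁻¹ = S := by
    rw [hS]; ext x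
    simp only [Finset.mem_inv', Finset.mem_union, Finset.mem_one, inv_eq_one, inv_inv]
    tauto
  have hSg : Subgroup.closure (S : Set SL(2, ZMod p)) = ⊤ := by
    rw [eq_top_iff, ← hgen]
    exact Subgroup.closure_mono (by exact_mod_cast hAS)
  have hASc : (A.card : ℝ) ≤ S.card := by exact_mod_cast Finset.card_le_card hAS
  have hSc : (S.card : ℝ) ≤ 2 ^ 2 * A.card := by
    have u1 := Finset.card_union_le 1 (A ∪ A⁻¹)
    have u2 := Finset.card_union_le A A⁻¹
    rw [Finset.card_inv] at u2
    rw [Finset.card_one] at u1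
    have := hA.card_pos
    have : S.card ≤ 2 ^ 2 * A.card := by rw [hS]; omega
    exact_mod_cast this
  obtain ⟨L, hL⟩ : ∃ L : ℝ, L = 2 ^ 5 * K ^ 3 := ⟨_, rfl⟩
  have hL1 : 1 ≤ L := by
    have : 1 ≤ K ^ 3 := one_le_pow₀ hK
    rw [hL]; linarith
  have hS3 : ((S ^ 3).card : ℝ) ≤ L * S.card := by
    have h1 := sym_tripling A K hKe.le
    have h3 := one_tripling (A ∪ A⁻¹) (hA.mono Finset.subset_union_left)
    rw [← hS] at h3
    calc ((S ^ 3).card : ℝ) ≤ 4 * (8 * K ^ 3 * A.card) := by linarith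
      _ = L * A.card := by rw [hL]; ring
      _ ≤ L * S.card := by gcongr
  have hS10 : ((S ^ 10).card : ℝ) ≤ L ^ 10 * S.card := by
    have := Finset.small_pow_of_small_tripling (m := 10) (by norm_num) hS3 hSi
    refine this.trans ?_
    have : L ^ (10 - 2) ≤ L ^ 10 := pow_le_pow_right₀ hL1 (by norm_num)
    gcongr
  have hS2 : ((S ^ 2).card : ℝ) ≤ L ^ 2 * S.card := by
    have h3 : (S ^ 2).card ≤ (S ^ 3).card :=
      Finset.Nonempty.card_pow_mono ⟨1, h1S⟩ (show 2 ≤ 3 by norm_num)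
    have h3' : ((S ^ 2).card : ℝ) ≤ (S ^ 3).card := by exact_mod_cast h3
    have : L ≤ L ^ 2 := by nlinarith
    exact h3'.trans (hS3.trans (by gcongr))
  rcases main_dichotomy S h1S hSi hSg h2 L hL1 hS2 hS10 with h | h
  · rw [hL] at h
    exact num_small 2 K _ (by norm_num) hK (hASc.trans h)
  · refine num_large 2 K _ _ p le_rfl hK hN (by exact_mod_cast hp2) ?_ (Nat.cast_nonneg _) hNp hq
    rw [← hL]
    exact h.trans (by gcongr)

lemma num_final (N T K : ℝ) (m : ℕ) (hN : 0 < N) (hm : m ≠ 0) (hKe : T = K * N) (hK : 0 ≤ K)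
    (h : N ≤ ((2 : ℝ) ^ 2 * K) ^ m) : N ^ ((1 : ℝ) + (m : ℝ)⁻¹) ≤ 4 * T := by
  have h1 : N ^ ((m : ℝ)⁻¹) ≤ 2 ^ 2 * K := by
    have := Real.rpow_le_rpow hN.le h (z := (m : ℝ)⁻¹) (by positivity)
    rwa [Real.pow_rpow_inv_natCast (by positivity) hm] at this
  rw [Real.rpow_add hN, Real.rpow_one, hKe]
  calc N * N ^ ((m : ℝ)⁻¹) ≤ N * (2 ^ 2 * K) := by gcongr
    _ = _ := by ring

end Helf

theorem stmt5 :
    ∃ δ c : ℝ, 0 < δ ∧ 0 < c ∧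
      ∀ p : ℕ, p.Prime →
        ∀ A : Finset (Matrix.SpecialLinearGroup (Fin 2) (ZMod p)),
          Subgroup.closure (A : Set (Matrix.SpecialLinearGroup (Fin 2) (ZMod p))) = ⊤ →
          c * min (Nat.card (Matrix.SpecialLinearGroup (Fin 2) (ZMod p)) : ℝ)
              ((A.card : ℝ) ^ ((1 : ℝ) + δ)) ≤
            (Nat.card ((A : Set (Matrix.SpecialLinearGroup (Fin 2) (ZMod p))) *
              (A : Set (Matrix.SpecialLinearGroup (Fin 2) (ZMod p))) *
              (A : Set (Matrix.SpecialLinearGroup (Fin 2) (ZMod p))) :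
                Set (Matrix.SpecialLinearGroup (Fin 2) (ZMod p))) : ℝ) := by
  refine ⟨((1032 : ℕ) : ℝ)⁻¹, 1 / 4, by positivity, by norm_num, ?_⟩
  intro p hp A hgen
  have : Fact p.Prime := ⟨hp⟩
  classical
  have hcard : Nat.card ((A : Set (Matrix.SpecialLinearGroup (Fin 2) (ZMod p))) *
              (A : Set (Matrix.SpecialLinearGroup (Fin 2) (ZMod p))) *
              (A : Set (Matrix.SpecialLinearGroup (Fin 2) (ZMod p))) :
                Set (Matrix.SpecialLinearGroup (Fin 2) (ZMod p))) = (A ^ 3).card := by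
    rw [← Finset.coe_mul, ← Finset.coe_mul, pow_succ, sq, Nat.card_coe_set_eq,
      Set.ncard_coe_finset]
  rw [hcard, Nat.card_eq_fintype_card]
  rcases A.eq_empty_or_nonempty with rfl | hA
  · rw [Finset.card_empty, Nat.cast_zero, Real.zero_rpow (by positivity)]
    have : min (Fintype.card (Matrix.SpecialLinearGroup (Fin 2) (ZMod p)) : ℝ) 0 ≤ 0 :=
      min_le_right _ _
    have h0 : (0 : ℝ) ≤ ((∅ : Finset (Matrix.SpecialLinearGroup (Fin 2) (ZMod p))) ^ 3).card :=
      Nat.cast_nonneg _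
    linarith
  have hN : (0 : ℝ) < A.card := by exact_mod_cast hA.card_pos
  have hmono : (A.card : ℝ) ≤ (A ^ 3).card := by
    have := hA.card_pow_mono (show 1 ≤ 3 by norm_num)
    simp only [pow_one] at this
    exact_mod_cast this
  have hKe : ((A ^ 3).card : ℝ) = ((A ^ 3).card / A.card) * A.card := by field_simp
  have hK : (1 : ℝ) ≤ (A ^ 3).card / A.card := by rwa [le_div_iff₀ hN, one_mul]
  rcases Helf.growth p A hgen hA _ hKe hK with h | h
  · have h2 := Helf.num_final _ _ _ 1032 hN (by norm_num) hKe (zero_le_one.trans hK) h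
    have := min_le_right (Fintype.card (Matrix.SpecialLinearGroup (Fin 2) (ZMod p)) : ℝ)
      ((A.card : ℝ) ^ ((1 : ℝ) + ((1032 : ℕ) : ℝ)⁻¹))
    linarith
  · have := min_le_left (Fintype.card (Matrix.SpecialLinearGroup (Fin 2) (ZMod p)) : ℝ)
      ((A.card : ℝ) ^ ((1 : ℝ) + ((1032 : ℕ) : ℝ)⁻¹))
    linarith
end

section
/- For every prime p ≥ 5, every non-trivial finite-dimensional complex linear representation of SL₂(𝔽_p) has dimension at least (p−1)/2. -/
namespace SLTwo

/-- upper unipotent -/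
def uu {F : Type*} [Field F] (b : F) : Matrix.SpecialLinearGroup (Fin 2) F :=
  ⟨!![1, b; 0, 1], by simp [Matrix.det_fin_two_of]⟩

/-- lower unipotent -/
def ll {F : Type*} [Field F] (b : F) : Matrix.SpecialLinearGroup (Fin 2) F :=
  ⟨!![1, 0; b, 1], by simp [Matrix.det_fin_two_of]⟩

/-- Weyl element -/
def ww (F : Type*) [Field F] : Matrix.SpecialLinearGroup (Fin 2) F :=
  ⟨!![0, -1; 1, 0], by simp [Matrix.det_fin_two_of]⟩

/-- diagonal element -/
def dd {F : Type*} [Field F] (a : F) (ha : a ≠ 0) : Matrix.SpecialLinearGroup (Fin 2) F :=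
  ⟨!![a, 0; 0, a⁻¹], by simp [Matrix.det_fin_two_of, ha]⟩

variable {F : Type*} [Field F]

lemma mul_val (g h : Matrix.SpecialLinearGroup (Fin 2) F) : (g * h).1 = g.1 * h.1 := rfl

lemma uu_val (b : F) : (uu b).1 = !![1, b; 0, 1] := rfl

lemma ll_val (b : F) : (ll b).1 = !![1, 0; b, 1] := rfl

lemma ww_val : (ww F).1 = !![0, -1; 1, 0] := rfl

lemma dd_val (a : F) (ha : a ≠ 0) : (dd a ha).1 = !![a, 0; 0, a⁻¹] := rfl

lemma uu_add (a b : F) : uu (a + b) = uu a * uu b := by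
  apply Subtype.ext
  ext i j
  fin_cases i <;> fin_cases j <;> simp [-Matrix.SpecialLinearGroup.coe_mul, mul_val, uu_val, add_comm]

lemma uu_zero : uu (0 : F) = 1 := by
  apply Subtype.ext
  ext i j
  fin_cases i <;> fin_cases j <;> simp [uu]

lemma uu_pow (n : ℕ) : uu (1 : F) ^ n = uu (n : F) := by
  induction n with
  | zero => simp [uu_zero]
  | succ n ih => rw [pow_succ, ih, ← uu_add]; simp

lemma ww_mul (c : F) : ll c * ww F = ww F * uu (-c) := by
  apply Subtype.ext
  ext i j
  fin_cases i <;> fin_cases j <;> simp [-Matrix.SpecialLinearGroup.coe_mul, mul_val, uu_val, ll_val, ww_val]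

lemma dd_mul (a : F) (ha : a ≠ 0) (b : F) : dd a ha * uu b = uu (a ^ 2 * b) * dd a ha := by
  apply Subtype.ext
  ext i j
  fin_cases i <;> fin_cases j <;> simp [-Matrix.SpecialLinearGroup.coe_mul, mul_val, uu_val, dd_val]
  field_simp

lemma decomp (g : Matrix.SpecialLinearGroup (Fin 2) F) (hc : g.1 1 0 ≠ 0) :
    g = uu ((g.1 0 0 - 1) / g.1 1 0) * ll (g.1 1 0) * uu ((g.1 1 1 - 1) / g.1 1 0) := by
  have hd := g.2
  rw [Matrix.det_fin_two] at hd
  apply Subtype.ext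
  ext i j
  fin_cases i <;> fin_cases j <;>
    simp [-Matrix.SpecialLinearGroup.coe_mul, mul_val, uu_val, ll_val] <;> field_simp
  · ring
  · linear_combination -hd
  · ring

lemma hom_trivial {M : Type*} [Monoid M] (f : Matrix.SpecialLinearGroup (Fin 2) F →* M)
    (h : ∀ b, f (uu b) = 1) (g) : f g = 1 := by
  have hl : ∀ c, f (ll c) = 1 := by
    intro c
    have : ll c = ww F * uu (-c) * (ww F)⁻¹ := by rw [← ww_mul]; simp
    rw [this, map_mul, map_mul, h, mul_one, ← map_mul]; simp
  have h1 : ∀ g : Matrix.SpecialLinearGroup (Fin 2) F, g.1 1 0 ≠ 0 → f g = 1 := by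
    intro g hg
    rw [decomp g hg]; simp [h, hl]
  by_cases hg : g.1 1 0 = 0
  · have hd := g.2
    rw [Matrix.det_fin_two, hg] at hd
    have hne : (g * ll 1).1 1 0 ≠ 0 := by
      have : (g * ll 1).1 1 0 = g.1 1 1 := by
        simp [-Matrix.SpecialLinearGroup.coe_mul, mul_val, ll_val, Matrix.mul_apply, Fin.sum_univ_two, hg]
      rw [this]
      rintro h0
      simp [h0] at hd
    have := h1 _ hne
    rwa [map_mul, hl, mul_one] at this
  · exact h1 g hg

lemma exists_eig {V : Type*} [AddCommGroup V] [Module ℂ V] [FiniteDimensional ℂ V]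
    (T : Module.End ℂ V) (p : ℕ) (hp : p ≠ 0) (hT : T ^ p = 1) (hT1 : T ≠ 1) :
    ∃ z, T.HasEigenvalue z ∧ z ≠ 1 := by
  have : Nontrivial V := by
    by_contra hn
    rw [not_nontrivial_iff_subsingleton] at hn
    exact hT1 (LinearMap.ext fun x => Subsingleton.elim _ _)
  let q : Polynomial ℂ := ∑ i ∈ Finset.range p, Polynomial.X ^ i
  have hq : Polynomial.aeval T q * (T - 1) = 0 := by
    simp only [q, map_sum, map_pow, Polynomial.aeval_X]
    rw [geom_sum_mul, hT, sub_self]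
  have h0 : (0 : ℂ) ∈ spectrum ℂ (Polynomial.aeval T q) := by
    rw [spectrum.zero_mem_iff]
    intro hu
    rw [hu.mul_right_eq_zero] at hq
    exact hT1 (sub_eq_zero.mp hq)
  rw [spectrum.map_polynomial_aeval_of_nonempty _ _
    (spectrum.nonempty_of_isAlgClosed_of_finiteDimensional ℂ T)] at h0
  obtain ⟨z, hz, hz0⟩ := h0
  refine ⟨z, Module.End.hasEigenvalue_iff_mem_spectrum.mpr hz, ?_⟩
  rintro rfl
  simp [q, Polynomial.eval_finset_sum, hp] at hz0

end SLTwo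

open SLTwo in
theorem stmt6 (p : ℕ) (hp : p.Prime) (hp5 : 5 ≤ p)
    (V : Type*) [AddCommGroup V] [Module ℂ V] [FiniteDimensional ℂ V]
    (ρ : Representation ℂ (Matrix.SpecialLinearGroup (Fin 2) (ZMod p)) V)
    (hnontriv : ∃ g : Matrix.SpecialLinearGroup (Fin 2) (ZMod p), ρ g ≠ LinearMap.id) :
    ((p : ℝ) - 1) / 2 ≤ (Module.finrank ℂ V : ℝ) := by
  have : Fact p.Prime := ⟨hp⟩
  obtain ⟨T, hTdef⟩ : ∃ T : Module.End ℂ V, T = ρ (uu 1) := ⟨_, rfl⟩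
  have hpow : ∀ n : ℕ, T ^ n = ρ (uu (n : ZMod p)) := by
    intro n
    rw [hTdef, ← map_pow, uu_pow]
  have hTp : T ^ p = 1 := by rw [hpow]; simp [uu_zero]
  have hT1 : T ≠ 1 := by
    intro h1
    obtain ⟨g, hg⟩ := hnontriv
    apply hg
    refine hom_trivial ρ (fun b => ?_) g
    have := hpow b.val
    rw [h1, one_pow, ZMod.natCast_zmod_val] at this
    exact this.symm
  obtain ⟨z, hz, hz1⟩ := exists_eig T p hp.ne_zero hTp hT1
  obtain ⟨v, hv⟩ := hz.exists_hasEigenvector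
  have hzp : z ^ p = 1 := by
    have h := hv.pow_apply p
    rw [hTp] at h
    have h2 : (z ^ p - 1) • v = 0 := by rw [sub_smul, ← h]; simp
    rcases smul_eq_zero.mp h2 with h3 | h3
    · exact sub_eq_zero.mp h3
    · exact absurd h3 hv.2
  have hord : orderOf z = p := orderOf_eq_prime hzp hz1
  have heig : ∀ a : ℕ, ¬ p ∣ a → T.HasEigenvalue (z ^ (a ^ 2)) := by
    intro a ha
    have ha0 : (a : ZMod p) ≠ 0 := by rwa [Ne, ZMod.natCast_eq_zero_iff]
    have hc : ρ (dd (a : ZMod p) ha0) * T = T ^ (a ^ 2) * ρ (dd (a : ZMod p) ha0) := by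
      rw [hpow, hTdef, ← map_mul, ← map_mul, dd_mul]; simp
    have hinv : ρ (dd (a : ZMod p) ha0)⁻¹ * ρ (dd (a : ZMod p) ha0) = 1 := by
      rw [← map_mul]; simp
    have hinv' : ρ (dd (a : ZMod p) ha0) * ρ (dd (a : ZMod p) ha0)⁻¹ = 1 := by
      rw [← map_mul]; simp
    generalize ρ (dd (a : ZMod p) ha0) = D at hc hinv hinv'
    generalize ρ (dd (a : ZMod p) ha0)⁻¹ = E at hinv hinv'
    have hc2 : T * E = E * T ^ (a ^ 2) := by
      calc T * E = (E * D) * T * E := by rw [hinv, one_mul]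
        _ = E * (D * T) * E := by simp only [mul_assoc]
        _ = E * T ^ (a ^ 2) * (D * E) := by rw [hc]; simp only [mul_assoc]
        _ = _ := by rw [hinv', mul_one]
    apply Module.End.hasEigenvalue_of_hasEigenvector (x := E v)
    refine ⟨?_, ?_⟩
    · rw [Module.End.mem_eigenspace_iff]
      have := congrArg (fun f : Module.End ℂ V => f v) hc2
      simp only [Module.End.mul_apply] at this
      rw [this, hv.pow_apply, map_smul]
    · intro h0
      apply hv.2
      have := congrArg (fun f : Module.End ℂ V => f v) hinv'
      simpa [h0] using this.symm
  have hodd : p % 2 = 1 := hp.eq_two_or_odd.resolve_left (by omega)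
  let μ : Fin (p / 2) → ℂ := fun i => z ^ ((i.1 + 1) ^ 2)
  have hμ : Function.Injective μ := by
    intro i j hij
    have hi := i.2
    have hj := j.2
    have hfin : IsOfFinOrder z := isOfFinOrder_iff_pow_eq_one.mpr ⟨p, hp.pos, hzp⟩
    have h1 := hfin.pow_eq_pow_iff_modEq.mp
      (show z ^ ((i.1 + 1) ^ 2) = z ^ ((j.1 + 1) ^ 2) from hij)
    rw [hord] at h1
    have h2 : ((p : ℕ) : ℤ) ∣ (((j.1 + 1) ^ 2 : ℕ) : ℤ) - (((i.1 + 1) ^ 2 : ℕ) : ℤ) :=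
      (Nat.modEq_iff_dvd).mp h1
    have h3 : (p : ℤ) ∣ ((j.1 : ℤ) - i.1) * ((j.1 : ℤ) + i.1 + 2) := by
      convert h2 using 1
      push_cast; ring
    rcases (Nat.prime_iff_prime_int.mp hp).dvd_or_dvd h3 with h | h
    · have := Int.eq_zero_of_abs_lt_dvd h (by rw [abs_lt]; constructor <;> omega)
      apply Fin.ext; omega
    · have := Int.le_of_dvd (by omega) h
      omega
  have hex : ∀ i, ∃ x, T.HasEigenvector (μ i) x := fun i =>
    (heig (i.1 + 1) (fun h => by
      have := Nat.le_of_dvd (by omega) h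
      have := i.2
      omega)).exists_hasEigenvector
  choose x hx using hex
  have hli := Module.End.eigenvectors_linearIndependent' T μ hμ x hx
  have hcard := hli.fintype_card_le_finrank
  rw [Fintype.card_fin] at hcard
  have h1 : p ≤ 2 * Module.finrank ℂ V + 1 := by omega
  have h2 : (p : ℝ) ≤ 2 * Module.finrank ℂ V + 1 := by exact_mod_cast h1
  linarith
end

section
/- Fix an integer k ≥ 1. The number of integers 2 ≤ n ≤ X with Ω(n) = k is asymptotic, as X → ∞, to (1/(k−1)!) · X (log log X)^{k−1} / (log X). -/
section
open MeasureTheory Filter Topology Complex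

noncomputable def aFun (u : ℝ) : ℝ := Chebyshev.psi (Real.exp u) / Real.exp u

noncomputable def HFun (s : ℂ) : ℂ :=
  (ArithmeticFunction.vonMangoldt.LFunctionResidueClassAux (1 : ZMod 1) (1 + s) - 1) / (1 + s)

lemma HFun_cont : ContinuousOn HFun {s | 0 ≤ s.re} := by
  unfold HFun
  refine ContinuousOn.div ?_ (by fun_prop) ?_
  · refine ContinuousOn.sub ?_ continuousOn_const
    refine (ArithmeticFunction.vonMangoldt.continuousOn_LFunctionResidueClassAux (1 : ZMod 1)).comp
      (by fun_prop) ?_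
    intro s hs
    simp at hs ⊢
    exact hs
  · intro s hs h
    have := congrArg Complex.re h
    simp at this hs
    linarith

lemma aFun_nonneg (u : ℝ) : 0 ≤ aFun u :=
  div_nonneg (Chebyshev.psi_nonneg _) (Real.exp_pos _).le

lemma aFun_le (u : ℝ) : aFun u ≤ Real.log 4 + 4 := by
  unfold aFun
  rw [div_le_iff₀ (Real.exp_pos _)]
  exact Chebyshev.psi_le_const_mul_self (Real.exp_pos _).le

lemma aFun_meas : Measurable aFun := by
  unfold aFun
  exact (Chebyshev.psi_mono.measurable.comp Real.measurable_exp).div Real.measurable_exp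

lemma LSeries_eq (s : ℂ) (hs : 1 < s.re) :
    LSeries (fun n => (ArithmeticFunction.vonMangoldt n : ℂ)) s =
      s * ∫ t in Set.Ioi (1 : ℝ), (Chebyshev.psi t : ℂ) * t ^ (-(s + 1)) := by
  rw [LSeries_eq_mul_integral_of_nonneg (fun n => ArithmeticFunction.vonMangoldt n)
    (r := 1) zero_le_one hs ?_ (fun n => ArithmeticFunction.vonMangoldt_nonneg)]
  · congr 1
    refine setIntegral_congr_fun measurableSet_Ioi fun t ht => ?_
    congr 1
    rw [Chebyshev.psi]
    push_cast
    rfl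
  · refine Asymptotics.IsBigO.of_bound (Real.log 4 + 4) (Eventually.of_forall fun n => ?_)
    have h := Chebyshev.psi_le_const_mul_self (x := n) n.cast_nonneg
    have h0 := Chebyshev.psi_nonneg n
    have e : ∑ k ∈ Finset.Icc 1 n, ArithmeticFunction.vonMangoldt k = Chebyshev.psi n := by
      rw [Chebyshev.psi, Nat.floor_natCast]
      rfl
    rw [e, Real.norm_of_nonneg h0, Real.rpow_one, Real.norm_of_nonneg n.cast_nonneg]
    exact h

lemma laplace_integrable (s : ℂ) (hs : 0 < s.re) (f : ℝ → ℝ) (hf : Measurable f) (C : ℝ)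
    (hC : ∀ u, |f u| ≤ C) :
    IntegrableOn (fun u : ℝ => (f u : ℂ) * cexp (-s * u)) (Set.Ioi 0) := by
  refine Integrable.bdd_mul (c := C) (integrableOn_exp_mul_complex_Ioi (by simpa using hs) 0) ?_ ?_
  · exact (Complex.measurable_ofReal.comp hf).aestronglyMeasurable
  · exact Eventually.of_forall fun u => by simpa using hC u

lemma laplace (s : ℂ) (hs : 0 < s.re) :
    ∫ u in Set.Ioi (0 : ℝ), ((aFun u - 1 : ℝ) : ℂ) * cexp (-s * u) = HFun s := by
  have hs' : 1 < (1 + s).re := by simpa using hs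
  have h1 : (1 + s) ≠ 0 := by
    intro h
    have := congrArg Complex.re h
    simp at this
    linarith
  have h2 : s ≠ 0 := by
    intro h
    simp [h] at hs
  have hA : ∫ u in Set.Ioi (0 : ℝ), (aFun u : ℂ) * cexp (-s * u) =
      LSeries (fun n => (ArithmeticFunction.vonMangoldt n : ℂ)) (1 + s) / (1 + s) := by
    rw [LSeries_eq _ hs', mul_div_cancel_left₀ _ h1]
    have := integral_comp_exp_Ioi
      (fun t : ℝ => (Chebyshev.psi t : ℂ) * t ^ (-((1 + s) + 1))) 0
    rw [Real.exp_zero] at this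
    rw [← this]
    refine setIntegral_congr_fun measurableSet_Ioi fun u hu => ?_
    simp only [aFun, real_smul]
    rw [cpow_def_of_ne_zero (by exact_mod_cast (Real.exp_pos u).ne'), ← ofReal_log
      (Real.exp_pos u).le, Real.log_exp, ofReal_div, ofReal_exp, div_mul_eq_mul_div, mul_div_assoc,
      ← Complex.exp_sub, mul_left_comm, ← Complex.exp_add]
    congr 2
    ring
  have hB : ∫ u in Set.Ioi (0 : ℝ), cexp (-s * u) = 1 / s := by
    rw [integral_exp_mul_complex_Ioi (by simpa using hs)]
    simp
  have hA' := laplace_integrable s hs aFun aFun_meas (Real.log 4 + 4) (fun u => by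
    rw [abs_of_nonneg (aFun_nonneg u)]; exact aFun_le u)
  have hB' : IntegrableOn (fun u : ℝ => cexp (-s * u)) (Set.Ioi 0) :=
    integrableOn_exp_mul_complex_Ioi (by simpa using hs) 0
  have : ∀ u : ℝ, ((aFun u - 1 : ℝ) : ℂ) * cexp (-s * u) =
      (aFun u : ℂ) * cexp (-s * u) - cexp (-s * u) := fun u => by push_cast; ring
  simp_rw [this]
  rw [integral_sub hA' hB', hA, hB, HFun,
    ArithmeticFunction.vonMangoldt.eqOn_LFunctionResidueClassAux isUnit_one hs']
  have e : (fun n : ℕ => ((ArithmeticFunction.vonMangoldt.residueClass (1 : ZMod 1) n : ℝ) : ℂ)) =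
      (fun n : ℕ => (ArithmeticFunction.vonMangoldt n : ℂ)) := by
    funext n
    simp [ArithmeticFunction.vonMangoldt.residueClass, Set.indicator, Subsingleton.elim (n : ZMod 1) 1]
  simp only [e]
  simp
  field_simp
  ring

noncomputable def wFun (t : ℝ) : ℝ := max 0 (1 - |t|)

noncomputable def kFun (y : ℝ) : ℝ := 2 * (1 - Real.cos y) / y ^ 2

lemma wFun_cont : Continuous wFun := by unfold wFun; fun_prop

lemma wFun_nonneg (t : ℝ) : 0 ≤ wFun t := le_max_left _ _

lemma wFun_eq_zero {t : ℝ} (ht : 1 ≤ |t|) : wFun t = 0 := by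
  unfold wFun; exact max_eq_left (by linarith)

lemma wFun_int : Integrable wFun := by
  refine wFun_cont.integrable_of_hasCompactSupport ?_
  refine HasCompactSupport.intro (K := Set.Icc (-1) 1) isCompact_Icc fun t ht => wFun_eq_zero ?_
  by_contra h
  exact ht (abs_le.mp (not_le.mp h).le)

lemma kFun_nonneg (y : ℝ) : 0 ≤ kFun y := by
  unfold kFun
  have := Real.cos_le_one y
  exact div_nonneg (by linarith) (sq_nonneg _)

lemma kFun_meas : Measurable kFun := by unfold kFun; fun_prop

lemma kFun_le (y : ℝ) : kFun y ≤ 5 * (1 + y ^ 2)⁻¹ := by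
  unfold kFun
  rcases eq_or_ne y 0 with rfl | hy
  · simp
  have hy2 : 0 < y ^ 2 := by positivity
  rw [← div_eq_mul_inv, div_le_div_iff₀ hy2 (by positivity)]
  have h1 := Real.one_sub_sq_div_two_le_cos (x := y)
  have h2 := Real.neg_one_le_cos y
  nlinarith

lemma kFun_int : Integrable kFun := by
  refine Integrable.mono' (integrable_inv_one_add_sq.const_mul 5)
    kFun_meas.aestronglyMeasurable (Eventually.of_forall fun y => ?_)
  rw [Real.norm_of_nonneg (kFun_nonneg y)]
  exact kFun_le y

lemma kFun_eq (y : ℝ) (hy : y ≠ 0) :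
    ∫ t : ℝ, (wFun t : ℂ) * cexp (-I * t * y) = (kFun y : ℂ) := by
  have hc : Continuous (fun t : ℝ => (wFun t : ℂ) * cexp (-I * t * y)) := by
    have := wFun_cont
    fun_prop
  have e : ∫ t : ℝ, (wFun t : ℂ) * cexp (-I * t * y) =
      ∫ t in (-1 : ℝ)..1, (wFun t : ℂ) * cexp (-I * t * y) := by
    rw [intervalIntegral.integral_of_le (by norm_num)]
    symm
    refine setIntegral_eq_integral_of_forall_compl_eq_zero fun t ht => ?_
    rw [wFun_eq_zero]
    · simp
    · by_contra h
      have := abs_lt.mp (not_le.mp h)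
      exact ht ⟨this.1, this.2.le⟩
  have hyc : (y : ℂ) ≠ 0 := by exact_mod_cast hy
  have hIy : -I * y ≠ 0 := mul_ne_zero (neg_ne_zero.mpr I_ne_zero) hyc
  rw [e, ← intervalIntegral.integral_add_adjacent_intervals (b := 0)
    (hc.intervalIntegrable _ _) (hc.intervalIntegrable _ _)]
  have key : ∀ (c : ℂ) (t : ℝ), HasDerivAt (fun t : ℝ =>
      (1 + c * t) * cexp (-I * t * y) / (-I * y) - c * cexp (-I * t * y) / (-I * y) ^ 2)
      ((1 + c * t) * cexp (-I * t * y)) t := by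
    intro c t
    have h0 : HasDerivAt (fun t : ℝ => (t : ℂ)) 1 t := Complex.ofRealCLM.hasDerivAt
    have h1 : HasDerivAt (fun t : ℝ => cexp (-I * t * y)) (cexp (-I * t * y) * (-I * 1 * y)) t :=
      ((h0.const_mul (-I)).mul_const (y : ℂ)).cexp
    have h2 : HasDerivAt (fun t : ℝ => (1 + c * t : ℂ)) (c * 1) t := (h0.const_mul c).const_add 1
    refine HasDerivAt.congr_deriv
      (((h2.mul h1).div_const (-I * y)).sub ((h1.const_mul c).div_const ((-I * y) ^ 2))) ?_
    field_simp
    ring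
  have i1 : ∫ t in (-1 : ℝ)..0, (wFun t : ℂ) * cexp (-I * t * y) =
      ∫ t in (-1 : ℝ)..0, (1 + 1 * t) * cexp (-I * t * y) := by
    refine intervalIntegral.integral_congr fun t ht => ?_
    rw [Set.uIcc_of_le (by norm_num)] at ht
    simp only [wFun, abs_of_nonpos ht.2]
    rw [max_eq_right (by linarith [ht.1])]
    push_cast
    ring
  have i2 : ∫ t in (0 : ℝ)..1, (wFun t : ℂ) * cexp (-I * t * y) =
      ∫ t in (0 : ℝ)..1, (1 + (-1) * t) * cexp (-I * t * y) := by
    refine intervalIntegral.integral_congr fun t ht => ?_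
    rw [Set.uIcc_of_le (by norm_num)] at ht
    simp only [wFun, abs_of_nonneg ht.1]
    rw [max_eq_right (by linarith [ht.2])]
    push_cast
    ring
  rw [i1, i2, intervalIntegral.integral_eq_sub_of_hasDerivAt (fun t _ => key 1 t)
      (Continuous.intervalIntegrable (by fun_prop) _ _),
    intervalIntegral.integral_eq_sub_of_hasDerivAt (fun t _ => key (-1) t)
      (Continuous.intervalIntegrable (by fun_prop) _ _)]
  have hcos : ((Real.cos y : ℝ) : ℂ) = (cexp (I * y) + cexp (-I * y)) / 2 := by
    rw [ofReal_cos, Complex.cos]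
    congr 3 <;> ring_nf
  rw [kFun]
  push_cast [hcos]
  simp only [mul_zero, zero_mul, Complex.exp_zero]
  have hI2 : (-I * (y : ℂ)) ^ 2 = - (y : ℂ) ^ 2 := by
    rw [mul_pow, neg_sq, I_sq]; ring
  rw [hI2]
  field_simp
  ring_nf

noncomputable def fFun (u : ℝ) : ℝ := aFun u - 1

lemma fFun_meas : Measurable fFun := aFun_meas.sub_const 1

lemma fFun_bdd (u : ℝ) : |fFun u| ≤ Real.log 4 + 4 := by
  have h1 := aFun_nonneg u
  have h2 := aFun_le u
  have h3 : 0 ≤ Real.log 4 := Real.log_nonneg (by norm_num)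
  unfold fFun
  rw [abs_le]
  constructor <;> linarith

lemma fubini_id (ε l x : ℝ) (hε : 0 < ε) (hl : 0 < l) :
    ∫ u in Set.Ioi (0 : ℝ), (fFun u : ℂ) * cexp (-ε * u) * (kFun (l * (u - x)) : ℂ) =
      ∫ t : ℝ, (wFun t : ℂ) * cexp (I * t * l * x) * HFun (ε + I * l * t) := by
  have e1 : ∫ u in Set.Ioi (0 : ℝ), (fFun u : ℂ) * cexp (-ε * u) * (kFun (l * (u - x)) : ℂ) =
      ∫ u in Set.Ioi (0 : ℝ), ∫ t : ℝ, ((fFun u : ℂ) * cexp (-ε * u)) * (wFun t : ℂ) *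
        cexp (-I * t * (l * (u - x))) := by
    refine integral_congr_ae ?_
    have : ∀ᵐ u : ℝ ∂(volume.restrict (Set.Ioi 0)), u ≠ x := by
      refine ae_restrict_of_ae ?_
      exact Measure.ae_ne volume x
    filter_upwards [this] with u hu
    rw [← kFun_eq _ (mul_ne_zero hl.ne' (sub_ne_zero.mpr hu)), ← integral_const_mul]
    congr 1
    funext t
    push_cast
    ring
  have e2 : ∀ t : ℝ, (wFun t : ℂ) * cexp (I * t * l * x) * HFun (ε + I * l * t) =
      ∫ u in Set.Ioi (0 : ℝ), ((fFun u : ℂ) * cexp (-ε * u)) * (wFun t : ℂ) *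
        cexp (-I * t * (l * (u - x))) := by
    intro t
    rw [← laplace _ (by simpa using hε), ← integral_const_mul]
    congr 1
    funext u
    rw [← fFun]
    have : cexp (-I * t * (l * (u - x))) = cexp (I * t * l * x) * cexp (-(I * l * t) * u) := by
      rw [← Complex.exp_add]; congr 1; ring
    have h2 : cexp (-(ε + I * l * t) * u) = cexp (-ε * u) * cexp (-(I * l * t) * u) := by
      rw [← Complex.exp_add]; congr 1; ring
    rw [this, h2]
    ring
  simp_rw [e2]
  rw [e1]
  refine integral_integral_swap ?_
  have hg := laplace_integrable (ε : ℂ) (by simpa using hε) fFun fFun_meas _ fFun_bdd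
  have hw : Integrable (fun t => (wFun t : ℂ)) := wFun_int.ofReal
  have hp := hg.mul_prod hw
  refine Integrable.mul_bdd (c := 1) hp ?_ ?_
  · refine Continuous.aestronglyMeasurable ?_
    fun_prop
  · refine Eventually.of_forall fun z => ?_
    have : -I * (z.2 : ℂ) * (l * (z.1 - x)) = ((-(z.2 * (l * (z.1 - x))) : ℝ) : ℂ) * I := by
      push_cast; ring
    rw [this, Complex.norm_exp_ofReal_mul_I]

lemma limit_id (l x : ℝ) (hl : 0 < l) :
    ∫ u in Set.Ioi (0 : ℝ), (fFun u : ℂ) * (kFun (l * (u - x)) : ℂ) =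
      ∫ t : ℝ, (wFun t : ℂ) * cexp (I * t * l * x) * HFun (I * l * t) := by
  have hk : Integrable (fun u : ℝ => kFun (l * (u - x))) :=
    (kFun_int.comp_mul_left' hl.ne').comp_sub_right x
  have T1 : Tendsto (fun ε : ℝ => ∫ u in Set.Ioi (0 : ℝ), (fFun u : ℂ) * cexp (-ε * u) *
      (kFun (l * (u - x)) : ℂ)) (𝓝[>] 0)
      (𝓝 (∫ u in Set.Ioi (0 : ℝ), (fFun u : ℂ) * (kFun (l * (u - x)) : ℂ))) := by
    refine tendsto_integral_filter_of_dominated_convergence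
      (fun u => (Real.log 4 + 4) * kFun (l * (u - x))) ?_ ?_ ?_ ?_
    · refine Eventually.of_forall fun ε => ?_
      refine Measurable.aestronglyMeasurable ?_
      have h1 := fFun_meas
      have h2 := kFun_meas
      fun_prop
    · filter_upwards [self_mem_nhdsWithin] with ε hε
      refine (ae_restrict_iff' measurableSet_Ioi).mpr (Eventually.of_forall fun u hu => ?_)
      have hε' : 0 < ε := hε
      have hu' : 0 < u := hu
      rw [norm_mul, norm_mul, norm_real, norm_real, Real.norm_of_nonneg (kFun_nonneg _),
        Complex.norm_exp]
      refine mul_le_mul_of_nonneg_right ?_ (kFun_nonneg _)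
      have : Real.exp (-(ε : ℂ) * u).re ≤ 1 := by
        rw [Real.exp_le_one_iff]
        simp
        positivity
      calc ‖fFun u‖ * Real.exp (-(ε : ℂ) * u).re ≤ ‖fFun u‖ * 1 := by gcongr
        _ ≤ _ := by rw [mul_one]; exact fFun_bdd u
    · exact (hk.const_mul _).integrableOn
    · refine Eventually.of_forall fun u => ?_
      have : Tendsto (fun ε : ℝ => (fFun u : ℂ) * cexp (-ε * u) *
        (kFun (l * (u - x)) : ℂ)) (𝓝 0) (𝓝 ((fFun u : ℂ) * cexp (-(0 : ℝ) * u) *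
        (kFun (l * (u - x)) : ℂ))) := Continuous.tendsto (by fun_prop) 0
      simp only [ofReal_zero, neg_zero, zero_mul, Complex.exp_zero, mul_one] at this
      exact this.mono_left nhdsWithin_le_nhds
  have T2 : Tendsto (fun ε : ℝ => ∫ t : ℝ, (wFun t : ℂ) * cexp (I * t * l * x) *
      HFun (ε + I * l * t)) (𝓝[>] 0)
      (𝓝 (∫ t : ℝ, (wFun t : ℂ) * cexp (I * t * l * x) * HFun (I * l * t))) := by
    have hcomp : IsCompact ((fun z : ℝ × ℝ => (z.1 + I * l * z.2 : ℂ)) ''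
        (Set.Icc 0 1 ×ˢ Set.Icc (-1) 1)) :=
      (isCompact_Icc.prod isCompact_Icc).image (by fun_prop)
    obtain ⟨M, hM⟩ := hcomp.exists_bound_of_continuousOn (f := HFun) (HFun_cont.mono (by
      rintro _ ⟨z, hz, rfl⟩
      simpa using hz.1.1))
    have hHc : ∀ ε : ℝ, 0 ≤ ε → Continuous (fun t : ℝ => HFun (ε + I * l * t)) := by
      intro ε hε
      exact HFun_cont.comp_continuous (by fun_prop) (fun t => by simpa using hε)
    refine tendsto_integral_filter_of_dominated_convergence (fun t => wFun t * M) ?_ ?_ ?_ ?_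
    · filter_upwards [self_mem_nhdsWithin] with ε hε
      have h1 := hHc ε (le_of_lt hε)
      have h2 := wFun_cont
      exact Continuous.aestronglyMeasurable (by fun_prop)
    · have : ∀ᶠ ε : ℝ in 𝓝[>] 0, ε ∈ Set.Ioo (0 : ℝ) 1 := Ioo_mem_nhdsGT one_pos
      filter_upwards [this] with ε hε
      refine Eventually.of_forall fun t => ?_
      have e : I * (t : ℂ) * l * x = ((t * l * x : ℝ) : ℂ) * I := by push_cast; ring
      rw [norm_mul, norm_mul, e, Complex.norm_exp_ofReal_mul_I, norm_real, mul_one,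
        Real.norm_of_nonneg (wFun_nonneg t)]
      rcases le_or_gt 1 |t| with h | h
      · simp [wFun_eq_zero h]
      · refine mul_le_mul_of_nonneg_left (hM _ ⟨(ε, t), ⟨⟨hε.1.le, hε.2.le⟩, abs_le.mp h.le⟩, rfl⟩)
          (wFun_nonneg t)
    · exact wFun_int.mul_const M
    · refine Eventually.of_forall fun t => ?_
      refine Tendsto.mul tendsto_const_nhds ?_
      have h0 := HFun_cont (I * l * t) (by simp)
      refine h0.tendsto.comp (tendsto_nhdsWithin_iff.mpr ⟨?_, ?_⟩)
      · have : Tendsto (fun ε : ℝ => (ε + I * l * t : ℂ)) (𝓝 0) (𝓝 (((0 : ℝ) : ℂ) + I * l * t)) :=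
          Continuous.tendsto (by fun_prop) 0
        rw [ofReal_zero, zero_add] at this
        exact this.mono_left nhdsWithin_le_nhds
      · filter_upwards [self_mem_nhdsWithin] with ε hε
        simpa using le_of_lt hε
  refine tendsto_nhds_unique T1 (T2.congr' ?_)
  filter_upwards [self_mem_nhdsWithin] with ε hε
  exact (fubini_id ε l x hε hl).symm

lemma RL_lim (l : ℝ) (hl : 0 < l) :
    Tendsto (fun x : ℝ => ∫ u in Set.Ioi (0 : ℝ), (fFun u) * (kFun (l * (u - x)))) atTop (𝓝 0) := by
  have h := Real.tendsto_integral_exp_smul_cocompact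
    (fun t : ℝ => (wFun t : ℂ) * HFun (I * l * t))
  have hx : Tendsto (fun x : ℝ => -(l * x) / (2 * Real.pi)) atTop (cocompact ℝ) := by
    refine Tendsto.mono_right ?_ atBot_le_cocompact
    refine Tendsto.atBot_div_const (by positivity) ?_
    exact tendsto_neg_atTop_atBot.comp (tendsto_id.const_mul_atTop hl)
  have h2 := h.comp hx
  have h3 : Tendsto (fun x : ℝ => ∫ u in Set.Ioi (0 : ℝ), (fFun u : ℂ) * (kFun (l * (u - x)) : ℂ))
      atTop (𝓝 0) := by
    refine h2.congr fun x => ?_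
    rw [limit_id l x hl]
    simp only [Function.comp]
    congr 1
    funext t
    rw [Circle.smul_def, Real.fourierChar_apply, smul_eq_mul]
    have : ((2 * Real.pi * -(t * (-(l * x) / (2 * Real.pi))) : ℝ) : ℂ) * I = I * t * l * x := by
      have hpi : (Real.pi : ℂ) ≠ 0 := by exact_mod_cast Real.pi_ne_zero
      push_cast
      field_simp
    rw [this]
    ring
  have h4 := (Complex.continuous_re.tendsto 0).comp h3
  simp only [zero_re] at h4
  refine h4.congr fun x => ?_
  simp only [Function.comp]
  rw [← ofReal_re (∫ u in Set.Ioi (0 : ℝ), (fFun u) * (kFun (l * (u - x)))), ← integral_complex_ofReal]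
  congr 2
  funext u
  push_cast
  rfl

noncomputable def mK : ℝ := ∫ y, kFun y

lemma aFun_zero {u : ℝ} (hu : u ≤ 0) : aFun u = 0 := by
  unfold aFun
  rw [Chebyshev.psi_eq_zero_of_le_one (Real.exp_le_one_iff.mpr hu), zero_div]

lemma ak_int (l x : ℝ) : Integrable (fun y => aFun (x + y / l) * kFun y) := by
  refine Integrable.bdd_mul (c := Real.log 4 + 4) kFun_int ?_ ?_
  · have := aFun_meas
    exact Measurable.aestronglyMeasurable (by fun_prop)
  · refine Eventually.of_forall fun y => ?_
    rw [Real.norm_of_nonneg (aFun_nonneg _)]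
    exact aFun_le _

lemma scale_int (l x : ℝ) (hl : 0 < l) (F : ℝ → ℝ) :
    ∫ u, F (l * (u - x)) = l⁻¹ * ∫ y, F y := by
  rw [integral_sub_right_eq_self (fun u => F (l * u)) x, Measure.integral_comp_mul_left,
    abs_of_pos (inv_pos.mpr hl), smul_eq_mul]

lemma smooth_lim (l : ℝ) (hl : 0 < l) :
    Tendsto (fun x : ℝ => ∫ y, aFun (x + y / l) * kFun y) atTop (𝓝 mK) := by
  have h1 : Tendsto (fun x : ℝ => ∫ y, (Set.Ioi (-(l * x))).indicator kFun y) atTop (𝓝 mK) := by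
    refine tendsto_integral_filter_of_dominated_convergence kFun ?_ ?_ kFun_int ?_
    · exact Eventually.of_forall fun x =>
        (kFun_meas.indicator measurableSet_Ioi).aestronglyMeasurable
    · refine Eventually.of_forall fun x => Eventually.of_forall fun y => ?_
      refine (norm_indicator_le_norm_self _ _).trans ?_
      rw [Real.norm_of_nonneg (kFun_nonneg y)]
    · refine Eventually.of_forall fun y => ?_
      refine tendsto_const_nhds.congr' ?_
      have : Tendsto (fun x : ℝ => l * x) atTop atTop := tendsto_id.const_mul_atTop hl
      filter_upwards [this.eventually_gt_atTop (-y)] with x hx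
      rw [Set.indicator_of_mem]
      simp only [Set.mem_Ioi]
      linarith
  have h2 := ((RL_lim l hl).const_mul l).add h1
  rw [mul_zero, zero_add] at h2
  refine h2.congr fun x => ?_
  have e1 : ∫ u in Set.Ioi (0 : ℝ), (fFun u) * (kFun (l * (u - x))) =
      (∫ u, aFun u * kFun (l * (u - x))) - ∫ u in Set.Ioi (0 : ℝ), kFun (l * (u - x)) := by
    have hk : Integrable (fun u : ℝ => kFun (l * (u - x))) :=
      (kFun_int.comp_mul_left' hl.ne').comp_sub_right x
    have hak : Integrable (fun u : ℝ => aFun u * kFun (l * (u - x))) := by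
      refine Integrable.bdd_mul (c := Real.log 4 + 4) hk aFun_meas.aestronglyMeasurable ?_
      refine Eventually.of_forall fun y => ?_
      rw [Real.norm_of_nonneg (aFun_nonneg _)]
      exact aFun_le _
    have : ∫ u, aFun u * kFun (l * (u - x)) =
        ∫ u in Set.Ioi (0 : ℝ), aFun u * kFun (l * (u - x)) := by
      symm
      refine setIntegral_eq_integral_of_forall_compl_eq_zero fun t ht => ?_
      rw [aFun_zero (by simpa using ht), zero_mul]
    rw [this, ← integral_sub hak.integrableOn hk.integrableOn]
    congr 1
    funext u
    rw [fFun]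
    ring
  have e2 : ∫ u, aFun u * kFun (l * (u - x)) = l⁻¹ * ∫ y, aFun (x + y / l) * kFun y := by
    rw [← scale_int l x hl]
    congr 1
    funext u
    congr 2
    field_simp
    ring
  have e3 : ∫ u in Set.Ioi (0 : ℝ), kFun (l * (u - x)) =
      l⁻¹ * ∫ y, (Set.Ioi (-(l * x))).indicator kFun y := by
    rw [← scale_int l x hl, ← integral_indicator measurableSet_Ioi]
    congr 1
    funext u
    simp only [Set.indicator, Set.mem_Ioi]
    have : (0 < u) ↔ (-(l * x) < l * (u - x)) := by
      rw [mul_sub, neg_lt_sub_iff_lt_add]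
      constructor
      · intro h; have := mul_pos hl h; linarith
      · intro h; by_contra h'; nlinarith
    simp only [this]
  rw [e1, e2, e3]
  field_simp
  ring

lemma mK_pos : 0 < mK := by
  unfold mK
  rw [integral_pos_iff_support_of_nonneg kFun_nonneg kFun_int]
  refine lt_of_lt_of_le ?_ (measure_mono (s := Set.Ioo 1 2) ?_)
  · simp
  · intro y hy
    rw [Function.mem_support, kFun]
    have h1 : Real.cos y < 1 := by
      rw [← Real.cos_zero]
      exact Real.cos_lt_cos_of_nonneg_of_le_pi le_rfl
        (by linarith [hy.2, Real.pi_gt_three]) (by linarith [hy.1])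
    have h2 := hy.1
    refine div_ne_zero (by linarith) (by positivity)

lemma aFun_slow {u v : ℝ} (h : u ≤ v) : aFun u ≤ aFun v * Real.exp (v - u) := by
  unfold aFun
  rw [Real.exp_sub, div_mul_div_comm, mul_comm (Real.exp v), mul_div_mul_right _ _
    (Real.exp_pos v).ne']
  exact div_le_div_of_nonneg_right (Chebyshev.psi_mono (Real.exp_le_exp.mpr h)) (Real.exp_pos u).le

noncomputable def mR (R : ℝ) : ℝ := ∫ y in Set.Icc (-R) R, kFun y

lemma mR_lim : Tendsto mR atTop (𝓝 mK) := by
  unfold mR mK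
  have := (aecover_Icc (μ := volume) tendsto_neg_atTop_atBot
    (tendsto_id (α := ℝ) (x := atTop))).integral_tendsto_of_countably_generated kFun_int
  exact this

lemma upper (h R x : ℝ) (hh : 0 < h) (hR : 0 < R) :
    aFun (x - h) * Real.exp (-(2 * h)) * mR R ≤ ∫ y, aFun (x + y / (R / h)) * kFun y := by
  unfold mR
  rw [← integral_const_mul]
  refine le_trans ?_ (setIntegral_le_integral (s := Set.Icc (-R) R) (ak_int _ _)
    (Eventually.of_forall fun y => mul_nonneg (aFun_nonneg _) (kFun_nonneg _)))
  refine setIntegral_mono_on (kFun_int.integrableOn.const_mul _) (ak_int _ _).integrableOn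
    measurableSet_Icc fun y hy => ?_
  refine mul_le_mul_of_nonneg_right ?_ (kFun_nonneg _)
  have h1 : -h ≤ y / (R / h) := by
    rw [le_div_iff₀ (by positivity)]; field_simp; linarith [hy.1]
  have h2 : y / (R / h) ≤ h := by
    rw [div_le_iff₀ (by positivity)]; field_simp; linarith [hy.2]
  have h3 := aFun_slow (u := x - h) (v := x + y / (R / h)) (by linarith)
  rw [Real.exp_neg, ← div_eq_mul_inv, div_le_iff₀ (Real.exp_pos _)]
  refine h3.trans (mul_le_mul_of_nonneg_left (Real.exp_le_exp.mpr (by linarith)) (aFun_nonneg _))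

lemma lower (h R x : ℝ) (hh : 0 < h) (hR : 0 < R) :
    ∫ y, aFun (x + y / (R / h)) * kFun y ≤
      aFun (x + h) * Real.exp (2 * h) * mK + (Real.log 4 + 4) * (mK - mR R) := by
  rw [← integral_add_compl measurableSet_Icc (ak_int _ _) (s := Set.Icc (-R) R)]
  refine add_le_add ?_ ?_
  · unfold mK
    rw [← integral_const_mul]
    refine le_trans ?_ (setIntegral_le_integral (s := Set.Icc (-R) R) (kFun_int.const_mul _)
      (Eventually.of_forall fun y => mul_nonneg (mul_nonneg (aFun_nonneg _) (Real.exp_pos _).le)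
        (kFun_nonneg _)))
    refine setIntegral_mono_on (ak_int _ _).integrableOn (kFun_int.integrableOn.const_mul _)
      measurableSet_Icc fun y hy => ?_
    refine mul_le_mul_of_nonneg_right ?_ (kFun_nonneg _)
    have h1 : -h ≤ y / (R / h) := by
      rw [le_div_iff₀ (by positivity)]; field_simp; linarith [hy.1]
    have h2 : y / (R / h) ≤ h := by
      rw [div_le_iff₀ (by positivity)]; field_simp; linarith [hy.2]
    refine (aFun_slow (u := x + y / (R / h)) (v := x + h) (by linarith)).trans
      (mul_le_mul_of_nonneg_left (Real.exp_le_exp.mpr (by linarith)) (aFun_nonneg _))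
  · have : mK - mR R = ∫ y in (Set.Icc (-R) R)ᶜ, kFun y := by
      rw [mK, mR, ← integral_add_compl measurableSet_Icc kFun_int (s := Set.Icc (-R) R)]
      ring
    rw [this, ← integral_const_mul]
    refine setIntegral_mono_on (ak_int _ _).integrableOn (kFun_int.integrableOn.const_mul _)
      measurableSet_Icc.compl fun y hy => ?_
    exact mul_le_mul_of_nonneg_right (aFun_le _) (kFun_nonneg _)

lemma aFun_lim : Tendsto aFun atTop (𝓝 1) := by
  have hm := mK_pos
  have hinv : Tendsto (fun h : ℝ => mR h⁻¹) (𝓝[>] 0) (𝓝 mK) := mR_lim.comp tendsto_inv_nhdsGT_zero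
  rw [tendsto_order]
  constructor
  · intro b hb
    have hl : Tendsto (fun h : ℝ => b * Real.exp (2 * h) * mK +
        (Real.log 4 + 4) * (mK - mR h⁻¹)) (𝓝[>] 0)
        (𝓝 (b * Real.exp (2 * 0) * mK + (Real.log 4 + 4) * (mK - mK))) := by
      refine Tendsto.add ?_ ((tendsto_const_nhds.sub hinv).const_mul _)
      exact (Continuous.tendsto (by fun_prop) (0 : ℝ)).mono_left nhdsWithin_le_nhds
    have hlt : b * Real.exp (2 * 0) * mK + (Real.log 4 + 4) * (mK - mK) < mK := by
      simp; nlinarith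
    obtain ⟨h, hh, hpos⟩ := ((hl.eventually_lt_const hlt).and self_mem_nhdsWithin).exists
    have hpos : 0 < h := hpos
    have := (smooth_lim (h⁻¹ / h) (by positivity)).eventually_const_lt hh
    have h4 : Tendsto (fun x : ℝ => x - h) atTop atTop := tendsto_atTop_add_const_right _ _ tendsto_id
    filter_upwards [h4.eventually this] with x hx
    have h3 := hx.trans_le (lower h h⁻¹ (x - h) hpos (by positivity))
    rw [sub_add_cancel] at h3
    have h5 : 0 < Real.exp (2 * h) * mK := by positivity
    nlinarith
  · intro b hb
    have hl : Tendsto (fun h : ℝ => b * Real.exp (-(2 * h)) * mR h⁻¹) (𝓝[>] 0)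
        (𝓝 (b * Real.exp (-(2 * 0)) * mK)) := by
      refine Tendsto.mul ?_ hinv
      exact (Continuous.tendsto (by fun_prop) (0 : ℝ)).mono_left nhdsWithin_le_nhds
    have hlt : mK < b * Real.exp (-(2 * 0)) * mK := by
      simp; nlinarith
    obtain ⟨h, ⟨hh, hpos⟩, hmr⟩ := (((hl.eventually_const_lt hlt).and self_mem_nhdsWithin).and
      (hinv.eventually_const_lt hm)).exists
    have hpos : 0 < h := hpos
    have := (smooth_lim (h⁻¹ / h) (by positivity)).eventually_lt_const hh
    have h4 : Tendsto (fun x : ℝ => x + h) atTop atTop := tendsto_atTop_add_const_right _ _ tendsto_id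
    filter_upwards [h4.eventually this] with x hx
    have h3 := (upper h h⁻¹ (x + h) hpos (by positivity)).trans_lt hx
    rw [add_sub_cancel_right] at h3
    have h5 : 0 < Real.exp (-(2 * h)) * mR h⁻¹ := by positivity
    nlinarith

lemma psi_lim : Tendsto (fun x : ℝ => Chebyshev.psi x / x) atTop (𝓝 1) := by
  refine (aFun_lim.comp Real.tendsto_log_atTop).congr' ?_
  filter_upwards [eventually_gt_atTop 0] with x hx
  simp only [Function.comp, aFun, Real.exp_log hx]

lemma theta_lim : Tendsto (fun x : ℝ => Chebyshev.theta x / x) atTop (𝓝 1) := by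
  have h : (fun x => Chebyshev.psi x - Chebyshev.theta x) =o[atTop] (fun x : ℝ => x) := by
    refine Chebyshev.isBigO_psi_sub_theta_sqrt.trans_isLittleO ?_
    rw [Asymptotics.isLittleO_iff_tendsto' (by
      filter_upwards [eventually_gt_atTop 0] with x hx h using absurd h hx.ne')]
    simp_rw [Real.sqrt_div_self']
    exact tendsto_const_nhds.div_atTop Real.tendsto_sqrt_atTop
  have := psi_lim.sub h.tendsto_div_nhds_zero
  rw [sub_zero] at this
  refine this.congr fun x => ?_
  ring

noncomputable def SS (k : ℕ) (x : ℝ) : Finset ℕ :=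
  (Finset.Icc 1 ⌊x⌋₊).filter (fun n => ArithmeticFunction.cardFactors n = k)

noncomputable def LL (k : ℕ) (x : ℝ) : ℝ := ∑ n ∈ SS k x, (1 / n : ℝ)

noncomputable def TT (k : ℕ) (x : ℝ) : ℝ := ∑ n ∈ SS k x, Real.log n

noncomputable def ll (x : ℝ) : ℝ := Real.log (Real.log x)

lemma ll_lim : Tendsto ll atTop atTop := Real.tendsto_log_atTop.comp Real.tendsto_log_atTop

noncomputable def piR (t : ℝ) : ℝ := ∑ k ∈ Finset.Icc 0 ⌊t⌋₊, (if k.Prime then (1 : ℝ) else 0)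

lemma piR_eq (t : ℝ) : piR t = (Nat.primeCounting ⌊t⌋₊ : ℝ) := by
  unfold piR
  rw [Finset.sum_boole, Nat.primeCounting, Nat.primeCounting', Nat.count_eq_card_filter_range]
  congr 2
  ext n
  simp

lemma piR_lim : Tendsto (fun x => piR x * Real.log x / x) atTop (𝓝 1) := by
  have h0 : (fun x : ℝ => x / Real.log x ^ 2) =o[atTop] (fun x => x / Real.log x) := by
    rw [Asymptotics.isLittleO_iff_tendsto' (by
      filter_upwards [eventually_gt_atTop 1] with x hx h
      have := Real.log_pos hx
      have : x / Real.log x ≠ 0 := by positivity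
      exact absurd h this)]
    refine Tendsto.congr' ?_ Real.tendsto_log_atTop.inv_tendsto_atTop
    filter_upwards [eventually_gt_atTop 1] with x hx
    have := Real.log_pos hx
    simp only [Pi.inv_apply]
    field_simp
  have h1 := (Chebyshev.primeCounting_sub_theta_div_log_isBigO.trans_isLittleO
    h0).tendsto_div_nhds_zero
  have h2 := h1.add theta_lim
  rw [zero_add] at h2
  refine h2.congr' ?_
  filter_upwards [eventually_gt_atTop 1] with x hx
  have := Real.log_pos hx
  rw [piR_eq]
  field_simp
  ring

lemma LL_one (x : ℝ) : LL 1 x = ∑ n ∈ Finset.Icc 1 ⌊x⌋₊, (n : ℝ)⁻¹ * (if n.Prime then 1 else 0) := by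
  unfold LL SS
  rw [Finset.sum_filter]
  refine Finset.sum_congr rfl fun n _ => ?_
  simp only [ArithmeticFunction.cardFactors_eq_one_iff_prime]
  split_ifs <;> simp

lemma abel_pi (T x : ℝ) (hT : 1 ≤ T) (hx : T ≤ x) :
    LL 1 x = LL 1 T + piR x / x - piR T / T + ∫ t in T..x, piR t / t ^ 2 := by
  have hab := sum_mul_eq_sub_sub_integral_mul (f := fun t : ℝ => t⁻¹)
    (fun n : ℕ => if n.Prime then (1 : ℝ) else 0) (by linarith : 0 ≤ T) hx
    (fun t ht => differentiableAt_inv (by linarith [ht.1])) (by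
      rw [deriv_inv']
      refine ContinuousOn.integrableOn_Icc ?_
      refine ContinuousOn.neg (ContinuousOn.inv₀ (by fun_prop) fun t ht => ?_)
      have : 0 < t := by linarith [ht.1]
      positivity)
  have e1 : LL 1 x = LL 1 T + ∑ n ∈ Finset.Ioc ⌊T⌋₊ ⌊x⌋₊, (n : ℝ)⁻¹ * (if n.Prime then 1 else 0) := by
    rw [LL_one, LL_one]
    have hfl : ⌊T⌋₊ ≤ ⌊x⌋₊ := Nat.floor_le_floor hx
    have : Finset.Icc 1 ⌊x⌋₊ = Finset.Icc 1 ⌊T⌋₊ ∪ Finset.Ioc ⌊T⌋₊ ⌊x⌋₊ := by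
      ext n
      have := (Nat.one_le_floor_iff T).mpr hT
      simp only [Finset.mem_Icc, Finset.mem_union, Finset.mem_Ioc]
      omega
    rw [this, Finset.sum_union]
    rw [Finset.disjoint_left]
    intro n h1 h2
    simp only [Finset.mem_Icc, Finset.mem_Ioc] at h1 h2
    omega
  rw [e1, hab, intervalIntegral.integral_of_le hx]
  have e2 : ∫ t in Set.Ioc T x, deriv (fun t : ℝ => t⁻¹) t *
      ∑ k ∈ Finset.Icc 0 ⌊t⌋₊, (if k.Prime then (1 : ℝ) else 0) =
      - ∫ t in Set.Ioc T x, piR t / t ^ 2 := by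
    rw [← integral_neg]
    refine setIntegral_congr_fun measurableSet_Ioc fun t ht => ?_
    simp only [deriv_inv', piR]
    ring
  rw [e2]
  simp only [piR]
  ring

lemma piR_mono : Monotone piR := by
  intro a b h
  rw [piR_eq, piR_eq]
  exact_mod_cast Nat.monotone_primeCounting (Nat.floor_le_floor h)

lemma pi_ii (T x : ℝ) (hT : 1 ≤ T) (hx : T ≤ x) :
    IntervalIntegrable (fun t => piR t / t ^ 2) volume T x := by
  simp only [div_eq_mul_inv]
  refine IntervalIntegrable.mul_continuousOn piR_mono.intervalIntegrable ?_
  rw [Set.uIcc_of_le hx]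
  refine ContinuousOn.inv₀ (by fun_prop) fun t ht => ?_
  have : 0 < t := by linarith [ht.1]
  positivity

lemma ll_integral (T x : ℝ) (hT : 1 < T) (hx : T ≤ x) :
    IntervalIntegrable (fun t => 1 / (t * Real.log t)) volume T x ∧
    ∫ t in T..x, 1 / (t * Real.log t) = ll x - ll T := by
  have hc : IntervalIntegrable (fun t => 1 / (t * Real.log t)) volume T x := by
    refine ContinuousOn.intervalIntegrable ?_
    rw [Set.uIcc_of_le hx]
    refine ContinuousOn.div continuousOn_const ?_ ?_
    · refine continuousOn_id.mul (Real.continuousOn_log.mono fun t ht => ?_)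
      have : 0 < t := by linarith [ht.1]
      exact this.ne'
    · intro t ht
      have h1 : 1 < t := by linarith [ht.1]
      have := Real.log_pos h1
      have : 0 < t := by linarith
      positivity
  refine ⟨hc, ?_⟩
  refine intervalIntegral.integral_eq_sub_of_hasDerivAt (fun t ht => ?_) hc
  rw [Set.uIcc_of_le hx] at ht
  have h1 : 1 < t := by linarith [ht.1]
  have h2 := Real.log_pos h1
  have h3 : 0 < t := by linarith
  have := (Real.hasDerivAt_log h3.ne').log h2.ne'
  refine this.congr_deriv ?_
  field_simp

lemma lim_of_bound (g h : ℝ → ℝ) (hh : Tendsto h atTop atTop)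
    (H : ∀ ε > 0, ∃ C, ∀ᶠ x in atTop, |g x - h x| ≤ ε * h x + C) :
    Tendsto (fun x => g x / h x) atTop (𝓝 1) := by
  rw [Metric.tendsto_nhds]
  intro ε hε
  obtain ⟨C, hC⟩ := H (ε / 2) (by positivity)
  filter_upwards [hC, hh.eventually_gt_atTop (2 * |C| / ε), hh.eventually_gt_atTop 0] with x h1 h2 h3
  rw [Real.dist_eq]
  have : g x / h x - 1 = (g x - h x) / h x := by field_simp
  rw [this, abs_div, abs_of_pos h3, div_lt_iff₀ h3]
  rw [div_lt_iff₀ hε] at h2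
  have := le_abs_self C
  nlinarith

lemma mertens : Tendsto (fun x => LL 1 x / ll x) atTop (𝓝 1) := by
  refine lim_of_bound _ _ ll_lim fun ε hε => ?_
  have h1 : ∀ᶠ t : ℝ in atTop, |piR t / t ^ 2 - 1 / (t * Real.log t)| ≤ ε * (1 / (t * Real.log t)) := by
    have := (Metric.tendsto_nhds.mp piR_lim) ε hε
    filter_upwards [this, eventually_gt_atTop 1] with t ht h1
    have hl := Real.log_pos h1
    have ht0 : 0 < t := by linarith
    rw [Real.dist_eq] at ht
    have e : piR t / t ^ 2 - 1 / (t * Real.log t) =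
        (piR t * Real.log t / t - 1) * (1 / (t * Real.log t)) := by
      field_simp
    rw [e, abs_mul, abs_of_pos (a := 1 / (t * Real.log t)) (by positivity)]
    exact mul_le_mul_of_nonneg_right ht.le (by positivity)
  obtain ⟨T0, hT0⟩ := eventually_atTop.mp h1
  set T := max T0 3 with hTdef
  have hT3 : 3 ≤ T := le_max_right _ _
  have hT : ∀ t ≥ T, |piR t / t ^ 2 - 1 / (t * Real.log t)| ≤ ε * (1 / (t * Real.log t)) :=
    fun t ht => hT0 t (le_trans (le_max_left _ _) ht)
  refine ⟨|LL 1 T - piR T / T - ll T| + 1 + ε * |ll T|, ?_⟩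
  filter_upwards [eventually_ge_atTop T] with x hx
  rw [abel_pi T x (by linarith) hx]
  obtain ⟨hi, he⟩ := ll_integral T x (by linarith) hx
  have hp := pi_ii T x (by linarith) hx
  have hb : |(∫ t in T..x, piR t / t ^ 2) - (ll x - ll T)| ≤ ε * (ll x - ll T) := by
    rw [← he, ← intervalIntegral.integral_sub hp hi, ← intervalIntegral.integral_const_mul]
    refine (intervalIntegral.abs_integral_le_integral_abs hx).trans ?_
    refine intervalIntegral.integral_mono_on hx (hp.sub hi).abs (hi.const_mul ε) fun t ht => ?_
    exact hT t ht.1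
  have hpi : 0 ≤ piR x / x ∧ piR x / x ≤ 1 := by
    have hx0 : 0 < x := by linarith
    have h0 : 0 ≤ piR x := by rw [piR_eq]; positivity
    refine ⟨by positivity, (div_le_one hx0).mpr ?_⟩
    refine le_trans ?_ (Nat.floor_le hx0.le)
    rw [piR, Finset.sum_boole]
    have hc : ((Finset.Icc 0 ⌊x⌋₊).filter Nat.Prime).card ≤ (Finset.Icc 1 ⌊x⌋₊).card := by
      refine Finset.card_le_card fun n hn => ?_
      simp only [Finset.mem_filter, Finset.mem_Icc] at hn ⊢
      exact ⟨hn.2.one_lt.le, hn.1.2⟩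
    rw [Nat.card_Icc] at hc
    exact_mod_cast hc
  have e : LL 1 T + piR x / x - piR T / T + (∫ t in T..x, piR t / t ^ 2) - ll x =
    (LL 1 T - piR T / T - ll T) + piR x / x + ((∫ t in T..x, piR t / t ^ 2) - (ll x - ll T)) := by ring
  rw [e]
  refine (abs_add_three _ _ _).trans ?_
  rw [abs_of_nonneg hpi.1]
  have := neg_abs_le (ll T)
  nlinarith [hpi.2]

lemma divsum (N : ℕ) (F : ℕ → ℕ → ℝ) :
    ∑ n ∈ Finset.Icc 1 N, ∑ d ∈ n.divisors, F d (n / d) =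
      ∑ m ∈ Finset.Icc 1 N, ∑ d ∈ Finset.Icc 1 (N / m), F d m := by
  rw [Finset.sum_sigma', Finset.sum_sigma']
  refine Finset.sum_nbij' (fun z => ⟨z.1 / z.2, z.2⟩) (fun z => ⟨z.2 * z.1, z.2⟩) ?_ ?_ ?_ ?_ ?_
  · rintro ⟨n, d⟩ h
    simp only [Finset.mem_sigma, Finset.mem_Icc, Nat.mem_divisors] at h ⊢
    obtain ⟨⟨h1, h2⟩, ⟨m, rfl⟩, h3⟩ := h
    have hd : 0 < d := Nat.pos_of_ne_zero fun h => by simp [h] at h3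
    have hm : 0 < m := Nat.pos_of_ne_zero fun h => by simp [h] at h3
    rw [Nat.mul_div_cancel_left _ hd]
    refine ⟨⟨hm, le_trans (Nat.le_mul_of_pos_left m hd) h2⟩, hd, ?_⟩
    rwa [Nat.le_div_iff_mul_le hm]
  · rintro ⟨m, d⟩ h
    simp only [Finset.mem_sigma, Finset.mem_Icc, Nat.mem_divisors] at h ⊢
    obtain ⟨⟨h1, h2⟩, h3, h4⟩ := h
    rw [Nat.le_div_iff_mul_le h1] at h4
    have : 0 < d * m := Nat.mul_pos h3 h1
    exact ⟨⟨this, h4⟩, ⟨m, rfl⟩, this.ne'⟩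
  · rintro ⟨n, d⟩ h
    simp only [Finset.mem_sigma, Finset.mem_Icc, Nat.mem_divisors] at h ⊢
    rw [Nat.mul_div_cancel' h.2.1]
  · rintro ⟨m, d⟩ h
    simp only [Finset.mem_sigma, Finset.mem_Icc] at h ⊢
    rw [Nat.mul_div_cancel_left _ h.2.1]
  · rintro ⟨n, d⟩ h
    rfl

open Classical in
lemma Omega_sum (n : ℕ) : ∑ d ∈ n.divisors, (if IsPrimePow d then (1 : ℝ) else 0) =
    (ArithmeticFunction.cardFactors n : ℝ) := by
  refine Nat.recOnPrimeCoprime ?_ ?_ ?_ n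
  · simp
  · intro p k hp
    rw [Nat.sum_divisors_prime_pow hp, ArithmeticFunction.cardFactors_apply_prime_pow hp,
      Finset.sum_range_succ', Nat.pow_zero]
    have : ∀ i ∈ Finset.range k, (if IsPrimePow (p ^ (i + 1)) then (1 : ℝ) else 0) = 1 := by
      intro i _
      rw [if_pos (hp.isPrimePow.pow (Nat.succ_ne_zero i))]
    rw [Finset.sum_congr rfl this]
    simp [not_isPrimePow_one]
  intro a b ha' hb' hab ha hb
  simp only [← Finset.sum_filter] at ha hb ⊢
  rw [Nat.mul_divisors_filter_prime_pow hab, Finset.filter_union,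
    Finset.sum_union (Nat.disjoint_divisors_filter_isPrimePow hab), ha, hb,
    ArithmeticFunction.cardFactors_mul (by omega) (by omega)]
  push_cast
  rfl

lemma Omega_ge_one {d : ℕ} (hd : IsPrimePow d) : 1 ≤ ArithmeticFunction.cardFactors d :=
  ArithmeticFunction.cardFactors_pos_iff_one_lt.mpr hd.one_lt

open Classical in
lemma pp_bound : ∃ B : ℝ, 0 ≤ B ∧ ∀ S : Finset ℕ,
    ∑ d ∈ S, (if IsPrimePow d ∧ ¬ d.Prime then (1 / d : ℝ) else 0) ≤ B := by
  have hs := ArithmeticFunction.vonMangoldt.summable_residueClass_non_primes_div (1 : ZMod 1)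
  have e : ∀ n : ℕ, ArithmeticFunction.vonMangoldt.residueClass (1 : ZMod 1) n =
      ArithmeticFunction.vonMangoldt n := by
    intro n
    simp [ArithmeticFunction.vonMangoldt.residueClass, Set.indicator, Subsingleton.elim (n : ZMod 1) 1]
  simp only [e] at hs
  have hl2 : 0 < Real.log 2 := Real.log_pos (by norm_num)
  have hnn : ∀ n : ℕ, 0 ≤ (if n.Prime then 0 else ArithmeticFunction.vonMangoldt n) / (n : ℝ) := by
    intro n
    have := ArithmeticFunction.vonMangoldt_nonneg (n := n)
    split_ifs
    · simp
    · positivity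
  refine ⟨(∑' n : ℕ, (if n.Prime then 0 else ArithmeticFunction.vonMangoldt n) / (n : ℝ)) / Real.log 2,
    div_nonneg (tsum_nonneg hnn) hl2.le, fun S => ?_⟩
  rw [le_div_iff₀ hl2]
  refine le_trans ?_ (hs.sum_le_tsum S (fun n _ => hnn n))
  rw [Finset.sum_mul]
  refine Finset.sum_le_sum fun d _ => ?_
  split_ifs with h1 h2 h2
  · exact absurd h2 h1.2
  · rw [ArithmeticFunction.vonMangoldt_apply, if_pos h1.1, div_mul_eq_mul_div, one_mul]
    refine div_le_div_of_nonneg_right ?_ (Nat.cast_nonneg d)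
    refine Real.log_le_log (by norm_num) ?_
    exact_mod_cast (Nat.minFac_prime h1.1.one_lt.ne').two_le
  · simp
  · rw [zero_mul]
    exact div_nonneg ArithmeticFunction.vonMangoldt_nonneg (Nat.cast_nonneg d)

open Classical in
lemma LL_id (k : ℕ) (x : ℝ) : (k : ℝ) * LL k x =
    ∑ m ∈ Finset.Icc 1 ⌊x⌋₊, ∑ d ∈ Finset.Icc 1 (⌊x⌋₊ / m),
      (if IsPrimePow d ∧ ArithmeticFunction.cardFactors d + ArithmeticFunction.cardFactors m = k
        then (1 / m * (1 / d) : ℝ) else 0) := by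
  rw [← divsum ⌊x⌋₊ (fun d m => if IsPrimePow d ∧
    ArithmeticFunction.cardFactors d + ArithmeticFunction.cardFactors m = k
        then (1 / m * (1 / d) : ℝ) else 0), LL, SS, Finset.sum_filter, Finset.mul_sum]
  refine Finset.sum_congr rfl fun n hn => ?_
  have hn1 : n ≠ 0 := by
    have := (Finset.mem_Icc.mp hn).1
    omega
  have : ∀ d ∈ n.divisors, (if IsPrimePow d ∧
    ArithmeticFunction.cardFactors d + ArithmeticFunction.cardFactors (n / d) = k
        then (1 / ((n / d : ℕ) : ℝ) * (1 / d) : ℝ) else 0) =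
      (if ArithmeticFunction.cardFactors n = k then (1 / n : ℝ) else 0) *
        (if IsPrimePow d then (1 : ℝ) else 0) := by
    intro d hd
    obtain ⟨⟨m, rfl⟩, -⟩ := Nat.mem_divisors.mp hd
    have hd0 : d ≠ 0 := fun h => by simp [h] at hn1
    have hm0 : m ≠ 0 := fun h => by simp [h] at hn1
    rw [Nat.mul_div_cancel_left _ (Nat.pos_of_ne_zero hd0),
      ArithmeticFunction.cardFactors_mul hd0 hm0]
    by_cases h1 : IsPrimePow d <;> by_cases h2 : 
      ArithmeticFunction.cardFactors d + ArithmeticFunction.cardFactors m = k <;> simp [h1, h2]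
  rw [Finset.sum_congr rfl this, ← Finset.mul_sum, Omega_sum]
  split_ifs with h
  · rw [h]; ring
  · simp

lemma LL_nonneg (k : ℕ) (x : ℝ) : 0 ≤ LL k x := Finset.sum_nonneg fun n _ => by positivity

lemma LL_lower (K : ℕ) (x : ℝ) (hx : 0 ≤ x) :
    LL K (√x) * LL 1 (√x) ≤ ((K + 1 : ℕ) : ℝ) * LL (K + 1) x := by
  classical
  rw [LL_id]
  nth_rw 1 [LL]
  rw [Finset.sum_mul]
  have hsub : ∀ m ∈ SS K (√x), ∀ d ∈ SS 1 (√x), d * m ≤ ⌊x⌋₊ := by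
    intro m hm d hd
    simp only [SS, Finset.mem_filter, Finset.mem_Icc] at hm hd
    have h1 := (Nat.le_floor_iff (Real.sqrt_nonneg x)).mp hm.1.2
    have h2 := (Nat.le_floor_iff (Real.sqrt_nonneg x)).mp hd.1.2
    refine Nat.le_floor ?_
    push_cast
    calc (d : ℝ) * m ≤ √x * √x := by gcongr
      _ = x := Real.mul_self_sqrt hx
  refine le_trans (Finset.sum_le_sum fun m hm => ?_) (Finset.sum_le_sum_of_subset_of_nonneg (s := SS K (√x)) ?_ ?_)
  · rw [LL, Finset.mul_sum]
    have hm' := hm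
    simp only [SS, Finset.mem_filter, Finset.mem_Icc] at hm'
    rw [← Finset.sum_filter]
    refine Finset.sum_le_sum_of_subset_of_nonneg ?_ fun _ _ _ => by positivity
    intro d hd
    have h1 := hsub m hm d hd
    simp only [SS, Finset.mem_filter, Finset.mem_Icc] at hd ⊢
    refine ⟨⟨hd.1.1, (Nat.le_div_iff_mul_le hm'.1.1).mpr h1⟩, ?_, ?_⟩
    · exact (ArithmeticFunction.cardFactors_eq_one_iff_prime.mp hd.2).isPrimePow
    · rw [hd.2, hm'.2, add_comm]
  · intro m hm
    simp only [SS, Finset.mem_filter, Finset.mem_Icc] at hm ⊢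
    have h1 := (Nat.le_floor_iff (Real.sqrt_nonneg x)).mp hm.1.2
    have h3 : (1 : ℝ) ≤ m := by exact_mod_cast hm.1.1
    refine ⟨hm.1.1, Nat.le_floor ?_⟩
    have := Real.mul_self_sqrt hx
    nlinarith
  · intro m _ _
    refine Finset.sum_nonneg fun d _ => ?_
    split_ifs <;> positivity

lemma sum_lt_eq (K N : ℕ) (g : ℕ → ℝ) :
    ∑ m ∈ Finset.Icc 1 N, (if ArithmeticFunction.cardFactors m < K then g m else 0) =
      ∑ j ∈ Finset.range K, ∑ m ∈ (Finset.Icc 1 N).filter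
        (fun n => ArithmeticFunction.cardFactors n = j), g m := by
  simp_rw [Finset.sum_filter]
  rw [Finset.sum_comm]
  refine Finset.sum_congr rfl fun m _ => ?_
  simp

lemma LL_upper : ∃ B : ℝ, 0 ≤ B ∧ ∀ (K : ℕ) (x : ℝ),
    ((K + 1 : ℕ) : ℝ) * LL (K + 1) x ≤ LL K x * LL 1 x + B * ∑ j ∈ Finset.range K, LL j x := by
  classical
  obtain ⟨B, hB0, hB⟩ := pp_bound
  refine ⟨B, hB0, fun K x => ?_⟩
  have e : LL K x * LL 1 x + B * ∑ j ∈ Finset.range K, LL j x =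
      ∑ m ∈ Finset.Icc 1 ⌊x⌋₊, ((if ArithmeticFunction.cardFactors m = K then
        (1 / m : ℝ) * LL 1 x else 0) + (if ArithmeticFunction.cardFactors m < K then
          B * (1 / m : ℝ) else 0)) := by
    rw [Finset.sum_add_distrib, sum_lt_eq, ← Finset.sum_filter]
    congr 1
    · nth_rw 1 [LL]
      rw [Finset.sum_mul]
      rfl
    · rw [Finset.mul_sum]
      refine Finset.sum_congr rfl fun j _ => ?_
      rw [LL, Finset.mul_sum]
      rfl
  rw [e, LL_id]
  refine Finset.sum_le_sum fun m hm => ?_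
  have hm1 := (Finset.mem_Icc.mp hm).1
  rcases lt_trichotomy (ArithmeticFunction.cardFactors m) K with h | h | h
  · rw [if_neg h.ne, if_pos h, zero_add, mul_comm B]
    refine le_trans ?_ (mul_le_mul_of_nonneg_left (hB (Finset.Icc 1 (⌊x⌋₊ / m))) (by positivity))
    rw [Finset.mul_sum]
    refine Finset.sum_le_sum fun d _ => ?_
    split_ifs with h1 h2 h2
    · exact le_rfl
    · exfalso
      have h3 : d.Prime := by
        by_contra h3
        exact h2 ⟨h1.1, h3⟩
      have h4 := ArithmeticFunction.cardFactors_apply_prime h3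
      omega
    · positivity
    · simp
  · rw [if_pos h, if_neg (by omega), add_zero, LL, Finset.mul_sum, ← Finset.sum_filter]
    refine Finset.sum_le_sum_of_subset_of_nonneg ?_ fun _ _ _ => by positivity
    intro d hd
    simp only [SS, Finset.mem_filter, Finset.mem_Icc] at hd ⊢
    exact ⟨⟨hd.1.1, hd.1.2.trans (Nat.div_le_self _ _)⟩, by omega⟩
  · rw [if_neg (by omega), if_neg (by omega), add_zero]
    refine Finset.sum_nonpos fun d _ => ?_
    rw [if_neg]
    rintro ⟨h1, h2⟩
    have := Omega_ge_one h1
    omega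

lemma LL_zero : Tendsto (fun x => LL 0 x) atTop (𝓝 1) := by
  refine tendsto_const_nhds.congr' ?_
  filter_upwards [eventually_ge_atTop 1] with x hx
  have : SS 0 x = {1} := by
    have := (Nat.one_le_floor_iff x).mpr hx
    ext n
    simp only [SS, Finset.mem_filter, Finset.mem_Icc,
      ArithmeticFunction.cardFactors_eq_zero_iff_eq_zero_or_one, Finset.mem_singleton]
    omega
  simp [LL, this]

lemma sqrt_lim : Tendsto (fun x => ll (√x) / ll x) atTop (𝓝 1) := by
  refine lim_of_bound _ _ ll_lim fun ε hε => ⟨Real.log 2, ?_⟩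
  filter_upwards [eventually_gt_atTop 1, ll_lim.eventually_gt_atTop 0] with x hx h0
  have h1 := Real.log_pos hx
  have : ll (√x) = ll x - Real.log 2 := by
    rw [ll, Real.log_sqrt (by linarith), Real.log_div h1.ne' (by norm_num), ll]
  rw [this, sub_sub_cancel_left, abs_neg, abs_of_pos (Real.log_pos (by norm_num))]
  nlinarith

lemma LL_lim (k : ℕ) : Tendsto (fun x => LL k x / ll x ^ k) atTop (𝓝 (1 / (Nat.factorial k : ℝ))) := by
  induction k using Nat.strong_induction_on with
  | _ k ih =>
  rcases k with _ | K
  · simpa using LL_zero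
  obtain ⟨B, hB0, hB⟩ := LL_upper
  have hup : Tendsto (fun x => (LL K x / ll x ^ K) * (LL 1 x / ll x) +
      B * ∑ j ∈ Finset.range K, (LL j x / ll x ^ j) * (ll x ^ (K + 1 - j))⁻¹) atTop
      (𝓝 ((1 / (Nat.factorial K : ℝ)) * 1 + B * ∑ j ∈ Finset.range K,
        (1 / (Nat.factorial j : ℝ)) * 0)) := by
    refine ((ih K (Nat.lt_succ_self K)).mul mertens).add (Tendsto.const_mul _ ?_)
    refine tendsto_finsetSum _ fun j hj => ?_
    have hj' := Finset.mem_range.mp hj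
    refine (ih j (by omega)).mul ?_
    exact ((tendsto_pow_atTop (by omega)).comp ll_lim).inv_tendsto_atTop
  have hlow : Tendsto (fun x => (LL K (√x) / ll (√x) ^ K) * (LL 1 (√x) / ll (√x)) *
      (ll (√x) / ll x) ^ (K + 1)) atTop (𝓝 ((1 / (Nat.factorial K : ℝ)) * 1 * 1 ^ (K + 1))) := by
    refine (Tendsto.mul ?_ ?_).mul (sqrt_lim.pow _)
    · exact (ih K (Nat.lt_succ_self K)).comp Real.tendsto_sqrt_atTop
    · exact mertens.comp Real.tendsto_sqrt_atTop
  simp only [mul_zero, Finset.sum_const_zero, add_zero, mul_one, one_pow] at hup hlow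
  have hmain : Tendsto (fun x => ((K + 1 : ℕ) : ℝ) * LL (K + 1) x / ll x ^ (K + 1)) atTop
      (𝓝 (1 / (Nat.factorial K : ℝ))) := by
    refine tendsto_of_tendsto_of_tendsto_of_le_of_le' hlow hup ?_ ?_
    · filter_upwards [eventually_ge_atTop 0, ll_lim.eventually_gt_atTop 0,
        (ll_lim.comp Real.tendsto_sqrt_atTop).eventually_gt_atTop 0] with x hx h1 h2
      simp only [Function.comp] at h2
      have := LL_lower K x hx
      rw [le_div_iff₀ (by positivity)]
      refine le_trans (le_of_eq ?_) this
      rw [div_pow]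
      field_simp
      ring
    · filter_upwards [ll_lim.eventually_gt_atTop 0] with x h1
      rw [div_le_iff₀ (by positivity)]
      refine (hB K x).trans (le_of_eq ?_)
      rw [add_mul]
      congr 1
      · field_simp
        ring
      · rw [mul_assoc, Finset.sum_mul]
        congr 1
        refine Finset.sum_congr rfl fun j hj => ?_
        have hj' := Finset.mem_range.mp hj
        have : ll x ^ (K + 1) = ll x ^ j * ll x ^ (K + 1 - j) := by
          rw [← pow_add]; congr 1; omega
        rw [this]
        field_simp
  have := hmain.div_const ((K + 1 : ℕ) : ℝ)
  have e : 1 / (Nat.factorial (K + 1) : ℝ) = 1 / (Nat.factorial K : ℝ) / ((K + 1 : ℕ) : ℝ) := by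
    rw [Nat.factorial_succ]
    push_cast
    field_simp
  rw [e]
  refine this.congr fun x => ?_
  have : ((K + 1 : ℕ) : ℝ) ≠ 0 := by positivity
  field_simp

lemma TT_id (k : ℕ) (x : ℝ) : TT k x =
    ∑ m ∈ Finset.Icc 1 ⌊x⌋₊, ∑ d ∈ Finset.Icc 1 (⌊x⌋₊ / m),
      (if ArithmeticFunction.cardFactors d + ArithmeticFunction.cardFactors m = k
        then ArithmeticFunction.vonMangoldt d else 0) := by
  rw [← divsum ⌊x⌋₊ (fun d m => if
    ArithmeticFunction.cardFactors d + ArithmeticFunction.cardFactors m = k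
        then ArithmeticFunction.vonMangoldt d else 0), TT, SS, Finset.sum_filter]
  refine Finset.sum_congr rfl fun n hn => ?_
  have hn1 : n ≠ 0 := by
    have := (Finset.mem_Icc.mp hn).1
    omega
  have : ∀ d ∈ n.divisors, (if
    ArithmeticFunction.cardFactors d + ArithmeticFunction.cardFactors (n / d) = k
        then ArithmeticFunction.vonMangoldt d else 0) =
      (if ArithmeticFunction.cardFactors n = k then ArithmeticFunction.vonMangoldt d else 0) := by
    intro d hd
    obtain ⟨⟨m, rfl⟩, -⟩ := Nat.mem_divisors.mp hd
    have hd0 : d ≠ 0 := fun h => by simp [h] at hn1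
    have hm0 : m ≠ 0 := fun h => by simp [h] at hn1
    rw [Nat.mul_div_cancel_left _ (Nat.pos_of_ne_zero hd0),
      ArithmeticFunction.cardFactors_mul hd0 hm0]
  rw [Finset.sum_congr rfl this, ← ArithmeticFunction.vonMangoldt_sum]
  split_ifs with h
  · rfl
  · simp

lemma theta_inner (x : ℝ) (m : ℕ) :
    ∑ d ∈ Finset.Icc 1 (⌊x⌋₊ / m), (if ArithmeticFunction.cardFactors d = 1
        then ArithmeticFunction.vonMangoldt d else 0) = Chebyshev.theta (x / m) := by
  rw [Chebyshev.theta, Nat.floor_div_natCast, Finset.sum_filter]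
  refine Finset.sum_congr rfl fun d _ => ?_
  simp only [ArithmeticFunction.cardFactors_eq_one_iff_prime]
  split_ifs with h
  · exact ArithmeticFunction.vonMangoldt_apply_prime h
  · rfl

lemma TT_lower (K : ℕ) (x : ℝ) :
    ∑ m ∈ SS K x, Chebyshev.theta (x / m) ≤ TT (K + 1) x := by
  rw [TT_id, SS, Finset.sum_filter]
  refine Finset.sum_le_sum fun m _ => ?_
  split_ifs with h
  · rw [← theta_inner]
    refine le_of_eq (Finset.sum_congr rfl fun d _ => ?_)
    rw [h]
    congr 1
    simp only [eq_iff_iff]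
    omega
  · refine Finset.sum_nonneg fun d _ => ?_
    split_ifs
    · exact ArithmeticFunction.vonMangoldt_nonneg
    · exact le_rfl

lemma TT_upper (K : ℕ) (x : ℝ) (hx : 0 ≤ x) : TT (K + 1) x ≤
    ∑ m ∈ SS K x, Chebyshev.theta (x / m) +
      (Real.log 4 + 4) * x * ∑ j ∈ Finset.range K, LL j x := by
  have e : ∑ m ∈ SS K x, Chebyshev.theta (x / m) +
      (Real.log 4 + 4) * x * ∑ j ∈ Finset.range K, LL j x =
      ∑ m ∈ Finset.Icc 1 ⌊x⌋₊, ((if ArithmeticFunction.cardFactors m = K then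
        Chebyshev.theta (x / m) else 0) + (if ArithmeticFunction.cardFactors m < K then
          (Real.log 4 + 4) * x * (1 / m : ℝ) else 0)) := by
    rw [Finset.sum_add_distrib, sum_lt_eq, ← Finset.sum_filter]
    congr 1
    rw [Finset.mul_sum]
    refine Finset.sum_congr rfl fun j _ => ?_
    rw [LL, Finset.mul_sum]
    rfl
  rw [e, TT_id]
  refine Finset.sum_le_sum fun m hm => ?_
  have hm1 := (Finset.mem_Icc.mp hm).1
  rcases lt_trichotomy (ArithmeticFunction.cardFactors m) K with h | h | h
  · rw [if_neg h.ne, if_pos h, zero_add]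
    have h1 := Chebyshev.psi_le_const_mul_self (x := x / m) (by positivity)
    refine le_trans ?_ (h1.trans (le_of_eq (by ring)))
    rw [Chebyshev.psi, Nat.floor_div_natCast]
    refine Finset.sum_le_sum fun d _ => ?_
    split_ifs
    · exact le_rfl
    · exact ArithmeticFunction.vonMangoldt_nonneg
  · rw [if_pos h, if_neg (by omega), add_zero, ← theta_inner]
    refine le_of_eq (Finset.sum_congr rfl fun d _ => ?_)
    rw [h]
    congr 1
    simp only [eq_iff_iff]
    omega
  · rw [if_neg (by omega), if_neg (by omega), add_zero]
    refine Finset.sum_nonpos fun d _ => ?_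
    split_ifs with h2
    · refine le_of_eq (ArithmeticFunction.vonMangoldt_eq_zero_iff.mpr fun h1 => ?_)
      have := Omega_ge_one h1
      omega
    · exact le_rfl

lemma theta_bound (ε : ℝ) (hε : 0 < ε) : ∃ C : ℝ, 0 ≤ C ∧ ∀ y : ℝ, 0 ≤ y →
    |Chebyshev.theta y - y| ≤ ε * y + C := by
  have h := theta_lim.eventually (Metric.ball_mem_nhds 1 hε)
  obtain ⟨Y, hY⟩ := eventually_atTop.mp (h.and (eventually_gt_atTop 0))
  have hY0 : 0 < Y := (hY Y le_rfl).2
  have h4 : 0 < Real.log 4 := Real.log_pos (by norm_num)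
  refine ⟨(Real.log 4 + 1) * Y, by positivity, fun y hy => ?_⟩
  rcases le_total Y y with h1 | h1
  · obtain ⟨h2, h3⟩ := hY y h1
    rw [Real.dist_eq] at h2
    have : Chebyshev.theta y - y = (Chebyshev.theta y / y - 1) * y := by field_simp
    rw [this, abs_mul, abs_of_pos h3]
    have : 0 < (Real.log 4 + 1) * Y := by positivity
    nlinarith
  · have h2 := Chebyshev.theta_le_log4_mul_x hy
    have h3 := Chebyshev.theta_nonneg y
    have : 0 ≤ ε * y := by positivity
    rw [abs_le]
    constructor <;> nlinarith

lemma SS_card (k : ℕ) (x : ℝ) (hx : 0 ≤ x) : ((SS k x).card : ℝ) ≤ x := by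
  have h1 : (SS k x).card ≤ ⌊x⌋₊ := by
    refine (Finset.card_filter_le _ _).trans ?_
    simp
  exact (Nat.cast_le.mpr h1).trans (Nat.floor_le hx)

lemma theta_sum_bound (ε : ℝ) (hε : 0 < ε) : ∃ C : ℝ, 0 ≤ C ∧ ∀ (K : ℕ) (x : ℝ), 0 ≤ x →
    |∑ m ∈ SS K x, Chebyshev.theta (x / m) - x * LL K x| ≤ ε * (x * LL K x) + C * x := by
  obtain ⟨C, hC, h⟩ := theta_bound ε hε
  refine ⟨C, hC, fun K x hx => ?_⟩
  have e : x * LL K x = ∑ m ∈ SS K x, x / m := by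
    rw [LL, Finset.mul_sum]
    exact Finset.sum_congr rfl fun m _ => by ring
  rw [e, ← Finset.sum_sub_distrib]
  refine (Finset.abs_sum_le_sum_abs _ _).trans ?_
  refine (Finset.sum_le_sum fun (m : ℕ) _ => h (x / (m : ℝ)) (div_nonneg hx (Nat.cast_nonneg m))).trans ?_
  rw [Finset.sum_add_distrib, ← Finset.mul_sum, Finset.sum_const, nsmul_eq_mul]
  have := SS_card K x hx
  nlinarith

lemma TT_one (x : ℝ) : TT 1 x = Chebyshev.theta x := by
  rw [TT, SS, Chebyshev.theta]
  simp only [ArithmeticFunction.cardFactors_eq_one_iff_prime]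
  rfl

lemma TT_lim (K : ℕ) : Tendsto (fun x => TT (K + 1) x / (x * ll x ^ K)) atTop
    (𝓝 (1 / (Nat.factorial K : ℝ))) := by
  rcases Nat.eq_zero_or_pos K with rfl | hK
  · simpa [TT_one] using theta_lim
  have hfac : (1 : ℝ) / (Nat.factorial K : ℝ) ≤ 1 := by
    rw [div_le_one (by positivity)]
    exact_mod_cast Nat.factorial_pos K
  have hd : Tendsto (fun x => TT (K + 1) x / (x * ll x ^ K) - LL K x / ll x ^ K) atTop (𝓝 0) := by
    rw [Metric.tendsto_nhds]
    intro ε hε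
    obtain ⟨C, hC, hb⟩ := theta_sum_bound (ε / 2) (by positivity)
    have hup : Tendsto (fun x => (ε / 2) * (LL K x / ll x ^ K) + C * (ll x ^ K)⁻¹ +
        (Real.log 4 + 4) * ∑ j ∈ Finset.range K, (LL j x / ll x ^ j) * (ll x ^ (K - j))⁻¹) atTop
        (𝓝 ((ε / 2) * (1 / (Nat.factorial K : ℝ)) + C * 0 +
          (Real.log 4 + 4) * ∑ j ∈ Finset.range K, (1 / (Nat.factorial j : ℝ)) * 0)) := by
      refine (((LL_lim K).const_mul _).add (Tendsto.const_mul _ ?_)).add (Tendsto.const_mul _ ?_)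
      · exact ((tendsto_pow_atTop (by omega)).comp ll_lim).inv_tendsto_atTop
      refine tendsto_finsetSum _ fun j hj => ?_
      have hj' := Finset.mem_range.mp hj
      refine (LL_lim j).mul ?_
      exact ((tendsto_pow_atTop (by omega)).comp ll_lim).inv_tendsto_atTop
    simp only [mul_zero, Finset.sum_const_zero, add_zero] at hup
    have hlt : (ε / 2) * (1 / (Nat.factorial K : ℝ)) < ε := by nlinarith
    filter_upwards [hup.eventually_lt_const hlt, eventually_gt_atTop 0,
      ll_lim.eventually_gt_atTop 0] with x h1 hx hl
    refine lt_of_le_of_lt ?_ h1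
    have e1 : TT (K + 1) x / (x * ll x ^ K) - LL K x / ll x ^ K =
        (TT (K + 1) x - x * LL K x) / (x * ll x ^ K) := by field_simp
    rw [Real.dist_eq, sub_zero, e1, abs_div, abs_of_pos (show 0 < x * ll x ^ K by positivity),
      div_le_iff₀ (by positivity)]
    have e2 : ((ε / 2) * (LL K x / ll x ^ K) + C * (ll x ^ K)⁻¹ +
        (Real.log 4 + 4) * ∑ j ∈ Finset.range K, (LL j x / ll x ^ j) * (ll x ^ (K - j))⁻¹) *
        (x * ll x ^ K) = (ε / 2) * (x * LL K x) + C * x +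
        (Real.log 4 + 4) * x * ∑ j ∈ Finset.range K, LL j x := by
      have e3 : ∑ j ∈ Finset.range K, (LL j x / ll x ^ j) * (ll x ^ (K - j))⁻¹ =
          (∑ j ∈ Finset.range K, LL j x) / ll x ^ K := by
        rw [Finset.sum_div]
        refine Finset.sum_congr rfl fun j hj => ?_
        have hj' := Finset.mem_range.mp hj
        have : ll x ^ K = ll x ^ j * ll x ^ (K - j) := by
          rw [← pow_add]; congr 1; omega
        rw [this]
        field_simp
      rw [e3]
      field_simp
    rw [e2]
    have h2 := hb K x hx.le
    have h3 := TT_lower K x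
    have h4 := TT_upper K x hx.le
    have h5 : 0 ≤ (Real.log 4 + 4) * x * ∑ j ∈ Finset.range K, LL j x := by
      have : 0 < Real.log 4 := Real.log_pos (by norm_num)
      have : 0 ≤ ∑ j ∈ Finset.range K, LL j x := Finset.sum_nonneg fun j _ => LL_nonneg j x
      positivity
    rw [abs_le] at h2 ⊢
    constructor <;> linarith [h2.1, h2.2]
  have := hd.add (LL_lim K)
  simpa using this

lemma TT_le (k : ℕ) (x : ℝ) (hx : 0 ≤ x) : TT k x ≤ (SS k x).card * Real.log x := by
  rw [TT, ← nsmul_eq_mul]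
  refine Finset.sum_le_card_nsmul _ _ _ fun n hn => ?_
  simp only [SS, Finset.mem_filter, Finset.mem_Icc] at hn
  exact Real.log_le_log (by exact_mod_cast hn.1.1) ((Nat.le_floor_iff hx).mp hn.1.2)

lemma TT_ge (k : ℕ) (x y : ℝ) (hy : 1 ≤ y) :
    ((SS k x).card - y) * Real.log y ≤ TT k x := by
  have hly := Real.log_nonneg hy
  have h0 : ∀ n ∈ SS k x, Real.log y - (if n ∈ Finset.Icc 1 ⌊y⌋₊ then Real.log y else 0) ≤
      Real.log n := by
    intro n hn
    simp only [SS, Finset.mem_filter, Finset.mem_Icc] at hn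
    split_ifs with h
    · rw [sub_self]
      exact Real.log_natCast_nonneg n
    · rw [sub_zero]
      refine Real.log_le_log (by linarith) ?_
      by_contra h1
      exact h (Finset.mem_Icc.mpr ⟨hn.1.1, Nat.le_floor (not_le.mp h1).le⟩)
  refine le_trans ?_ (Finset.sum_le_sum h0)
  rw [Finset.sum_sub_distrib, Finset.sum_const, nsmul_eq_mul, ← Finset.sum_filter,
    Finset.sum_const, nsmul_eq_mul, ← sub_mul]
  refine mul_le_mul_of_nonneg_right ?_ hly
  have : ((SS k x).filter (fun n => n ∈ Finset.Icc 1 ⌊y⌋₊)).card ≤ ⌊y⌋₊ := by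
    refine (Finset.card_le_card (t := Finset.Icc 1 ⌊y⌋₊) fun n hn => ?_).trans (by simp)
    exact (Finset.mem_filter.mp hn).2
  have h2 : (((SS k x).filter (fun n => n ∈ Finset.Icc 1 ⌊y⌋₊)).card : ℝ) ≤ y :=
    (Nat.cast_le.mpr this).trans (Nat.floor_le (by linarith))
  linarith

lemma ll_div_log : Tendsto (fun x => ll x / Real.log x) atTop (𝓝 0) := by
  have := Real.isLittleO_log_id_atTop.tendsto_div_nhds_zero
  exact this.comp Real.tendsto_log_atTop

lemma NN_lim (K : ℕ) : Tendsto (fun x => (SS (K + 1) x).card * Real.log x / (x * ll x ^ K)) atTop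
    (𝓝 (1 / (Nat.factorial K : ℝ))) := by
  have hq : Tendsto (fun x => (1 - 2 * (ll x / Real.log x))⁻¹) atTop (𝓝 ((1 - 2 * 0)⁻¹)) :=
    (tendsto_const_nhds.sub (ll_div_log.const_mul 2)).inv₀ (by norm_num)
  have hz : Tendsto (fun x => (Real.log x)⁻¹) atTop (𝓝 0) :=
    Real.tendsto_log_atTop.inv_tendsto_atTop
  have hup := ((TT_lim K).mul hq).add hz
  rw [mul_zero, sub_zero, inv_one, mul_one, add_zero] at hup
  refine tendsto_of_tendsto_of_tendsto_of_le_of_le' (TT_lim K) hup ?_ ?_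
  · filter_upwards [eventually_gt_atTop 0, ll_lim.eventually_gt_atTop 0] with x hx hl
    exact div_le_div_of_nonneg_right (TT_le (K + 1) x hx.le) (by positivity)
  · have hy : ∀ᶠ x : ℝ in atTop, ll x / Real.log x < 1 / 2 :=
      ll_div_log.eventually_lt_const (by norm_num)
    filter_upwards [eventually_gt_atTop 1, ll_lim.eventually_ge_atTop 1, hy] with x hx hl hy
    have hL := Real.log_pos hx
    have hq0 : 0 < 1 - 2 * (ll x / Real.log x) := by linarith
    have hlogy : Real.log (x / Real.log x ^ 2) =
        Real.log x * (1 - 2 * (ll x / Real.log x)) := by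
      rw [Real.log_div (by linarith) (by positivity), Real.log_pow, ll]
      field_simp
      push_cast
      ring
    have hy1 : 1 ≤ x / Real.log x ^ 2 := by
      have h1 : 0 < Real.log (x / Real.log x ^ 2) := by rw [hlogy]; positivity
      exact ((Real.log_pos_iff (by positivity)).mp h1).le
    have h1 := TT_ge (K + 1) x _ hy1
    rw [hlogy] at h1
    have hpow : 1 ≤ ll x ^ K := one_le_pow₀ hl
    have h2 : ((SS (K + 1) x).card : ℝ) * Real.log x ≤
        TT (K + 1) x * (1 - 2 * (ll x / Real.log x))⁻¹ + x / Real.log x := by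
      have h3 : ((SS (K + 1) x).card - x / Real.log x ^ 2) * Real.log x ≤
          TT (K + 1) x * (1 - 2 * (ll x / Real.log x))⁻¹ := by
        rw [← div_eq_mul_inv, le_div_iff₀ hq0, mul_assoc]
        exact h1
      have h4 : x / Real.log x ^ 2 * Real.log x = x / Real.log x := by field_simp
      linarith [sub_mul ((SS (K + 1) x).card : ℝ) (x / Real.log x ^ 2) (Real.log x)]
    have hl0 : 0 < ll x := by linarith
    have hx0 : 0 < x := by linarith
    rw [div_le_iff₀ (by positivity), add_mul]
    refine h2.trans (add_le_add (le_of_eq ?_) ?_)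
    · field_simp
    · have : (Real.log x)⁻¹ * (x * ll x ^ K) = x / Real.log x * ll x ^ K := by ring
      rw [this]
      exact le_mul_of_one_le_right (by positivity) hpow

lemma SS_eq (k : ℕ) (hk : 1 ≤ k) (x : ℝ) : (Finset.Icc 2 ⌊x⌋₊).filter
    (fun n => ArithmeticFunction.cardFactors n = k) = SS k x := by
  ext n
  simp only [SS, Finset.mem_filter, Finset.mem_Icc]
  constructor
  · rintro ⟨⟨h1, h2⟩, h3⟩
    exact ⟨⟨by omega, h2⟩, h3⟩
  · rintro ⟨⟨h1, h2⟩, h3⟩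
    refine ⟨⟨?_, h2⟩, h3⟩
    by_contra h
    have : n = 1 := by omega
    subst this
    rw [ArithmeticFunction.cardFactors_one] at h3
    omega

end

theorem stmt10 (k : ℕ) (hk : 1 ≤ k) :
    Filter.Tendsto
      (fun X : ℝ =>
        (((Finset.Icc 2 ⌊X⌋₊).filter
            (fun n => ArithmeticFunction.cardFactors n = k)).card : ℝ) /
          ((1 / (Nat.factorial (k - 1) : ℝ)) * X *
            Real.log (Real.log X) ^ (k - 1) / Real.log X))
      Filter.atTop (nhds 1) := by
  obtain ⟨K, rfl⟩ : ∃ K, k = K + 1 := ⟨k - 1, by omega⟩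
  have hf : (0 : ℝ) < (Nat.factorial K : ℝ) := by exact_mod_cast Nat.factorial_pos K
  have h := (NN_lim K).const_mul (Nat.factorial K : ℝ)
  rw [mul_one_div_cancel hf.ne'] at h
  refine h.congr fun x => ?_
  rw [SS_eq _ hk, Nat.add_sub_cancel, ll]
  simp only [div_eq_mul_inv, mul_inv, inv_inv, one_mul]
  ring
end
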